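/- arXiv:1611.01593 — 5 statements merged into one kernel-verified Lean document; each statement's English description precedes it below -/
import Mathlib

section
/- There exists a numerical constant c > 0 with the following property. Let ω : ℝ → ℝ be a modulus of continuity: ω is continuous and nondecreasing on [0,∞), ω(0) = 0, ω(x) > 0 for x > 0, and ω(x + y) ≤ ω(x) + ω(y) for all x, y ≥ 0; assume moreover that t ↦ ω(t)/t² is integrable on (x, ∞) for every x > 0, and set ω_*(x) = x·∫_x^∞ ω(t)/t² dt. Let L ≥ 0 and let f : ℝ → ℝ satisfy |f(x) − f(y)| ≤ L·ω(|x − y|) for all x, y ∈ ℝ. Then for all bounded self-adjoint operators A and B on a complex Hilbert space with A ≠ B, ‖f(A) − f(B)‖ ≤ c·L·ω_*(‖A − B‖). -/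
open MeasureTheory

section OpPart

variable {H : Type} [NormedAddCommGroup H] [InnerProductSpace ℂ H] [CompleteSpace H]

lemma op_integral {A : H →L[ℂ] H} (hA : IsSelfAdjoint A) (a b : ℝ) (f : ℝ → ℝ → ℝ)
    (hf : ContinuousOn (Function.uncurry f) (Set.Icc a b ×ˢ Set.univ)) :
    IntegrableOn (fun x => cfc (f x) A) (Set.Icc a b) ∧
      cfc (fun t => ∫ x in Set.Icc a b, f x t) A = ∫ x in Set.Icc a b, cfc (f x) A := by
  have hf' : ContinuousOn (Function.uncurry f) (Set.Icc a b ×ˢ spectrum ℝ A) :=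
    hf.mono (Set.prod_mono le_rfl (Set.subset_univ _))
  have hK : IsCompact (Set.Icc a b ×ˢ spectrum ℝ A) :=
    isCompact_Icc.prod (ContinuousFunctionalCalculus.isCompact_spectrum (R := ℝ) A)
  obtain ⟨C, hC⟩ := hK.exists_bound_of_continuousOn hf'
  have hb : ∀ᵐ x ∂(volume.restrict (Set.Icc a b)), ∀ z ∈ spectrum ℝ A,
      ‖f x z‖ ≤ (fun _ : ℝ => C) x := by
    refine ae_restrict_of_forall_mem measurableSet_Icc fun x hx z hz => ?_
    exact hC (x, z) ⟨hx, hz⟩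
  have hi : HasFiniteIntegral (fun _ : ℝ => C) (volume.restrict (Set.Icc a b)) :=
    (integrable_const C).hasFiniteIntegral
  exact ⟨integrableOn_cfc measurableSet_Icc f _ A hf' hb hi hA,
    cfc_setIntegral measurableSet_Icc f _ A hf' hb hi hA⟩

/-- resolvent kernel -/
noncomputable def cker (x s t : ℝ) : ℝ := ((x - t) ^ 2 + s ^ 2)⁻¹

lemma cker_den_pos {s : ℝ} (hs : 0 < s) (x t : ℝ) : 0 < (x - t) ^ 2 + s ^ 2 := by positivity

lemma cker_cont {s : ℝ} (hs : 0 < s) (x : ℝ) : Continuous (fun t => cker x s t) := by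
  unfold cker
  exact Continuous.inv₀ (by fun_prop) (fun t => (cker_den_pos hs x t).ne')

lemma kerop_facts {A : H →L[ℂ] H} (hA : IsSelfAdjoint A) {s : ℝ} (hs : 0 < s) (x : ℝ) :
    let C := cfc (cker x s) A
    let X := algebraMap ℝ (H →L[ℂ] H) x - A
    C * (X * X + algebraMap ℝ (H →L[ℂ] H) (s ^ 2)) = 1 ∧
    (X * X + algebraMap ℝ (H →L[ℂ] H) (s ^ 2)) * C = 1 ∧ Commute X C ∧
    cfc (fun t => (x - t) * cker x s t) A = X * C ∧ IsSelfAdjoint C ∧ IsSelfAdjoint (X * C) := by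
  intro C X
  have hc : Continuous (cker x s) := cker_cont hs x
  have hX : cfc (fun t : ℝ => x - t) A = X := by
    rw [cfc_sub _ _ A (by fun_prop) (by fun_prop), cfc_const x A, cfc_id' ℝ A]
  have hcomm : Commute X C := by
    rw [← hX]; exact cfc_commute_cfc _ _ _
  have hS : cfc (fun t : ℝ => (x - t) * (x - t) + s ^ 2) A
      = X * X + algebraMap ℝ (H →L[ℂ] H) (s ^ 2) := by
    rw [cfc_add_const _ _ A (by fun_prop), cfc_mul _ _ A (by fun_prop) (by fun_prop), hX]
  have h1 : C * (X * X + algebraMap ℝ (H →L[ℂ] H) (s ^ 2)) = 1 := by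
    rw [← hS, ← cfc_mul _ _ A hc.continuousOn (by fun_prop)]
    have : (fun t => cker x s t * ((x - t) * (x - t) + s ^ 2)) = fun _ => (1:ℝ) := by
      ext t
      have := (cker_den_pos hs x t).ne'
      unfold cker
      rw [← sq, inv_mul_cancel₀ this]
    rw [this, cfc_const_one ℝ A]
  have h2 : (X * X + algebraMap ℝ (H →L[ℂ] H) (s ^ 2)) * C = 1 := by
    rw [← h1, ← hS]; exact (cfc_commute_cfc _ _ _)
  have h3 : cfc (fun t => (x - t) * cker x s t) A = X * C := by
    rw [cfc_mul _ _ A (by fun_prop) hc.continuousOn, hX]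
  exact ⟨h1, h2, hcomm, h3, cfc_predicate _ _, h3 ▸ cfc_predicate _ _⟩

lemma inner_le_aux {Q K P : H →L[ℂ] H} (hQ : IsSelfAdjoint Q) (v w : H) :
    |RCLike.re (inner ℂ ((Q * K * P) v) w)| ≤ ‖K‖ * (‖P v‖ * ‖Q w‖) := by
  have : inner ℂ ((Q * K * P) v) w = inner ℂ (K (P v)) (Q w) := by
    rw [← ContinuousLinearMap.adjoint_inner_left]
    have : ContinuousLinearMap.adjoint Q = Q := hQ
    rw [this]; rfl
  rw [this]
  calc _ ≤ ‖inner ℂ (K (P v)) (Q w)‖ := RCLike.abs_re_le_norm _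
    _ ≤ ‖K (P v)‖ * ‖Q w‖ := norm_inner_le_norm _ _
    _ ≤ (‖K‖ * ‖P v‖) * ‖Q w‖ := by gcongr; exact K.le_opNorm _
    _ = _ := by ring

lemma sq_norm_aux {Q : H →L[ℂ] H} (hQ : IsSelfAdjoint Q) (w : H) :
    ‖Q w‖ ^ 2 = RCLike.re (inner ℂ ((Q * Q) w) w) := by
  have : inner ℂ ((Q * Q) w) w = inner ℂ (Q w) (Q w) := by
    rw [← ContinuousLinearMap.adjoint_inner_left]
    have : ContinuousLinearMap.adjoint Q = Q := hQ
    rw [this]; rfl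
  rw [this, inner_self_eq_norm_sq]

lemma kerop_sq {A : H →L[ℂ] H} (hA : IsSelfAdjoint A) {s : ℝ} (hs : 0 < s) (x : ℝ) (w : H) :
    ‖((algebraMap ℝ (H →L[ℂ] H) x - A) * cfc (cker x s) A) w‖ ^ 2 +
      ‖(s • cfc (cker x s) A) w‖ ^ 2 = RCLike.re (inner ℂ (cfc (cker x s) A w) w) := by
  obtain ⟨h1, h2, hc, h3, hsC, hsQ⟩ := kerop_facts hA hs x
  set C := cfc (cker x s) A
  set X := algebraMap ℝ (H →L[ℂ] H) x - A
  have hsP : IsSelfAdjoint (s • C) := by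
    have := IsSelfAdjoint.smul (R := ℝ) (r := s) (x := C) (IsSelfAdjoint.all s) hsC
    exact this
  rw [sq_norm_aux hsQ, sq_norm_aux hsP, ← map_add, ← inner_add_left, ← _root_.add_apply]
  have : X * C * (X * C) + s • C * s • C = C := by
    have h : X * C * (X * C) + s • C * s • C = C * ((X * X + algebraMap ℝ (H →L[ℂ] H) (s ^ 2)) * C) := by
      rw [Algebra.algebraMap_eq_smul_one, hc.eq]
      simp only [add_mul, mul_add, smul_mul_assoc, mul_smul_comm, smul_smul, one_mul, sq, mul_assoc]
      rw [← hc.eq]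
    rw [h, h2, mul_one]
  rw [this]

lemma kerop_diff {A B : H →L[ℂ] H} (hA : IsSelfAdjoint A) (hB : IsSelfAdjoint B) {s : ℝ}
    (hs : 0 < s) (x al be M : ℝ) (hal : |al| ≤ M) (hbe : |be| ≤ M) (v w : H) :
    |RCLike.re (inner ℂ ((cfc (fun t => (al * s + be * (x - t)) * cker x s t) A -
      cfc (fun t => (al * s + be * (x - t)) * cker x s t) B) v) w)| ≤
      M * ‖A - B‖ * (RCLike.re (inner ℂ (cfc (cker x s) A w) w) +
        RCLike.re (inner ℂ (cfc (cker x s) B v) v)) := by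
  have expand : ∀ {A : H →L[ℂ] H}, IsSelfAdjoint A →
      cfc (fun t => (al * s + be * (x - t)) * cker x s t) A =
        al • (s • cfc (cker x s) A) +
        be • ((algebraMap ℝ (H →L[ℂ] H) x - A) * cfc (cker x s) A) := by
    intro A hA
    obtain ⟨h1, h2, hc, h3, hsC, hsQ⟩ := kerop_facts hA hs x
    have hcc : Continuous (cker x s) := cker_cont hs x
    have hcc' : ContinuousOn (cker x s) (spectrum ℝ A) := hcc.continuousOn
    rw [← h3, ← cfc_smul s _ A hcc', ← cfc_smul al _ A (by fun_prop), ← cfc_smul be _ A (by fun_prop),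
      ← cfc_add A _ _ (by fun_prop) (by fun_prop)]
    congr 1
    ext t
    simp only [smul_eq_mul]
    ring
  rw [expand hA, expand hB, ← kerop_sq hA hs, ← kerop_sq hB hs]
  obtain ⟨a1, a2, ac, -, asC, asQ⟩ := kerop_facts hA hs x
  obtain ⟨b1, b2, bc, -, bsC, bsQ⟩ := kerop_facts hB hs x
  have hK : A - B = (algebraMap ℝ (H →L[ℂ] H) x - B) - (algebraMap ℝ (H →L[ℂ] H) x - A) := by abel
  set CA := cfc (cker x s) A
  set XA := algebraMap ℝ (H →L[ℂ] H) x - A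
  set CB := cfc (cker x s) B
  set XB := algebraMap ℝ (H →L[ℂ] H) x - B
  set K := A - B
  set z := algebraMap ℝ (H →L[ℂ] H) (s ^ 2) with hz
  have hzc : ∀ T, z * T = T * z := fun T => Algebra.commutes _ _
  have asP : IsSelfAdjoint (s • CA) := 
    IsSelfAdjoint.smul (R := ℝ) (r := s) (x := CA) (IsSelfAdjoint.all s) asC
  have e1 : s • CA - s • CB = (XA * CA) * K * (s • CB) + (s • CA) * K * (XB * CB) := by
    have : CA - CB = (XA * CA) * K * CB + CA * K * (XB * CB) := by
      calc CA - CB = CA * ((XB * XB + z) * CB) - (CA * (XA * XA + z)) * CB := by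
            rw [a1, b2]; simp
        _ = (CA * XA) * K * CB + CA * K * (XB * CB) := by rw [hK]; noncomm_ring
        _ = _ := by rw [ac.eq]
    rw [← smul_sub, this]
    simp only [smul_add, mul_smul_comm, smul_mul_assoc]
  have e2 : XA * CA - XB * CB = (XA * CA) * K * (XB * CB) - (s • CA) * K * (s • CB) := by
    have h : (s • CA) * K * (s • CB) = CA * z * K * CB := by
      rw [hz, Algebra.algebraMap_eq_smul_one]
      simp only [mul_smul_comm, smul_mul_assoc, smul_smul, mul_one, sq]
    rw [h]
    calc XA * CA - XB * CB = CA * XA * ((XB * XB + z) * CB) - (CA * (XA * XA + z)) * (XB * CB) := by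
            rw [a1, b2, ac.eq]; simp
        _ = (CA * XA) * K * (XB * CB) - CA * z * K * CB 
            + CA * (XA * z - z * XA) * CB := by rw [hK]; noncomm_ring
        _ = _ := by rw [ac.eq, hzc XA]; simp
  have e3 : al • s • CA + be • (XA * CA) - (al • s • CB + be • (XB * CB)) =
      al • (s • CA - s • CB) + be • (XA * CA - XB * CB) := by
    simp only [smul_sub]; abel
  have real_smul : ∀ (r : ℝ) (T : H →L[ℂ] H) (v w : H),
      RCLike.re (inner ℂ ((r • T) v) w) = r * RCLike.re (inner ℂ (T v) w) := by
    intro r T v w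
    rw [_root_.smul_apply, RCLike.real_smul_eq_coe_smul (K := ℂ), inner_smul_left]
    simp
  have hA1 := inner_le_aux (K := K) (P := s • CB) asQ v w
  have hA2 := inner_le_aux (K := K) (P := XB * CB) asP v w
  have hA3 := inner_le_aux (K := K) (P := XB * CB) asQ v w
  have hA4 := inner_le_aux (K := K) (P := s • CB) asP v w
  rw [e3, e1, e2, _root_.add_apply, inner_add_left, map_add, real_smul, real_smul,
    _root_.add_apply, inner_add_left, map_add, _root_.sub_apply, inner_sub_left, map_sub]
  set r1 := RCLike.re (inner ℂ ((XA * CA * K * s • CB) v) w)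
  set r2 := RCLike.re (inner ℂ ((s • CA * K * (XB * CB)) v) w)
  set r3 := RCLike.re (inner ℂ ((XA * CA * K * (XB * CB)) v) w)
  set r4 := RCLike.re (inner ℂ ((s • CA * K * s • CB) v) w)
  set p1 := ‖(XA * CA) w‖
  set p2 := ‖(s • CA) w‖
  set q1 := ‖(XB * CB) v‖
  set q2 := ‖(s • CB) v‖
  have hM : 0 ≤ M := (abs_nonneg _).trans hal
  have hKn : 0 ≤ ‖K‖ := norm_nonneg _
  have t1 : |al * (r1 + r2)| ≤ M * (‖K‖ * (q2 * p1) + ‖K‖ * (q1 * p2)) := by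
    rw [abs_mul]
    exact mul_le_mul hal ((abs_add_le _ _).trans (add_le_add hA1 hA2)) (abs_nonneg _) hM
  have t2 : |be * (r3 - r4)| ≤ M * (‖K‖ * (q1 * p1) + ‖K‖ * (q2 * p2)) := by
    rw [abs_mul]
    exact mul_le_mul hbe ((abs_sub _ _).trans (add_le_add hA3 hA4)) (abs_nonneg _) hM
  have t3 : (q2 * p1 + q1 * p2) + (q1 * p1 + q2 * p2) ≤ p1 ^ 2 + p2 ^ 2 + (q1 ^ 2 + q2 ^ 2) := by
    nlinarith [sq_nonneg (q2 - p1), sq_nonneg (q1 - p2), sq_nonneg (q1 - p1), sq_nonneg (q2 - p2)]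
  have t4 := mul_le_mul_of_nonneg_left t3 (mul_nonneg hM hKn)
  have t5 := abs_add_le (al * (r1 + r2)) (be * (r3 - r4))
  linarith

lemma cker_int {s : ℝ} (hs : 0 < s) (t : ℝ) :
    Integrable (fun x => cker x s t) ∧ ∫ x, cker x s t = Real.pi / s := by
  have e : (fun x => cker x s t) = fun x => (s ^ 2)⁻¹ * (1 + ((x - t) / s) ^ 2)⁻¹ := by
    ext x
    unfold cker
    rw [← mul_inv]
    congr 1
    field_simp
    ring
  have h1 : Integrable (fun x : ℝ => (1 + (x / s) ^ 2)⁻¹) :=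
    integrable_inv_one_add_sq.comp_div hs.ne'
  have h2 := h1.comp_sub_right t
  constructor
  · rw [e]; exact h2.const_mul _
  · rw [e, integral_const_mul, integral_sub_right_eq_self (fun x : ℝ => (1 + (x / s) ^ 2)⁻¹) t,
      Measure.integral_comp_div (fun x : ℝ => (1 + x ^ 2)⁻¹) s, integral_univ_inv_one_add_sq,
      abs_of_pos hs, smul_eq_mul]
    field_simp

lemma cker_nonneg {s : ℝ} (x t : ℝ) : 0 ≤ cker x s t := by unfold cker; positivity

lemma cker_cont2 {s : ℝ} (hs : 0 < s) :
    Continuous (Function.uncurry fun x t => cker x s t) := by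
  unfold cker Function.uncurry
  exact Continuous.inv₀ (by fun_prop) (fun p => (cker_den_pos hs _ _).ne')

noncomputable def ell (v w : H) : (H →L[ℂ] H) →L[ℝ] ℝ :=
  (RCLike.reCLM (K := ℂ)).comp
    (((innerSL ℂ w).comp (ContinuousLinearMap.apply ℂ H v)).restrictScalars ℝ)

set_option linter.unusedSectionVars false in
lemma ell_apply (v w : H) (T : H →L[ℂ] H) : ell v w T = RCLike.re (inner ℂ (T v) w) := by
  rw [inner_re_symm]; rfl

lemma cker_op_int {A : H →L[ℂ] H} (hA : IsSelfAdjoint A) {s : ℝ} (hs : 0 < s) (a b : ℝ) (w : H)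
    (hw : ‖w‖ = 1) :
    ∫ x in Set.Icc a b, RCLike.re (inner ℂ (cfc (cker x s) A w) w) ≤ Real.pi / s := by
  obtain ⟨hi, he⟩ := op_integral hA a b (fun x t => cker x s t) (cker_cont2 hs).continuousOn
  have h1 := (ell w w).integral_comp_comm hi
  simp only [ell_apply] at h1
  rw [h1, ← he]
  have hn : ‖cfc (fun t => ∫ x in Set.Icc a b, cker x s t) A‖ ≤ Real.pi / s := by
    refine norm_cfc_le (by positivity) fun t _ => ?_
    rw [Real.norm_of_nonneg (integral_nonneg fun x => cker_nonneg _ _), ← (cker_int hs t).2]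
    exact setIntegral_le_integral (cker_int hs t).1 (ae_of_all _ fun x => cker_nonneg _ _)
  calc _ ≤ ‖inner ℂ ((cfc (fun t => ∫ x in Set.Icc a b, cker x s t) A) w) w‖ := RCLike.re_le_norm _
    _ ≤ ‖(cfc (fun t => ∫ x in Set.Icc a b, cker x s t) A) w‖ * ‖w‖ := norm_inner_le_norm _ _
    _ ≤ ‖(cfc (fun t => ∫ x in Set.Icc a b, cker x s t) A)‖ * ‖w‖ * ‖w‖ := by
        gcongr; exact ContinuousLinearMap.le_opNorm _ _
    _ ≤ _ := by rw [hw]; simpa using hn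

lemma G_bound {A B : H →L[ℂ] H} (hA : IsSelfAdjoint A) (hB : IsSelfAdjoint B) {s : ℝ}
    (hs : 0 < s) (a b : ℝ) (al be : ℝ → ℝ) (M : ℝ) (hM : 0 ≤ M)
    (hal : ∀ x, |al x| ≤ M) (hbe : ∀ x, |be x| ≤ M)
    (cal : Continuous al) (cbe : Continuous be) :
    ‖cfc (fun t => ∫ x in Set.Icc a b, (al x * s + be x * (x - t)) * cker x s t) A -
      cfc (fun t => ∫ x in Set.Icc a b, (al x * s + be x * (x - t)) * cker x s t) B‖ ≤
      2 * Real.pi * M * ‖A - B‖ / s := by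
  have hcont : ContinuousOn (Function.uncurry fun x t => (al x * s + be x * (x - t)) * cker x s t)
      (Set.Icc a b ×ˢ Set.univ) := by
    have := cker_cont2 hs
    unfold Function.uncurry at this ⊢
    exact Continuous.continuousOn (by fun_prop)
  obtain ⟨iA, eA⟩ := op_integral hA a b _ hcont
  obtain ⟨iB, eB⟩ := op_integral hB a b _ hcont
  rw [eA, eB, ← integral_sub iA iB]
  refine ContinuousLinearMap.opNorm_le_of_re_inner_le (𝕜 := ℂ) (by positivity) fun v w hv hw => ?_
  rw [← ell_apply]
  refine le_trans (le_of_eq ((ell v w).integral_comp_comm (iA.sub iB)).symm) ?_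
  obtain ⟨jA, -⟩ := op_integral hA a b (fun x t => cker x s t) (cker_cont2 hs).continuousOn
  obtain ⟨jB, -⟩ := op_integral hB a b (fun x t => cker x s t) (cker_cont2 hs).continuousOn
  have kA := (ell w w).integrable_comp jA
  have kB := (ell v v).integrable_comp jB
  simp only [ell_apply] at kA kB
  have hb : ∫ x in Set.Icc a b, ell v w
      (cfc (fun t => (al x * s + be x * (x - t)) * cker x s t) A -
        cfc (fun t => (al x * s + be x * (x - t)) * cker x s t) B) ≤
      ∫ x in Set.Icc a b, M * ‖A - B‖ * (RCLike.re (inner ℂ (cfc (cker x s) A w) w) +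
        RCLike.re (inner ℂ (cfc (cker x s) B v) v)) := by
    refine integral_mono ((ell v w).integrable_comp (iA.sub iB)) ((kA.add kB).const_mul _)
      fun x => ?_
    simp only [ell_apply]
    exact (le_abs_self _).trans (kerop_diff hA hB hs x _ _ M (hal x) (hbe x) v w)
  refine hb.trans ?_
  rw [integral_const_mul, integral_add kA kB]
  have l1 := cker_op_int hA hs a b w hw
  have l2 := cker_op_int hB hs a b v hv
  calc _ ≤ M * ‖A - B‖ * (Real.pi / s + Real.pi / s) := by gcongr
    _ = _ := by ring

end OpPart

section ScalarPart

noncomputable def Fp (f : ℝ → ℝ) (x : ℝ) : ℝ := ∫ r in (0:ℝ)..x, f r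

noncomputable def Uav (f : ℝ → ℝ) (x s : ℝ) : ℝ := (Fp f (x + s) - Fp f x) / s

lemma Fp_deriv {f : ℝ → ℝ} (hf : Continuous f) (x : ℝ) : HasDerivAt (Fp f) (f x) x :=
  intervalIntegral.integral_hasDerivAt_right (hf.intervalIntegrable _ _)
    (hf.stronglyMeasurableAtFilter _ _) hf.continuousAt

lemma Fp_cont {f : ℝ → ℝ} (hf : Continuous f) : Continuous (Fp f) :=
  continuous_iff_continuousAt.2 fun x => (Fp_deriv hf x).continuousAt

lemma Fp_sub {f : ℝ → ℝ} (hf : Continuous f) (x y : ℝ) : Fp f y - Fp f x = ∫ r in x..y, f r :=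
  intervalIntegral.integral_interval_sub_left (hf.intervalIntegrable _ _)
    (hf.intervalIntegrable _ _)

lemma Uav_sub {f : ℝ → ℝ} (hf : Continuous f) {x s c M : ℝ} (hs : 0 < s)
    (h : ∀ r, x ≤ r → r ≤ x + s → |f r - c| ≤ M) : |Uav f x s - c| ≤ M := by
  have h1 : Uav f x s - c = (∫ r in x..(x + s), (f r - c)) / s := by
    rw [intervalIntegral.integral_sub (hf.intervalIntegrable _ _)
      (continuous_const.intervalIntegrable _ _), ← Fp_sub hf]
    unfold Uav
    simp
    field_simp
  rw [h1, abs_div, abs_of_pos hs, div_le_iff₀ hs]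
  have := intervalIntegral.norm_integral_le_of_norm_le_const (a := x) (b := x + s)
    (f := fun r => f r - c) (C := M) (fun r hr => by
      rw [Set.uIoc_of_le (by linarith)] at hr
      exact h r hr.1.le hr.2)
  simpa [abs_of_pos hs] using this

lemma Uav_deriv_s {f : ℝ → ℝ} (hf : Continuous f) (x : ℝ) {s : ℝ} (hs : 0 < s) :
    HasDerivAt (fun s => Uav f x s) ((f (x + s) - Uav f x s) / s) s := by
  have h1 : HasDerivAt (fun s => Fp f (x + s) - Fp f x) (f (x + s)) s := by
    have := (Fp_deriv hf (x + s)).comp_const_add x s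
    exact this.sub_const _
  have h2 := h1.div (hasDerivAt_id s) hs.ne'
  unfold Uav
  refine h2.congr_deriv ?_
  simp
  field_simp

lemma Uav_deriv_x {f : ℝ → ℝ} (hf : Continuous f) (x s : ℝ) :
    HasDerivAt (fun x => Uav f x s) ((f (x + s) - f x) / s) x := by
  have h1 : HasDerivAt (fun x => Fp f (x + s)) (f (x + s)) x :=
    (Fp_deriv hf (x + s)).comp_add_const x s
  exact (h1.sub (Fp_deriv hf x)).div_const s

lemma Uav_zero {f : ℝ → ℝ} (hf : Continuous f) {a : ℝ} (ha : ∀ x, a < |x| → f x = 0)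
    {x s X : ℝ} (hs : 0 < s) (hX : a + s < X) (hx : X ≤ |x|) : Uav f x s = 0 := by
  have := Uav_sub hf (x := x) (s := s) (c := 0) (M := 0) hs (fun r h1 h2 => by
    rw [ha r]
    · simp
    · rcases le_abs'.1 hx with h | h
      · exact lt_abs.2 (Or.inr (by linarith))
      · exact lt_abs.2 (Or.inl (by linarith)))
  simpa using this

lemma cker_deriv_s (x t : ℝ) {s : ℝ} (hs : 0 < s) :
    HasDerivAt (fun s => s * cker x s t) (((x - t) ^ 2 - s ^ 2) * cker x s t ^ 2) s := by
  have h0 := (cker_den_pos hs x t).ne'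
  have h1 : HasDerivAt (fun s : ℝ => (x - t) ^ 2 + s ^ 2) (2 * s) s := by
    simpa using (hasDerivAt_pow 2 s).const_add ((x - t) ^ 2)
  have h2 := (hasDerivAt_id s).mul (h1.inv h0)
  unfold cker
  refine h2.congr_deriv ?_
  simp
  field_simp
  ring

lemma cker_deriv_x (x t : ℝ) {s : ℝ} (hs : 0 < s) :
    HasDerivAt (fun x => (x - t) * cker x s t) (-(((x - t) ^ 2 - s ^ 2) * cker x s t ^ 2)) x := by
  have h0 := (cker_den_pos hs x t).ne'
  have h3 : HasDerivAt (fun x : ℝ => x - t) 1 x := (hasDerivAt_id x).sub_const t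
  have h1 : HasDerivAt (fun x : ℝ => (x - t) ^ 2 + s ^ 2) (2 * (x - t)) x := by
    simpa using (h3.pow 2).add_const (s ^ 2)
  have h2 := h3.mul (h1.inv h0)
  unfold cker
  refine h2.congr_deriv ?_
  simp
  field_simp
  ring

lemma cker_contOn (S : Set (ℝ × ℝ × ℝ)) (hS : ∀ p ∈ S, 0 < p.2.1) :
    ContinuousOn (fun p : ℝ × ℝ × ℝ => cker p.1 p.2.1 p.2.2) S := by
  unfold cker
  exact ContinuousOn.inv₀ (by fun_prop) (fun p hp => (cker_den_pos (hS p hp) _ _).ne')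

lemma Uav_contOn {f : ℝ → ℝ} (hf : Continuous f) (S : Set (ℝ × ℝ)) (hS : ∀ p ∈ S, 0 < p.2) :
    ContinuousOn (fun p : ℝ × ℝ => Uav f p.1 p.2) S := by
  have := Fp_cont hf
  unfold Uav
  exact ContinuousOn.div (by fun_prop) (by fun_prop) (fun p hp => (hS p hp).ne')

/-- the inner x-integral -/
lemma scalar_ibp {f : ℝ → ℝ} (hf : Continuous f) {a : ℝ} (ha : ∀ x, a < |x| → f x = 0)
    {s X : ℝ} (hs : 0 < s) (hX0 : 0 ≤ X) (hX : a + s < X) (t : ℝ) :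
    ∫ x in (-X)..X, Uav f x s * (((x - t) ^ 2 - s ^ 2) * cker x s t ^ 2) =
      ∫ x in (-X)..X, (f (x + s) - f x) / s * ((x - t) * cker x s t) := by
  have hc : Continuous (fun x => cker x s t) := (cker_cont2 hs).comp (by fun_prop : Continuous fun x : ℝ => (x, t))
  have h := intervalIntegral.integral_mul_deriv_eq_deriv_mul (a := -X) (b := X)
    (u := fun x => Uav f x s) (v := fun x => (x - t) * cker x s t)
    (fun x _ => Uav_deriv_x hf x s) (fun x _ => cker_deriv_x x t hs)
    (Continuous.intervalIntegrable (by fun_prop) _ _)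
    (Continuous.intervalIntegrable (by fun_prop) _ _)
  rw [Uav_zero hf ha hs hX (by rw [abs_of_nonneg hX0]),
    Uav_zero hf ha hs hX (by rw [abs_neg, abs_of_nonneg hX0])] at h
  simp only [mul_neg, intervalIntegral.integral_neg] at h
  linarith

lemma scalar_identity {f : ℝ → ℝ} (hf : Continuous f) {a : ℝ} (ha : ∀ x, a < |x| → f x = 0)
    {δ N X : ℝ} (hδ : 0 < δ) (hN : δ ≤ N) (hX0 : 0 ≤ X) (hX : a + N < X) (t : ℝ) :
    (∫ x in Set.Icc (-X) X, Uav f x N * (N * cker x N t)) -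
      (∫ x in Set.Icc (-X) X, Uav f x δ * (δ * cker x δ t)) =
    ∫ s in Set.Icc δ N, s⁻¹ * ∫ x in Set.Icc (-X) X,
      ((f (x + s) - Uav f x s) * s + (f (x + s) - f x) * (x - t)) * cker x s t := by
  have hX' : -X ≤ X := by linarith
  set h : ℝ → ℝ → ℝ := fun x s => (f (x + s) - Uav f x s) / s * (s * cker x s t) +
    Uav f x s * (((x - t) ^ 2 - s ^ 2) * cker x s t ^ 2) with hh
  have hcont : ContinuousOn (Function.uncurry h) (Set.Icc (-X) X ×ˢ Set.Icc δ N) := by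
    have hp : ∀ p ∈ Set.Icc (-X) X ×ˢ Set.Icc δ N, 0 < p.2 := fun p hp => hδ.trans_le hp.2.1
    have h1 := Uav_contOn hf _ hp
    have h2 : ContinuousOn (fun p : ℝ × ℝ => cker p.1 p.2 t) (Set.Icc (-X) X ×ˢ Set.Icc δ N) := by
      unfold cker
      exact ContinuousOn.inv₀ (by fun_prop) (fun p hp' => (cker_den_pos (hp p hp') _ _).ne')
    have h3 : ContinuousOn (fun p : ℝ × ℝ => (f (p.1 + p.2) - Uav f p.1 p.2) / p.2)
      (Set.Icc (-X) X ×ˢ Set.Icc δ N) :=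
      ContinuousOn.div (by fun_prop) (by fun_prop) (fun p hp' => (hp p hp').ne')
    unfold Function.uncurry
    simp only [hh]
    fun_prop
  have hint : Integrable (Function.uncurry h)
      ((volume.restrict (Set.Icc (-X) X)).prod (volume.restrict (Set.Icc δ N))) := by
    rw [Measure.prod_restrict]
    exact hcont.integrableOn_compact (isCompact_Icc.prod isCompact_Icc)
  have hftc : ∀ x ∈ Set.Icc (-X) X, ∫ s in Set.Icc δ N, h x s =
      Uav f x N * (N * cker x N t) - Uav f x δ * (δ * cker x δ t) := by
    intro x hx
    rw [integral_Icc_eq_integral_Ioc, ← intervalIntegral.integral_of_le hN]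
    refine intervalIntegral.integral_eq_sub_of_hasDerivAt
      (f := fun s => Uav f x s * (s * cker x s t)) ?_ ?_
    · intro s hs
      rw [Set.uIcc_of_le hN] at hs
      have hs0 : 0 < s := hδ.trans_le hs.1
      exact (Uav_deriv_s hf x hs0).mul (cker_deriv_s x t hs0)
    · refine ContinuousOn.intervalIntegrable ?_
      rw [Set.uIcc_of_le hN]
      exact hcont.comp (f := fun s => (x, s)) (by fun_prop) (fun s hs => ⟨hx, hs⟩)
  have hUc : ∀ s, 0 < s → Continuous (fun x => Uav f x s) := fun s _ =>
    continuous_iff_continuousAt.2 fun x => (Uav_deriv_x hf x s).continuousAt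
  have hcc : ∀ s, 0 < s → Continuous (fun x => cker x s t) := fun s hs =>
    (cker_cont2 hs).comp (by fun_prop : Continuous fun x : ℝ => (x, t))
  have hi : ∀ s, 0 < s → IntegrableOn (fun x => Uav f x s * (s * cker x s t)) (Set.Icc (-X) X) := by
    intro s hs
    have h1 := hUc s hs
    have h2 := hcc s hs
    exact Continuous.integrableOn_Icc (by fun_prop)
  rw [← integral_sub (hi N (hδ.trans_le hN)) (hi δ hδ),
    ← setIntegral_congr_fun measurableSet_Icc hftc, integral_integral_swap hint]
  refine setIntegral_congr_fun measurableSet_Icc fun s hs => ?_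
  have hs0 : 0 < s := hδ.trans_le hs.1
  have h1 := hUc s hs0
  have h2 := hcc s hs0
  simp only [hh]
  simp only [integral_Icc_eq_integral_Ioc, ← intervalIntegral.integral_of_le hX']
  rw [intervalIntegral.integral_add (Continuous.intervalIntegrable (by fun_prop) _ _)
    (Continuous.intervalIntegrable (by fun_prop) _ _),
    scalar_ibp hf ha hs0 hX0 (by linarith [hs.2]) t,
    ← intervalIntegral.integral_add (Continuous.intervalIntegrable (by fun_prop) _ _)
    (Continuous.intervalIntegrable (by fun_prop) _ _), ← intervalIntegral.integral_const_mul]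
  refine intervalIntegral.integral_congr fun x _ => ?_
  field_simp

end ScalarPart

section FinalPart

lemma omega_le {ω : ℝ → ℝ} (mono : MonotoneOn ω (Set.Ici 0)) {δ : ℝ} (hδ : 0 < δ)
    (hint : IntegrableOn (fun t : ℝ => ω t / t ^ 2) (Set.Ioi δ)) :
    ω δ ≤ δ * ∫ t in Set.Ioi δ, ω t / t ^ 2 := by
  have e : ∀ t ∈ Set.Ioi δ, t ^ (-2 : ℝ) = 1 / t ^ 2 := by
    intro t ht
    have : 0 < t := hδ.trans ht
    rw [Real.rpow_neg this.le]
    norm_num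
  have h1 := integral_Ioi_rpow_of_lt (a := -2) (by norm_num) hδ
  have h2 := integrableOn_Ioi_rpow_of_lt (a := -2) (by norm_num) hδ
  rw [setIntegral_congr_fun measurableSet_Ioi e] at h1
  rw [integrableOn_congr_fun e measurableSet_Ioi] at h2
  have h3 : ∫ t in Set.Ioi δ, ω δ * (1 / t ^ 2) ≤ ∫ t in Set.Ioi δ, ω t / t ^ 2 := by
    refine setIntegral_mono_on (h2.const_mul _) hint measurableSet_Ioi fun t ht => ?_
    have ht' : δ < t := ht
    rw [mul_one_div]
    gcongr
    exact mono hδ.le (hδ.trans ht').le ht'.le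
  rw [integral_const_mul, h1] at h3
  have h4 : -δ ^ ((-2:ℝ) + 1) / ((-2:ℝ) + 1) = δ⁻¹ := by
    rw [show (-2:ℝ) + 1 = -1 by norm_num, Real.rpow_neg_one]; ring
  rw [h4] at h3
  calc ω δ = δ * (ω δ * δ⁻¹) := by field_simp
    _ ≤ _ := by gcongr

lemma cker_le (x t : ℝ) {s : ℝ} (h : x - t ≠ 0) : cker x s t ≤ 1 / (x - t) ^ 2 := by
  unfold cker
  rw [← one_div]
  have : 0 < (x - t) ^ 2 := by positivity
  gcongr
  nlinarith [sq_nonneg s]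

lemma approx_bound {ω : ℝ → ℝ} (mono : MonotoneOn ω (Set.Ici 0)) (h0 : ω 0 = 0)
    (sub : ∀ x y : ℝ, 0 ≤ x → 0 ≤ y → ω (x + y) ≤ ω x + ω y) {δ : ℝ} (hδ : 0 < δ)
    (hint : IntegrableOn (fun t : ℝ => ω t / t ^ 2) (Set.Ioi δ)) {L : ℝ} (hL : 0 ≤ L)
    {f : ℝ → ℝ} (hf : Continuous f) (hmod : ∀ x y : ℝ, |f x - f y| ≤ L * ω |x - y|)
    {a : ℝ} (ha : ∀ x, a < |x| → f x = 0) {X : ℝ} (hX : a + δ < X) (t : ℝ) :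
    |f t - Real.pi⁻¹ * ∫ x in Set.Icc (-X) X, Uav f x δ * (δ * cker x δ t)| ≤
      3 * L * (δ * ∫ t in Set.Ioi δ, ω t / t ^ 2) := by
  have nn : ∀ x, 0 ≤ x → 0 ≤ ω x := fun x hx => by
    rw [← h0]; exact mono (Set.mem_Ici.2 le_rfl) (Set.mem_Ici.2 hx) hx
  have hset : ∫ x in Set.Icc (-X) X, Uav f x δ * (δ * cker x δ t) =
      ∫ x, Uav f x δ * (δ * cker x δ t) := by
    refine setIntegral_eq_integral_of_forall_compl_eq_zero fun x hx => ?_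
    rw [Uav_zero hf ha hδ hX, zero_mul]
    by_contra hlt
    push Not at hlt
    exact hx ⟨(abs_lt.1 hlt).1.le, (abs_lt.1 hlt).2.le⟩
  obtain ⟨ci, ce⟩ := cker_int hδ t
  set I := ∫ t in Set.Ioi δ, ω t / t ^ 2 with hI
  set φ : ℝ → ℝ := Set.indicator (Set.Ioi δ) (fun y => ω y / y ^ 2) with hφ
  have φi : Integrable φ := hint.integrable_indicator measurableSet_Ioi
  have φe : ∫ y, φ y = I := integral_indicator measurableSet_Ioi
  have φn : ∀ y, 0 ≤ φ y := fun y => by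
    refine Set.indicator_nonneg (fun y hy => ?_) y
    have := nn y (hδ.trans hy).le
    positivity
  have φ1i : Integrable (fun x => φ (x - t)) := φi.comp_sub_right t
  have φ1e : ∫ x, φ (x - t) = I := by rw [integral_sub_right_eq_self φ t, φe]
  have φ2i : Integrable (fun x => φ (t - x)) := φi.comp_sub_left t
  have φ2e : ∫ x, φ (t - x) = I := by rw [integral_sub_left_eq_self φ volume t, φe]
  have φ3i : Integrable (fun x => φ (x - t) + φ (t - x)) := φ1i.add φ2i
  have hU : ∀ x, |Uav f x δ - f t| ≤ L * (ω δ + ω |x - t|) := by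
    intro x
    refine Uav_sub hf hδ fun r h1 h2 => (hmod r t).trans ?_
    refine mul_le_mul_of_nonneg_left ?_ hL
    refine le_trans ?_ (sub δ |x - t| hδ.le (abs_nonneg _))
    refine mono (Set.mem_Ici.2 (abs_nonneg _)) (Set.mem_Ici.2 (by positivity)) ?_
    calc |r - t| = |(r - x) + (x - t)| := by ring_nf
      _ ≤ |r - x| + |x - t| := abs_add_le _ _
      _ ≤ _ := by gcongr; rw [abs_of_nonneg (by linarith)]; linarith
  have hpt : ∀ x, ω |x - t| * cker x δ t ≤ ω δ * cker x δ t + (φ (x - t) + φ (t - x)) := by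
    intro x
    have hc := cker_nonneg (s := δ) x t
    rcases le_or_gt |x - t| δ with h | h
    · have : ω |x - t| ≤ ω δ := mono (Set.mem_Ici.2 (abs_nonneg _)) (Set.mem_Ici.2 hδ.le) h
      nlinarith [φn (x - t), φn (t - x)]
    · have hne : x - t ≠ 0 := by intro h'; rw [h', abs_zero] at h; linarith
      have hk := cker_le x t (s := δ) hne
      have h2 : ω |x - t| * cker x δ t ≤ ω |x - t| * (1 / (x - t) ^ 2) :=
        mul_le_mul_of_nonneg_left hk (nn _ (abs_nonneg _))
      have h3 : ω |x - t| * (1 / (x - t) ^ 2) ≤ φ (x - t) + φ (t - x) := by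
        rcases lt_abs.1 h with h' | h'
        · have : φ (x - t) = ω |x - t| * (1 / (x - t) ^ 2) := by
            rw [hφ, Set.indicator_of_mem (show x - t ∈ Set.Ioi δ from h'),
              abs_of_pos (hδ.trans h')]; ring
          linarith [φn (t - x)]
        · have h'' : δ < t - x := by linarith
          have : φ (t - x) = ω |x - t| * (1 / (x - t) ^ 2) := by
            rw [hφ, Set.indicator_of_mem (show t - x ∈ Set.Ioi δ from h''),
              abs_sub_comm, abs_of_pos (hδ.trans h'')]; ring
          linarith [φn (x - t)]
      have := mul_nonneg (nn δ hδ.le) hc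
      linarith
  have hft : f t = Real.pi⁻¹ * ∫ x, f t * (δ * cker x δ t) := by
    rw [integral_const_mul, integral_const_mul, ce]
    field_simp
  have hgi : Integrable (fun x => L * δ * (2 * ω δ * cker x δ t + (φ (x - t) + φ (t - x)))) :=
    ((ci.const_mul _).add (φ1i.add φ2i)).const_mul _
  have hdom : ∀ x, ‖(f t - Uav f x δ) * (δ * cker x δ t)‖ ≤
      L * δ * (2 * ω δ * cker x δ t + (φ (x - t) + φ (t - x))) := by
    intro x
    have hc := cker_nonneg (s := δ) x t
    rw [norm_mul, Real.norm_eq_abs, Real.norm_eq_abs, abs_sub_comm, abs_of_nonneg (mul_nonneg hδ.le hc)]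
    calc _ ≤ L * (ω δ + ω |x - t|) * (δ * cker x δ t) := by gcongr; exact hU x
      _ = L * δ * (ω δ * cker x δ t + ω |x - t| * cker x δ t) := by ring
      _ ≤ L * δ * (ω δ * cker x δ t + (ω δ * cker x δ t + (φ (x - t) + φ (t - x)))) := by
          gcongr; exact hpt x
      _ = _ := by ring
  have hUc : Continuous (fun x => Uav f x δ) :=
    continuous_iff_continuousAt.2 fun x => (Uav_deriv_x hf x δ).continuousAt
  have hcc : Continuous (fun x => cker x δ t) :=
    (cker_cont2 hδ).comp (by fun_prop : Continuous fun x : ℝ => (x, t))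
  have hdi : Integrable (fun x => (f t - Uav f x δ) * (δ * cker x δ t)) :=
    hgi.mono' (Continuous.aestronglyMeasurable (by fun_prop)) (ae_of_all _ hdom)
  have hfi : Integrable (fun x => f t * (δ * cker x δ t)) := (ci.const_mul _).const_mul _
  have hUi : Integrable (fun x => Uav f x δ * (δ * cker x δ t)) := by
    have := hfi.sub hdi
    refine this.congr (ae_of_all _ fun x => ?_)
    simp only [Pi.sub_apply]; ring
  have hdiff : f t - Real.pi⁻¹ * ∫ x, Uav f x δ * (δ * cker x δ t) =
      Real.pi⁻¹ * ∫ x, (f t - Uav f x δ) * (δ * cker x δ t) := by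
    conv_lhs => rw [hft]
    rw [← mul_sub, ← integral_sub hfi hUi]
    congr 2
    ext x
    ring
  have hnorm := norm_integral_le_of_norm_le hgi (ae_of_all _ hdom)
  rw [integral_const_mul, integral_add (ci.const_mul _) φ3i, integral_const_mul, ce,
    integral_add φ1i φ2i, φ1e, φ2e] at hnorm
  rw [hset, hdiff, abs_mul, abs_of_pos (by positivity)]
  have hw := omega_le mono hδ hint
  rw [← hI] at hw
  have hI0 : 0 ≤ I := φe ▸ integral_nonneg φn
  have hpi := Real.pi_gt_three
  calc _ ≤ Real.pi⁻¹ * (L * δ * (2 * ω δ * (Real.pi / δ) + (I + I))) := by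
        gcongr; exact hnorm
    _ = L * (2 * ω δ + (2 / Real.pi) * (δ * I)) := by
        field_simp
        ring
    _ ≤ L * (2 * (δ * I) + 1 * (δ * I)) := by
        gcongr
        rw [div_le_one (by positivity)]
        linarith
    _ = _ := by ring

end FinalPart

section MainPart

variable {H : Type} [NormedAddCommGroup H] [InnerProductSpace ℂ H] [CompleteSpace H]

noncomputable def psm (f : ℝ → ℝ) (X s t : ℝ) : ℝ :=
  Real.pi⁻¹ * ∫ x in Set.Icc (-X) X, Uav f x s * (s * cker x s t)

noncomputable def kdiff (f : ℝ → ℝ) (X s t : ℝ) : ℝ :=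
  Real.pi⁻¹ * (s⁻¹ * ∫ x in Set.Icc (-X) X,
      ((f (x + s) - Uav f x s) * s + (f (x + s) - f x) * (x - t)) * cker x s t)

lemma Uav_cont {f : ℝ → ℝ} (hf : Continuous f) (s : ℝ) : Continuous (fun x => Uav f x s) :=
  continuous_iff_continuousAt.2 fun x => (Uav_deriv_x hf x s).continuousAt

lemma psm_cont {f : ℝ → ℝ} (hf : Continuous f) (X : ℝ) {s : ℝ} (hs : 0 < s) :
    Continuous (psm f X s) := by
  unfold psm
  refine continuous_const.mul ?_
  refine continuous_parametric_integral_of_continuous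
    (f := fun t x => Uav f x s * (s * cker x s t)) ?_ isCompact_Icc
  have h1 := Uav_cont hf s
  have h2 := (cker_cont2 hs).comp continuous_swap
  unfold Function.uncurry at *
  have h3 : Continuous (fun p : ℝ × ℝ => cker p.2 s p.1) := h2
  fun_prop

lemma kdiff_cont {f : ℝ → ℝ} (hf : Continuous f) (X : ℝ) {δ N : ℝ} (hδ : 0 < δ) :
    ContinuousOn (Function.uncurry (kdiff f X)) (Set.Icc δ N ×ˢ Set.univ) := by
  have hg : Continuous (fun p : ℝ × ℝ => kdiff f X (max p.1 δ) p.2) := by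
    unfold kdiff
    have hm : ∀ r : ℝ, 0 < max r δ := fun r => lt_max_of_lt_right hδ
    refine continuous_const.mul (Continuous.mul
      (Continuous.inv₀ (by fun_prop) (fun p => (hm _).ne')) ?_)
    refine continuous_parametric_integral_of_continuous
      (f := fun (p : ℝ × ℝ) x => ((f (x + max p.1 δ) - Uav f x (max p.1 δ)) * max p.1 δ +
        (f (x + max p.1 δ) - f x) * (x - p.2)) * cker x (max p.1 δ) p.2) ?_ isCompact_Icc
    have hF := Fp_cont hf
    have h1 : Continuous (fun q : (ℝ × ℝ) × ℝ => Uav f q.2 (max q.1.1 δ)) := by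
      unfold Uav
      exact Continuous.div (by fun_prop) (by fun_prop) (fun p => (hm _).ne')
    have h2 : Continuous (fun q : (ℝ × ℝ) × ℝ => cker q.2 (max q.1.1 δ) q.1.2) := by
      unfold cker
      exact Continuous.inv₀ (by fun_prop) (fun p => (cker_den_pos (hm _) _ _).ne')
    unfold Function.uncurry
    fun_prop
  refine hg.continuousOn.congr fun p hp => ?_
  simp only [Function.uncurry]
  rw [max_eq_left hp.1.1]

lemma psm_small {f : ℝ → ℝ} (hf : Continuous f) {a : ℝ} (ha : ∀ x, a < |x| → f x = 0)
    (X : ℝ) {N : ℝ} (hN : 0 < N) (t : ℝ) : |psm f X N t| ≤ (∫ x, |f x|) / N := by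
  have fi : Integrable f := hf.integrable_of_hasCompactSupport
    (HasCompactSupport.intro (isCompact_Icc (a := -a) (b := a)) fun x hx => ha x (by
      by_contra h
      push Not at h
      exact hx ⟨(abs_le.1 h).1, (abs_le.1 h).2⟩))
  set CF := ∫ x, |f x|
  have hC : 0 ≤ CF := integral_nonneg fun x => abs_nonneg _
  have hU : ∀ x, |Uav f x N| ≤ CF / N := by
    intro x
    unfold Uav
    rw [Fp_sub hf, abs_div, abs_of_pos hN]
    gcongr
    refine (intervalIntegral.norm_integral_le_integral_norm_uIoc (f := f) (μ := volume)).trans ?_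
    exact setIntegral_le_integral fi.norm (ae_of_all _ fun x => norm_nonneg _)
  obtain ⟨ci, ce⟩ := cker_int hN t
  have hi : Integrable (fun x => CF / N * (N * cker x N t)) := (ci.const_mul _).const_mul _
  have h1 : ‖∫ x in Set.Icc (-X) X, Uav f x N * (N * cker x N t)‖ ≤
      ∫ x in Set.Icc (-X) X, CF / N * (N * cker x N t) := by
    refine norm_integral_le_of_norm_le hi.integrableOn (ae_of_all _ fun x => ?_)
    have hc := cker_nonneg (s := N) x t
    rw [norm_mul, Real.norm_eq_abs, Real.norm_eq_abs, abs_of_nonneg (mul_nonneg hN.le hc)]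
    gcongr
    exact hU x
  have h2 : ∫ x in Set.Icc (-X) X, CF / N * (N * cker x N t) ≤ ∫ x, CF / N * (N * cker x N t) :=
    setIntegral_le_integral hi (ae_of_all _ fun x => by
      have hc := cker_nonneg (s := N) x t
      positivity)
  have h3 : ∫ x, CF / N * (N * cker x N t) = CF / N * (N * (Real.pi / N)) := by
    rw [integral_const_mul, integral_const_mul, ce]
  rw [h3] at h2
  unfold psm
  rw [abs_mul, abs_of_pos (by positivity)]
  calc _ ≤ Real.pi⁻¹ * (CF / N * (N * (Real.pi / N))) := by gcongr; exact h1.trans h2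
    _ = _ := by field_simp

lemma main_cs {ω : ℝ → ℝ} (mono : MonotoneOn ω (Set.Ici 0)) (h0 : ω 0 = 0)
    (sub : ∀ x y : ℝ, 0 ≤ x → 0 ≤ y → ω (x + y) ≤ ω x + ω y)
    (hint : ∀ x : ℝ, 0 < x → IntegrableOn (fun t : ℝ => ω t / t ^ 2) (Set.Ioi x))
    {L : ℝ} (hL : 0 ≤ L)
    {f : ℝ → ℝ} (hf : Continuous f) (hmod : ∀ x y : ℝ, |f x - f y| ≤ L * ω |x - y|)
    {a : ℝ} (ha0 : 0 ≤ a) (ha : ∀ x, a < |x| → f x = 0)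
    {A B : H →L[ℂ] H} (hA : IsSelfAdjoint A) (hB : IsSelfAdjoint B) (hAB : A ≠ B) :
    ‖cfc f A - cfc f B‖ ≤ 8 * L * (‖A - B‖ * ∫ t in Set.Ioi ‖A - B‖, ω t / t ^ 2) := by
  have hδ : 0 < ‖A - B‖ := norm_pos_iff.2 (sub_ne_zero.2 hAB)
  set δ := ‖A - B‖ with hδdef
  set I := ∫ t in Set.Ioi δ, ω t / t ^ 2 with hI
  have nn : ∀ x, 0 ≤ x → 0 ≤ ω x := fun x hx => by
    rw [← h0]; exact mono (Set.mem_Ici.2 le_rfl) (Set.mem_Ici.2 hx) hx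
  have hI0 : 0 ≤ I := setIntegral_nonneg measurableSet_Ioi fun t ht => by
    have := nn t (hδ.trans ht).le
    positivity
  refine le_of_forall_pos_le_add fun ε hε => ?_
  set CF := ∫ x, |f x| with hCF
  have hC : 0 ≤ CF := integral_nonneg fun x => abs_nonneg _
  set N := max δ (2 * CF / ε) with hN
  have hδN : δ ≤ N := le_max_left _ _
  have hN0 : 0 < N := hδ.trans_le hδN
  have hCN : CF / N ≤ ε / 2 := by
    rw [div_le_iff₀ hN0]
    have : 2 * CF / ε ≤ N := le_max_right _ _
    rw [div_le_iff₀ hε] at this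
    linarith
  set X := a + N + 1 with hX
  have hX0 : 0 ≤ X := by positivity
  have cδ := psm_cont hf X hδ
  have cN := psm_cont hf X hN0
  -- approximation
  have T1 : ∀ {T : H →L[ℂ] H}, IsSelfAdjoint T → ‖cfc f T - cfc (psm f X δ) T‖ ≤ 3 * L * (δ * I) := by
    intro T hT
    rw [← cfc_sub _ _ T hf.continuousOn cδ.continuousOn]
    refine norm_cfc_le (by positivity) fun t _ => ?_
    exact approx_bound mono h0 sub hδ (hint δ hδ) hL hf hmod ha (by linarith) t
  have T2 : ∀ {T : H →L[ℂ] H}, IsSelfAdjoint T → ‖cfc (psm f X N) T‖ ≤ ε / 2 := by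
    intro T hT
    refine norm_cfc_le (by positivity) fun t _ => ?_
    exact (psm_small hf ha X hN0 t).trans hCN
  have T3 : ∀ {T : H →L[ℂ] H}, IsSelfAdjoint T →
      IntegrableOn (fun s => cfc (kdiff f X s) T) (Set.Icc δ N) ∧
      cfc (psm f X N) T - cfc (psm f X δ) T = ∫ s in Set.Icc δ N, cfc (kdiff f X s) T := by
    intro T hT
    obtain ⟨i, e⟩ := op_integral hT δ N (kdiff f X) (kdiff_cont hf X hδ)
    refine ⟨i, ?_⟩
    rw [← cfc_sub _ _ T cN.continuousOn cδ.continuousOn, ← e]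
    congr 1
    ext t
    unfold psm kdiff
    rw [← mul_sub, scalar_identity hf ha hδ hδN hX0 (by linarith) t, integral_const_mul]
  have T4 : ∀ s ∈ Set.Icc δ N, ‖cfc (kdiff f X s) A - cfc (kdiff f X s) B‖ ≤
      2 * L * δ * (ω s / s ^ 2) := by
    intro s hs
    have hs0 : 0 < s := hδ.trans_le hs.1
    have hws := nn s hs0.le
    have hUc := Uav_cont hf s
    have e : kdiff f X s = fun t => ∫ x in Set.Icc (-X) X,
        ((Real.pi⁻¹ * s⁻¹ * (f (x + s) - Uav f x s)) * s +
          (Real.pi⁻¹ * s⁻¹ * (f (x + s) - f x)) * (x - t)) * cker x s t := by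
      ext t
      unfold kdiff
      rw [← mul_assoc, ← integral_const_mul]
      congr 1
      ext x
      ring
    have hb : ∀ y, |y| ≤ L * ω s → |Real.pi⁻¹ * s⁻¹ * y| ≤ Real.pi⁻¹ * s⁻¹ * (L * ω s) := by
      intro y hy
      rw [abs_mul, abs_of_pos (by positivity)]
      gcongr
    have := G_bound hA hB hs0 (-X) X (fun x => Real.pi⁻¹ * s⁻¹ * (f (x + s) - Uav f x s))
      (fun x => Real.pi⁻¹ * s⁻¹ * (f (x + s) - f x)) (Real.pi⁻¹ * s⁻¹ * (L * ω s)) (by positivity)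
      (fun x => hb _ (by
        rw [abs_sub_comm]
        refine Uav_sub hf hs0 fun r h1 h2 => (hmod _ _).trans ?_
        refine mul_le_mul_of_nonneg_left (mono (Set.mem_Ici.2 (abs_nonneg _))
          (Set.mem_Ici.2 hs0.le) ?_) hL
        rw [abs_le]; constructor <;> linarith))
      (fun x => hb _ (by
        have := hmod (x + s) x
        rwa [add_sub_cancel_left, abs_of_pos hs0] at this))
      (by fun_prop) (by fun_prop)
    rw [e]
    refine this.trans (le_of_eq ?_)
    rw [← hδdef]
    field_simp
  have hii : IntegrableOn (fun s => 2 * L * δ * (ω s / s ^ 2)) (Set.Icc δ N) := by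
    rw [integrableOn_Icc_iff_integrableOn_Ioc]
    exact ((hint δ hδ).mono_set Set.Ioc_subset_Ioi_self).const_mul _
  have T5 : ‖(cfc (psm f X N) A - cfc (psm f X δ) A) - (cfc (psm f X N) B - cfc (psm f X δ) B)‖ ≤
      2 * L * (δ * I) := by
    rw [(T3 hA).2, (T3 hB).2, ← integral_sub (T3 hA).1 (T3 hB).1]
    refine (norm_integral_le_of_norm_le hii
      (ae_restrict_of_forall_mem measurableSet_Icc T4)).trans ?_
    rw [integral_const_mul, integral_Icc_eq_integral_Ioc]
    have : ∫ s in Set.Ioc δ N, ω s / s ^ 2 ≤ I := by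
      refine setIntegral_mono_set (hint δ hδ) ?_ (ae_of_all _ fun x hx => Set.Ioc_subset_Ioi_self hx)
      refine ae_restrict_of_forall_mem measurableSet_Ioi fun t ht => ?_
      have := nn t (hδ.trans ht).le
      simp only [Pi.zero_apply]
      positivity
    calc _ ≤ 2 * L * δ * I := by gcongr
      _ = _ := by ring
  have dec : cfc f A - cfc f B = (cfc f A - cfc (psm f X δ) A) - (cfc f B - cfc (psm f X δ) B)
      - ((cfc (psm f X N) A - cfc (psm f X δ) A) - (cfc (psm f X N) B - cfc (psm f X δ) B))
      + (cfc (psm f X N) A - cfc (psm f X N) B) := by abel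
  rw [dec]
  refine (norm_add_le _ _).trans ?_
  have n1 := norm_sub_le ((cfc f A - cfc (psm f X δ) A) - (cfc f B - cfc (psm f X δ) B))
    ((cfc (psm f X N) A - cfc (psm f X δ) A) - (cfc (psm f X N) B - cfc (psm f X δ) B))
  have n2 := norm_sub_le (cfc f A - cfc (psm f X δ) A) (cfc f B - cfc (psm f X δ) B)
  have n3 := norm_sub_le (cfc (psm f X N) A) (cfc (psm f X N) B)
  linarith [T1 hA, T1 hB, T2 hA, T2 hB]

end MainPart

/-- There is a numerical constant `c > 0` such that: for every modulus of
continuity `ω` (continuous and nondecreasing on `[0,∞)`, `ω 0 = 0`, `ω x > 0`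
for `x > 0`, subadditive) with `t ↦ ω t / t²` integrable on `(x, ∞)` for every
`x > 0`, every `L ≥ 0`, every `f : ℝ → ℝ` with `|f x - f y| ≤ L * ω |x - y|`,
and all distinct bounded self-adjoint operators `A`, `B` on a complex Hilbert
space, `‖f(A) - f(B)‖ ≤ c * L * ω_*(‖A - B‖)`, where
`ω_* x = x * ∫_x^∞ ω t / t² dt`. -/
theorem stmt_7 :
    ∃ c : ℝ, 0 < c ∧
      ∀ ω : ℝ → ℝ,
        ContinuousOn ω (Set.Ici 0) → MonotoneOn ω (Set.Ici 0) → ω 0 = 0 →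
        (∀ x : ℝ, 0 < x → 0 < ω x) →
        (∀ x y : ℝ, 0 ≤ x → 0 ≤ y → ω (x + y) ≤ ω x + ω y) →
        (∀ x : ℝ, 0 < x → IntegrableOn (fun t : ℝ => ω t / t ^ 2) (Set.Ioi x)) →
        ∀ L : ℝ, 0 ≤ L →
          ∀ f : ℝ → ℝ, (∀ x y : ℝ, |f x - f y| ≤ L * ω |x - y|) →
            ∀ (H : Type) [NormedAddCommGroup H] [InnerProductSpace ℂ H] [CompleteSpace H]
              (A B : H →L[ℂ] H), IsSelfAdjoint A → IsSelfAdjoint B → A ≠ B →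
              ‖cfc f A - cfc f B‖ ≤
                c * L * (‖A - B‖ * ∫ t in Set.Ioi ‖A - B‖, ω t / t ^ 2) := by
  refine ⟨8, by norm_num, ?_⟩
  intro ω hc mono h0 hpos sub hint L hL f hmod H _ _ _ A B hA hB hAB
  have hcont : Continuous f := by
    rw [continuous_iff_continuousAt]
    intro x
    rw [ContinuousAt, tendsto_iff_dist_tendsto_zero]
    have h1 : Filter.Tendsto (fun y : ℝ => L * ω |y - x|) (nhds x) (nhds 0) := by
      have hw : ContinuousOn (fun y : ℝ => ω |y - x|) Set.univ :=
        hc.comp (by fun_prop) (fun y _ => Set.mem_Ici.2 (abs_nonneg _))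
      have hw' : Continuous (fun y : ℝ => L * ω |y - x|) :=
        continuous_const.mul (continuousOn_univ.1 hw)
      have := hw'.tendsto x
      simpa [h0] using this
    exact squeeze_zero (fun y => dist_nonneg) (fun y => by
      rw [Real.dist_eq]; exact hmod y x) h1
  set R := max ‖A‖ ‖B‖ with hR
  have hR0 : 0 ≤ R := (norm_nonneg A).trans (le_max_left _ _)
  set τ : ℝ → ℝ := fun x => min R (|x + R| - R) with hτ
  have hτc : Continuous τ := by fun_prop
  have hτl : ∀ x y, |τ x - τ y| ≤ |x - y| := by
    intro x y
    have h1 : |τ x - τ y| ≤ max |R - R| |(|x + R| - R) - (|y + R| - R)| :=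
      abs_min_sub_min_le_max _ _ _ _
    refine h1.trans (max_le (by simp) ?_)
    have h2 := abs_abs_sub_abs_le_abs_sub (x + R) (y + R)
    ring_nf at h2 ⊢
    exact h2
  set g : ℝ → ℝ := fun x => f (τ x) - f R with hg
  have gc : Continuous g := by fun_prop
  have gmod : ∀ x y, |g x - g y| ≤ L * ω |x - y| := by
    intro x y
    simp only [hg, sub_sub_sub_cancel_right]
    refine (hmod _ _).trans (mul_le_mul_of_nonneg_left ?_ hL)
    exact mono (Set.mem_Ici.2 (abs_nonneg _)) (Set.mem_Ici.2 (abs_nonneg _)) (hτl x y)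
  have gz : ∀ x, 3 * R < |x| → g x = 0 := by
    intro x hx
    have : τ x = R := by
      refine min_eq_left ?_
      rcases lt_abs.1 hx with h | h
      · linarith [le_abs_self (x + R)]
      · linarith [neg_abs_le (x + R)]
    simp only [hg, this, sub_self]
  have key : ∀ {T : H →L[ℂ] H}, IsSelfAdjoint T → ‖T‖ ≤ R →
      cfc f T = cfc g T + algebraMap ℝ (H →L[ℂ] H) (f R) := by
    intro T hT hTR
    rw [← cfc_add_const _ _ T gc.continuousOn]
    refine cfc_congr fun t ht => ?_
    have h1 : |t| ≤ R := by
      have hnt : Nontrivial (H →L[ℂ] H) := ⟨A, B, hAB⟩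
      exact (spectrum.norm_le_norm_of_mem ht).trans hTR
    have h2 : τ t = t := by
      have := abs_le.1 h1
      simp only [hτ]
      rw [abs_of_nonneg (by linarith), add_sub_cancel_right, min_eq_right this.2]
    simp only [hg, h2, sub_add_cancel]
  rw [key hA (le_max_left _ _), key hB (le_max_right _ _), add_sub_add_right_eq_sub]
  exact main_cs mono h0 sub hint hL gc gmod (by positivity) gz hA hB hAB
end

section
/- Operator Hölder estimate for normal operators: There exists a constant c > 0 such that for every α ∈ (0,1), every L ≥ 0, every function f : ℂ → ℂ satisfying |f(z) − f(w)| ≤ L·|z − w|^α for all z, w ∈ ℂ (Hölder of order α on ℝ² ≅ ℂ), and all bounded normal operators N₁ and N₂ on a complex Hilbert space, ‖f(N₁) − f(N₂)‖ ≤ c·(1 − α)^{−1}·L·‖N₁ − N₂‖^α. -/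
namespace OpHolder

open MeasureTheory Complex
open scoped ComplexInnerProductSpace

/-- the character `z ↦ exp (i ⟨ξ, z⟩)` -/
noncomputable def ch (ξ z : ℂ) : ℂ := cexp (I * ((inner ℝ ξ z : ℝ) : ℂ))

lemma ch_norm (ξ z : ℂ) : ‖ch ξ z‖ = 1 := by
  unfold ch
  rw [mul_comm]
  exact Complex.norm_exp_ofReal_mul_I _

lemma ch_add (ξ η z : ℂ) : ch (ξ + η) z = ch ξ z * ch η z := by
  unfold ch
  rw [← Complex.exp_add, inner_add_left]
  push_cast
  ring_nf

lemma ch_sub_right (ξ z w : ℂ) : ch ξ (z - w) = ch ξ z * ch ξ (-w) := by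
  unfold ch
  rw [← Complex.exp_add, sub_eq_add_neg, inner_add_right]
  push_cast
  ring_nf

lemma ch_zero (z : ℂ) : ch 0 z = 1 := by
  simp [ch]

lemma ch_continuous : Continuous (fun p : ℂ × ℂ => ch p.1 p.2) := by
  unfold ch
  fun_prop

lemma ch_lip (ξ η z : ℂ) : ‖ch ξ z - ch η z‖ ≤ ‖ξ - η‖ * ‖z‖ := by
  unfold ch
  have h := Real.norm_exp_I_mul_ofReal_sub_one_le (x := inner ℝ (ξ - η) z)
  have e : cexp (I * ((inner ℝ ξ z : ℝ) : ℂ)) - cexp (I * ((inner ℝ η z : ℝ) : ℂ))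
      = cexp (I * ((inner ℝ η z : ℝ) : ℂ)) * (cexp (I * ((inner ℝ (ξ - η) z : ℝ) : ℂ)) - 1) := by
    rw [mul_sub, ← Complex.exp_add, mul_one, inner_sub_left]
    push_cast
    ring_nf
  rw [e, norm_mul]
  have := ch_norm η z
  unfold ch at this
  rw [this, one_mul]
  refine h.trans ?_
  exact norm_inner_le_norm _ _

variable {A : Type*} [CStarAlgebra A]

/-- `exp (i ⟨ξ, N⟩)` -/
noncomputable def E (ξ : ℂ) (N : A) : A := cfc (ch ξ) N

lemma ch_cont (ξ : ℂ) : Continuous (ch ξ) :=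
  ch_continuous.comp (Continuous.prodMk_right ξ)

lemma E_add (ξ η : ℂ) (N : A) [IsStarNormal N] : E (ξ + η) N = E ξ N * E η N := by
  unfold E
  rw [← cfc_mul (ch ξ) (ch η) N (ch_cont ξ).continuousOn (ch_cont η).continuousOn]
  congr 1
  ext z
  exact ch_add ξ η z

lemma E_norm (ξ : ℂ) (N : A) : ‖E ξ N‖ ≤ 1 := by
  unfold E
  exact norm_cfc_le zero_le_one fun z _ => (ch_norm ξ z).le

lemma E_zero (N : A) [IsStarNormal N] : E 0 N = 1 := by
  unfold E
  have : ch 0 = fun _ => 1 := by ext z; exact ch_zero z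
  rw [this]
  exact cfc_const_one ℂ N

lemma E_continuous (N : A) [IsStarNormal N] : Continuous (fun ξ => E ξ N) := by
  rcases subsingleton_or_nontrivial A with h | h
  · exact continuous_of_const fun x y => Subsingleton.elim _ _
  have : LipschitzWith ‖N‖₊ (fun ξ => E ξ N) := by
    refine LipschitzWith.of_dist_le_mul fun ξ η => ?_
    rw [dist_eq_norm, dist_eq_norm]
    unfold E
    rw [← cfc_sub (ch ξ) (ch η) N (ch_cont ξ).continuousOn (ch_cont η).continuousOn]
    refine norm_cfc_le (by positivity) fun z hz => ?_
    refine (ch_lip ξ η z).trans ?_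
    rw [mul_comm]
    gcongr
    exact spectrum.norm_le_norm_of_mem hz
  exact this.continuous

/-- the skew-adjoint generator -/
noncomputable def X (ξ : ℂ) (N : A) : A := (I / 2 * star ξ) • N + (I / 2 * ξ) • star N

lemma inner_eq (ξ z : ℂ) :
    I * ((inner ℝ ξ z : ℝ) : ℂ) = (I / 2 * star ξ) * z + (I / 2 * ξ) * star z := by
  rw [Complex.inner, Complex.re_eq_add_conj]
  simp
  ring

lemma X_eq (ξ : ℂ) (N : A) [IsStarNormal N] :
    X ξ N = cfc (fun z : ℂ => I * ((inner ℝ ξ z : ℝ) : ℂ)) N := by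
  simp_rw [inner_eq]
  rw [cfc_add N (fun z : ℂ => (I / 2 * star ξ) * z) (fun z => (I / 2 * ξ) * star z) (by fun_prop)
    (by fun_prop), cfc_const_mul_id _ N, cfc_const_mul _ (fun z : ℂ => star z) N (by fun_prop),
    cfc_star_id N]
  rfl

lemma E_eq_exp (ξ : ℂ) (N : A) [IsStarNormal N] : E ξ N = NormedSpace.exp (X ξ N) := by
  rw [X_eq, ← CFC.exp_eq_normedSpace_exp (𝕜 := ℂ)]
  rw [← cfc_comp' NormedSpace.exp (fun z : ℂ => I * ((inner ℝ ξ z : ℝ) : ℂ)) N ?_ (by fun_prop)]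
  · unfold E ch
    rw [Complex.exp_eq_exp_ℂ]
  · rw [← Complex.exp_eq_exp_ℂ]; exact Complex.continuous_exp.continuousOn

lemma X_smul (s : ℝ) (ξ : ℂ) (N : A) : X (s * ξ) N = (s : ℂ) • X ξ N := by
  unfold X
  simp only [smul_add, smul_smul]
  have h : star ((s : ℂ) * ξ) = s * star ξ := by simp
  rw [h]
  congr 2 <;> ring

lemma X_sub_norm (ξ : ℂ) (N₁ N₂ : A) : ‖X ξ N₁ - X ξ N₂‖ ≤ ‖ξ‖ * ‖N₁ - N₂‖ := by
  have : X ξ N₁ - X ξ N₂ = (I / 2 * star ξ) • (N₁ - N₂) + (I / 2 * ξ) • star (N₁ - N₂) := by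
    unfold X
    rw [star_sub, smul_sub, smul_sub]; abel
  rw [this]
  refine (norm_add_le _ _).trans ?_
  rw [norm_smul, norm_smul, norm_star]
  simp
  linarith

lemma E_sub_norm (ξ : ℂ) (N₁ N₂ : A) [IsStarNormal N₁] [IsStarNormal N₂] :
    ‖1 - E ξ N₁ * E (-ξ) N₂‖ ≤ ‖ξ‖ * ‖N₁ - N₂‖ := by
  let F : ℝ → A := fun s => NormedSpace.exp (s • X ξ N₁) * NormedSpace.exp (s • (- X ξ N₂))
  have hE (N : A) [IsStarNormal N] (s : ℝ) : NormedSpace.exp (s • X ξ N) = E (s * ξ) N := by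
    rw [E_eq_exp, X_smul, Complex.coe_smul]
  have hE' (N : A) [IsStarNormal N] (s : ℝ) : NormedSpace.exp (s • (- X ξ N)) = E (-(s * ξ)) N := by
    rw [smul_neg, ← neg_smul, hE]
    push_cast
    rw [neg_mul]
  have hd (s : ℝ) : HasDerivAt F (NormedSpace.exp (s • X ξ N₁) * (X ξ N₁ - X ξ N₂) *
      NormedSpace.exp (s • (- X ξ N₂))) s := by
    have h1 := hasDerivAt_exp_smul_const (𝕂 := ℝ) (X ξ N₁) s
    have h2 := hasDerivAt_exp_smul_const' (𝕂 := ℝ) (-X ξ N₂) s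
    have h3 := h1.mul h2
    refine h3.congr_deriv ?_
    noncomm_ring
  have := norm_image_sub_le_of_norm_deriv_le_segment_01' (f := F)
    (C := ‖ξ‖ * ‖N₁ - N₂‖) (fun s _ => (hd s).hasDerivWithinAt) (fun s _ => by
      rw [hE, hE']
      calc _ ≤ ‖E (s * ξ) N₁‖ * ‖X ξ N₁ - X ξ N₂‖ * ‖E (-(s * ξ)) N₂‖ := by
            refine (norm_mul_le _ _).trans ?_
            gcongr
            exact norm_mul_le _ _
        _ ≤ 1 * (‖ξ‖ * ‖N₁ - N₂‖) * 1 := by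
            gcongr
            · exact E_norm _ _
            · exact X_sub_norm _ _ _
            · exact E_norm _ _
        _ = _ := by ring)
  rw [norm_sub_rev] at this
  simp only [F, hE, hE'] at this
  simpa [E_zero] using this

end OpHolder


namespace OpHolder

open MeasureTheory Complex
open scoped ComplexInnerProductSpace
variable {A : Type*} [CStarAlgebra A]

lemma E_smul_integrable (Θ : ℂ → ℂ) (hΘc : Continuous Θ) (hΘ : Integrable Θ)
    (N : A) [IsStarNormal N] : Integrable (fun η => Θ η • E η N) := by
  refine hΘ.norm.mono' ?_ (Filter.Eventually.of_forall fun η => ?_)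
  · exact (hΘc.smul (E_continuous N)).aestronglyMeasurable
  · rw [norm_smul]
    exact mul_le_of_le_one_right (norm_nonneg _) (E_norm _ _)

lemma cfc_fourier (Θ : ℂ → ℂ) (hΘc : Continuous Θ) (hΘ : Integrable Θ)
    (N : A) [IsStarNormal N] :
    cfc (fun z => ∫ η, Θ η * ch η z) N = ∫ η, Θ η • E η N := by
  rw [cfc_integral (fun η z => Θ η * ch η z) (fun η => ‖Θ η‖) N]
  · congr 1
    ext η
    rw [cfc_const_mul (Θ η) (ch η) N (ch_cont η).continuousOn]
    rfl
  · refine Continuous.continuousOn ?_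
    exact (hΘc.comp continuous_fst).mul ch_continuous
  · refine Filter.Eventually.of_forall fun η z _ => ?_
    rw [norm_mul, ch_norm, mul_one]
  · exact hΘ.norm.2

theorem abstract_bound (ψ : ℂ → ℝ) (Θ : ℂ → ℂ) (hψc : Continuous ψ) (hψ0 : ∀ z, 0 ≤ ψ z)
    (K : ℝ) (hψK : ∀ z, ψ z ≤ K) (hψ : Integrable ψ) (hψ1 : ∫ z, ψ z = 1) (hΘc : Continuous Θ) (hΘ : Integrable Θ)
    (B : ℂ → ℝ) (M c₁ c₂ : ℝ) (hM0 : 0 ≤ M)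
    (hM : ∀ z, ‖∫ η, Θ η * ch η z‖ ≤ M)
    (hB : ∀ ζ z, ‖∫ η, (ψ (η + ζ) * Θ η) * ch η z‖ ≤ B ζ)
    (hBi : Integrable (fun ζ => B ζ * ‖ζ‖)) (hBc : ∫ ζ, B ζ * ‖ζ‖ ≤ c₁)
    (hψi : Integrable (fun ζ => ψ ζ * ‖ζ‖)) (hψ2 : ∫ ζ, ψ ζ * ‖ζ‖ ≤ c₂)
    (N₁ N₂ : A) [IsStarNormal N₁] [IsStarNormal N₂] :
    ‖cfc (fun z => ∫ η, Θ η * ch η z) N₁ - cfc (fun z => ∫ η, Θ η * ch η z) N₂‖ ≤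
      (c₁ + M * c₂) * ‖N₁ - N₂‖ := by
  have hE1 := E_continuous N₁
  have hE2 := E_continuous N₂
  let U : ℂ → A := fun ζ => E ζ N₁ * E (-ζ) N₂
  have hUc : Continuous U := hE1.mul (hE2.comp continuous_neg)
  have hUn (ζ : ℂ) : ‖U ζ‖ ≤ 1 :=
    (norm_mul_le _ _).trans (mul_le_one₀ (E_norm _ _) (norm_nonneg _) (E_norm _ _))
  have hψU : Integrable (fun ζ => (ψ ζ : ℂ) • U ζ) := by
    refine hψ.mono' ?_ (Filter.Eventually.of_forall fun η => ?_)
    · exact ((continuous_ofReal.comp hψc).smul hUc).aestronglyMeasurable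
    · rw [norm_smul, Complex.norm_real, Real.norm_of_nonneg (hψ0 _)]
      exact mul_le_of_le_one_right (hψ0 _) (hUn _)
  set S : A := ∫ ζ, (ψ ζ : ℂ) • U ζ with hS
  have hψC : Integrable (fun ζ => (ψ ζ : ℂ)) := hψ.ofReal
  have hψC1 : ∫ ζ, (ψ ζ : ℂ) = 1 := by
    rw [integral_complex_ofReal, hψ1]; simp
  have h1S : ‖1 - S‖ ≤ c₂ * ‖N₁ - N₂‖ := by
    have : 1 - S = ∫ ζ, (ψ ζ : ℂ) • (1 - U ζ) := by
      simp_rw [smul_sub]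
      rw [integral_sub (hψC.smul_const _) hψU, integral_smul_const, hψC1, one_smul]
    rw [this]
    calc _ ≤ ∫ ζ, (ψ ζ * ‖ζ‖) * ‖N₁ - N₂‖ := by
          refine norm_integral_le_of_norm_le (hψi.mul_const _) (Filter.Eventually.of_forall ?_)
          intro ζ
          rw [norm_smul, Complex.norm_real, Real.norm_of_nonneg (hψ0 _), mul_assoc]
          exact mul_le_mul_of_nonneg_left (E_sub_norm _ _ _) (hψ0 _)
      _ = (∫ ζ, (ψ ζ * ‖ζ‖)) * ‖N₁ - N₂‖ := integral_mul_const _ _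
      _ ≤ _ := by gcongr
  set h₁ := cfc (fun z => ∫ η, Θ η * ch η z) N₁ with hh₁
  set h₂ := cfc (fun z => ∫ η, Θ η * ch η z) N₂ with hh₂
  have hh₂n : ‖h₂‖ ≤ M := norm_cfc_le hM0 fun z _ => hM z
  have hprod : Integrable (fun p : ℂ × ℂ => ((ψ (p.1 + p.2) : ℂ) * Θ p.1))
      (volume.prod volume) := by
    rw [integrable_prod_iff]
    · constructor
      · refine Filter.Eventually.of_forall fun η => ?_
        exact (hψC.comp_add_left η).mul_const (Θ η)
      · have : (fun η => ∫ ζ, ‖((ψ (η + ζ) : ℂ) * Θ η)‖) = fun η => ‖Θ η‖ := by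
          ext η
          simp only [norm_mul, Complex.norm_real, Real.norm_of_nonneg (hψ0 _)]
          rw [integral_mul_const, integral_add_left_eq_self ψ η, hψ1, one_mul]
        rw [this]
        exact hΘ.norm
    · refine Continuous.aestronglyMeasurable ?_
      exact (continuous_ofReal.comp (hψc.comp (continuous_fst.add continuous_snd))).mul
        (hΘc.comp continuous_fst)
  have hprodA : Integrable (fun p : ℂ × ℂ => ((ψ (p.1 + p.2) : ℂ) * Θ p.1) •
      (E p.1 N₁ * (1 - U p.2))) (volume.prod volume) := by
    refine (hprod.norm.mul_const 2).mono' ?_ (Filter.Eventually.of_forall fun p => ?_)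
    · refine hprod.1.smul ?_
      refine Continuous.aestronglyMeasurable ?_
      exact (hE1.comp continuous_fst).mul (continuous_const.sub (hUc.comp continuous_snd))
    · rw [norm_smul]
      gcongr
      have h1 : ‖(1 : A)‖ ≤ 1 := by rw [← E_zero N₁]; exact E_norm _ _
      calc _ ≤ ‖E p.1 N₁‖ * ‖1 - U p.2‖ := norm_mul_le _ _
        _ ≤ 1 * (1 + 1) := by
          gcongr
          · exact E_norm _ _
          · exact (norm_sub_le _ _).trans (add_le_add h1 (hUn _))
        _ = 2 := by norm_num
  have hinner (η : ℂ) : E η N₁ - S * E η N₂ = ∫ ζ, (ψ (η + ζ) : ℂ) • (E η N₁ * (1 - U ζ)) := by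
    have e1 : S * E η N₂ = ∫ ζ, (ψ (η + ζ) : ℂ) • (E η N₁ * U ζ) := by
      rw [hS, ← integral_mul_const_of_integrable hψU, 
        ← integral_add_left_eq_self (fun ζ => (ψ ζ : ℂ) • U ζ * E η N₂) η]
      congr 1
      ext ζ
      simp only [U]
      rw [smul_mul_assoc, mul_assoc, ← E_add, E_add η ζ N₁, mul_assoc]
      congr 4
      ring
    have e2 : E η N₁ = ∫ ζ, (ψ (η + ζ) : ℂ) • E η N₁ := by
      rw [integral_smul_const, integral_add_left_eq_self (fun ζ => (ψ ζ : ℂ)) η, hψC1, one_smul]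
    have i1 : Integrable (fun ζ => (ψ (η + ζ) : ℂ) • E η N₁) :=
      (hψC.comp_add_left η).smul_const _
    have i2 : Integrable (fun ζ => (ψ (η + ζ) : ℂ) • (E η N₁ * U ζ)) := by
      refine (hψ.comp_add_left η).mono' ?_ (Filter.Eventually.of_forall fun ζ => ?_)
      · exact ((continuous_ofReal.comp (hψc.comp (continuous_const.add continuous_id))).smul
          (continuous_const.mul hUc)).aestronglyMeasurable
      · rw [norm_smul, Complex.norm_real, Real.norm_of_nonneg (hψ0 _)]
        refine mul_le_of_le_one_right (hψ0 _) ?_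
        exact (norm_mul_le _ _).trans (mul_le_one₀ (E_norm _ _) (norm_nonneg _) (hUn _))
    rw [e1]
    nth_rewrite 1 [e2]
    rw [← integral_sub i1 i2]
    congr 1
    ext ζ
    rw [mul_sub, mul_one, smul_sub]
  have hmain : h₁ - S * h₂ = ∫ ζ, cfc (fun z => ∫ η, (ψ (η + ζ) * Θ η) * ch η z) N₁ * (1 - U ζ) := by
    have i1 := E_smul_integrable Θ hΘc hΘ N₁
    have i2 := E_smul_integrable Θ hΘc hΘ N₂
    rw [hh₁, hh₂, cfc_fourier Θ hΘc hΘ, cfc_fourier Θ hΘc hΘ,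
      ← integral_const_mul_of_integrable i2, ← integral_sub i1 (i2.const_mul S)]
    have : ∀ η, Θ η • E η N₁ - S * Θ η • E η N₂ =
        ∫ ζ, ((ψ (η + ζ) : ℂ) * Θ η) • (E η N₁ * (1 - U ζ)) := by
      intro η
      rw [mul_smul_comm, ← smul_sub, hinner, ← integral_smul]
      congr 1
      ext ζ
      rw [smul_smul, mul_comm]
    simp_rw [this]
    rw [integral_integral_swap hprodA]
    congr 1
    ext ζ
    have hc : Continuous (fun η => (ψ (η + ζ) : ℂ) * Θ η) :=
      (continuous_ofReal.comp (hψc.comp (continuous_id.add continuous_const))).mul hΘc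
    have hi : Integrable (fun η => (ψ (η + ζ) : ℂ) * Θ η) := by
      refine (hΘ.norm.const_mul K).mono' hc.aestronglyMeasurable
        (Filter.Eventually.of_forall fun η => ?_)
      rw [norm_mul, Complex.norm_real, Real.norm_of_nonneg (hψ0 _)]
      exact mul_le_mul_of_nonneg_right (hψK _) (norm_nonneg _)
    rw [cfc_fourier _ hc hi, ← integral_mul_const_of_integrable (E_smul_integrable _ hc hi N₁)]
    simp_rw [smul_mul_assoc]
  have hmainb : ‖h₁ - S * h₂‖ ≤ c₁ * ‖N₁ - N₂‖ := by
    rw [hmain]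
    calc _ ≤ ∫ ζ, (B ζ * ‖ζ‖) * ‖N₁ - N₂‖ := by
          refine norm_integral_le_of_norm_le (hBi.mul_const _) (Filter.Eventually.of_forall ?_)
          intro ζ
          refine (norm_mul_le _ _).trans ?_
          have hB0 : 0 ≤ B ζ := (norm_nonneg _).trans (hB ζ 0)
          rw [mul_assoc]
          gcongr
          · exact norm_cfc_le hB0 fun z _ => hB ζ z
          · exact E_sub_norm _ _ _
      _ = (∫ ζ, (B ζ * ‖ζ‖)) * ‖N₁ - N₂‖ := integral_mul_const _ _
      _ ≤ _ := by gcongr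
  have : h₁ - h₂ = (h₁ - S * h₂) - (1 - S) * h₂ := by noncomm_ring
  rw [this]
  calc _ ≤ ‖h₁ - S * h₂‖ + ‖1 - S‖ * ‖h₂‖ :=
        (norm_sub_le _ _).trans (add_le_add le_rfl (norm_mul_le _ _))
    _ ≤ c₁ * ‖N₁ - N₂‖ + (c₂ * ‖N₁ - N₂‖) * M := by
        gcongr
        exact (norm_nonneg _).trans h1S
    _ = _ := by ring

end OpHolder


namespace OpHolder

open MeasureTheory Complex
open scoped ComplexInnerProductSpace

/-- the Gaussian -/
noncomputable def g (b : ℝ) (z : ℂ) : ℝ := Real.exp (-b * ‖z‖ ^ 2)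

lemma g_pos (b : ℝ) (z : ℂ) : 0 < g b z := Real.exp_pos _

lemma g_cont (b : ℝ) : Continuous (g b) := by unfold g; fun_prop

lemma g_le_one {b : ℝ} (hb : 0 ≤ b) (z : ℂ) : g b z ≤ 1 := by
  unfold g
  rw [Real.exp_le_one_iff]
  nlinarith [mul_nonneg hb (sq_nonneg ‖z‖)]

lemma g_fourier {b : ℝ} (hb : 0 < b) (z : ℂ) :
    ∫ η, (g b η : ℂ) * ch η z = ((Real.pi / b * g (1 / (4 * b)) z : ℝ) : ℂ) := by
  have h := GaussianFourier.integral_cexp_neg_mul_sq_norm_add (V := ℂ) (b := (b : ℂ))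
    (by simpa using hb) I z
  have e : ∀ η : ℂ, (g b η : ℂ) * ch η z = cexp (-b * ‖η‖ ^ 2 + I * ((inner ℝ z η : ℝ) : ℂ)) := by
    intro η
    unfold g ch
    rw [Complex.exp_add, real_inner_comm]
    push_cast
    rfl
  simp_rw [e]
  rw [h]
  unfold g
  rw [Complex.finrank_real_complex]
  push_cast
  congr 1
  · norm_num
  · congr 1
    rw [I_sq]
    field_simp

lemma g_integrable {b : ℝ} (hb : 0 < b) : Integrable (g b) := by
  have h := GaussianFourier.integrable_cexp_neg_mul_sq_norm_add (V := ℂ) (b := (b : ℂ))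
    (by simpa using hb) 0 0
  have := h.norm
  refine this.congr (Filter.Eventually.of_forall fun z => ?_)
  unfold g
  simp only [zero_mul, add_zero, Complex.norm_exp]
  norm_cast

lemma g_integral {b : ℝ} (hb : 0 < b) : ∫ z, g b z = Real.pi / b := by
  have h := g_fourier hb 0
  have e : ∀ η, ch η 0 = 1 := by intro η; simp [ch]
  simp_rw [e, mul_one] at h
  rw [integral_complex_ofReal] at h
  have := Complex.ofReal_injective h
  rw [this]
  simp [g]

lemma g_integral_sub {b : ℝ} (hb : 0 < b) (z : ℂ) : ∫ v, g b (z - v) = Real.pi / b := by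
  rw [integral_sub_left_eq_self (g b) volume z, g_integral hb]

lemma g_integrable_sub {b : ℝ} (hb : 0 < b) (z : ℂ) : Integrable (fun v => g b (z - v)) :=
  (g_integrable hb).comp_sub_left z

lemma g_fourier_shift {b : ℝ} (hb : 0 < b) (w y : ℂ) :
    ‖∫ η, (g b (η + w) : ℂ) * ch η y‖ = Real.pi / b * g (1 / (4 * b)) y := by
  have e : ∀ η, (g b (η + w) : ℂ) * ch η y
      = ch (-w) y * ((g b (η + w) : ℂ) * ch (η + w) y) := by
    intro η
    rw [mul_left_comm, ← ch_add]
    congr 2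
    ring
  simp_rw [e]
  rw [integral_const_mul, integral_add_right_eq_self (fun η => (g b η : ℂ) * ch η y) w,
    g_fourier hb, norm_mul, ch_norm, one_mul, Complex.norm_real, Real.norm_of_nonneg]
  have := g_pos (1 / (4 * b)) y
  have := Real.pi_pos
  positivity

lemma g_moment {a : ℝ} (ha : 0 < a) (z : ℂ) :
    g (1 / (8 * a)) z * ‖z‖ ≤ 4 * √a * g (1 / (16 * a)) z := by
  have hs : 0 < √a := Real.sqrt_pos.2 ha
  have h1 : ‖z‖ ≤ 4 * √a * Real.exp ((1 / (16 * a)) * ‖z‖ ^ 2) := by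
    set x := ‖z‖ / (4 * √a) with hx
    have hz : ‖z‖ = 4 * √a * x := by rw [hx]; field_simp
    have h2 : (1 / (16 * a)) * ‖z‖ ^ 2 = x ^ 2 := by
      rw [hz, mul_pow, mul_pow, Real.sq_sqrt ha.le]; field_simp; norm_num
    rw [h2, hz]
    gcongr
    nlinarith [Real.add_one_le_exp (x ^ 2), sq_nonneg (x - 1)]
  have h3 : g (1 / (16 * a)) z = g (1 / (8 * a)) z * Real.exp ((1 / (16 * a)) * ‖z‖ ^ 2) := by
    unfold g
    rw [← Real.exp_add]
    congr 1
    field_simp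
    ring
  rw [h3]
  calc _ ≤ g (1 / (8 * a)) z * (4 * √a * Real.exp ((1 / (16 * a)) * ‖z‖ ^ 2)) :=
        mul_le_mul_of_nonneg_left h1 (g_pos _ _).le
    _ = _ := by ring

lemma g_moment_integrable {a : ℝ} (ha : 0 < a) :
    Integrable (fun z => g (1 / (8 * a)) z * ‖z‖) := by
  refine ((g_integrable (b := 1 / (16 * a)) (by positivity)).const_mul (4 * √a)).mono' ?_
    (Filter.Eventually.of_forall fun z => ?_)
  · exact ((g_cont _).mul continuous_norm).aestronglyMeasurable
  · rw [Real.norm_of_nonneg (mul_nonneg (g_pos _ _).le (norm_nonneg _))]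
    exact g_moment ha z

lemma g_moment_integral {a : ℝ} (ha : 0 < a) :
    ∫ z, g (1 / (8 * a)) z * ‖z‖ ≤ 64 * Real.pi * a * √a := by
  calc _ ≤ ∫ z, 4 * √a * g (1 / (16 * a)) z := by
        refine integral_mono (g_moment_integrable ha) ?_ (g_moment ha)
        exact (g_integrable (b := 1 / (16 * a)) (by positivity)).const_mul (4 * √a)
    _ = _ := by
        rw [integral_const_mul, g_integral (by positivity)]
        field_simp
        norm_num

/-- Fourier transform -/
noncomputable def ft (u : ℂ → ℂ) (η : ℂ) : ℂ := ∫ v, u v * ch η (-v)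

lemma ch_cont_left (z : ℂ) : Continuous (fun η => ch η z) :=
  ch_continuous.comp (Continuous.prodMk_left z)

lemma ft_cont (u : ℂ → ℂ) (huc : Continuous u) (hu : Integrable u) : Continuous (ft u) := by
  unfold ft
  refine continuous_of_dominated (bound := fun v => ‖u v‖) ?_ ?_ hu.norm ?_
  · intro η
    exact (huc.mul ((ch_cont η).comp continuous_neg)).aestronglyMeasurable
  · intro η
    refine Filter.Eventually.of_forall fun v => ?_
    rw [norm_mul, ch_norm, mul_one]
  · refine Filter.Eventually.of_forall fun v => ?_
    exact continuous_const.mul (ch_cont_left _)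

lemma ft_bound (u : ℂ → ℂ) (η : ℂ) : ‖ft u η‖ ≤ ∫ v, ‖u v‖ := by
  unfold ft
  refine (norm_integral_le_integral_norm _).trans (le_of_eq ?_)
  simp_rw [norm_mul, ch_norm, mul_one]

lemma ft_swap (u κ : ℂ → ℂ) (huc : Continuous u) (hu : Integrable u) (hκc : Continuous κ)
    (hκ : Integrable κ) (z : ℂ) :
    ∫ η, (κ η * ft u η) * ch η z = ∫ v, u v * ∫ η, κ η * ch η (z - v) := by
  have hi : Integrable (fun p : ℂ × ℂ => (κ p.1 * u p.2) * ch p.1 (z - p.2))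
      (volume.prod volume) := by
    refine (hκ.mul_prod hu).norm.mono' ?_ (Filter.Eventually.of_forall fun p => ?_)
    · refine Continuous.aestronglyMeasurable ?_
      refine ((hκc.comp continuous_fst).mul (huc.comp continuous_snd)).mul ?_
      exact ch_continuous.comp (continuous_fst.prodMk (continuous_const.sub continuous_snd))
    · rw [norm_mul, ch_norm, mul_one]
  calc _ = ∫ η, ∫ v, (κ η * u v) * ch η (z - v) := by
        congr 1
        ext η
        unfold ft
        rw [← integral_const_mul, ← integral_mul_const]
        congr 1
        ext v
        rw [ch_sub_right]
        ring
    _ = ∫ v, ∫ η, (κ η * u v) * ch η (z - v) := integral_integral_swap hi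
    _ = _ := by
        congr 1
        ext v
        rw [← integral_const_mul]
        congr 1
        ext η
        ring

/-- Gaussian smoothing -/
noncomputable def P (a : ℝ) (u : ℂ → ℂ) (z : ℂ) : ℂ :=
  ((a / Real.pi : ℝ) : ℂ) * ∫ v, u v * (g a (z - v) : ℂ)

lemma int_bound (u : ℂ → ℂ) (M : ℝ) (hM : ∀ v, ‖u v‖ ≤ M) (F : ℂ → ℂ) (c b : ℝ) (hb : 0 < b)
    (z : ℂ) (hF : ∀ v, ‖F v‖ ≤ c * g b (z - v)) :
    ‖∫ v, u v * F v‖ ≤ M * c * (Real.pi / b) := by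
  calc _ ≤ ∫ v, M * c * g b (z - v) := by
        refine norm_integral_le_of_norm_le ((g_integrable_sub hb z).const_mul _)
          (Filter.Eventually.of_forall fun v => ?_)
        rw [norm_mul, mul_assoc]
        exact mul_le_mul (hM v) (hF v) (norm_nonneg _) ((norm_nonneg _).trans (hM v))
    _ = _ := by rw [integral_const_mul, g_integral_sub hb]

variable {A : Type*} [CStarAlgebra A]

theorem key_lemma {a : ℝ} (ha : 0 < a) (u : ℂ → ℂ) (huc : Continuous u) (hu : Integrable u)
    (M : ℝ) (hM : ∀ v, ‖u v‖ ≤ M) (N₁ N₂ : A) [IsStarNormal N₁] [IsStarNormal N₂] :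
    ‖cfc (P a u) N₁ - cfc (P a u) N₂‖ ≤ 32 * M * √a * ‖N₁ - N₂‖ := by
  have hpi := Real.pi_pos
  have hM0 : 0 ≤ M := (norm_nonneg _).trans (hM 0)
  have h4 : 0 < 1 / (4 * a) := by positivity
  let ψ : ℂ → ℝ := fun η => (4 * Real.pi * a)⁻¹ * g (1 / (4 * a)) η
  have hψ0 : ∀ z, 0 ≤ ψ z := fun z => by
    have := g_pos (1 / (4 * a)) z
    positivity
  have hψc : Continuous ψ := continuous_const.mul (g_cont _)
  have hψ : Integrable ψ := (g_integrable h4).const_mul _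
  have hψ1 : ∫ z, ψ z = 1 := by
    simp only [ψ]
    rw [integral_const_mul, g_integral h4]
    field_simp
  have hψK : ∀ z, ψ z ≤ (4 * Real.pi * a)⁻¹ := fun z =>
    mul_le_of_le_one_right (by positivity) (g_le_one h4.le z)
  let κ : ℂ → ℂ := fun η => ((a / Real.pi : ℝ) : ℂ) * (ψ η : ℂ)
  have hκc : Continuous κ := continuous_const.mul (continuous_ofReal.comp hψc)
  have hκ : Integrable κ := hψ.ofReal.const_mul _
  let Θ : ℂ → ℂ := fun η => κ η * ft u η
  have hΘc : Continuous Θ := hκc.mul (ft_cont u huc hu)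
  have hΘ : Integrable Θ := by
    refine (hκ.norm.mul_const (∫ v, ‖u v‖)).mono' hΘc.aestronglyMeasurable
      (Filter.Eventually.of_forall fun η => ?_)
    rw [norm_mul]
    exact mul_le_mul_of_nonneg_left (ft_bound u η) (norm_nonneg _)
  have hP : P a u = fun z => ∫ η, Θ η * ch η z := by
    ext z
    simp only [Θ]
    rw [ft_swap u κ huc hu hκc hκ]
    unfold P
    rw [← integral_const_mul]
    congr 1
    ext v
    rw [mul_left_comm]
    congr 1
    have : ∀ η, κ η * ch η (z - v) =
        (((a / Real.pi) * (4 * Real.pi * a)⁻¹ : ℝ) : ℂ) * ((g (1 / (4 * a)) η : ℂ) * ch η (z - v)) := by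
      intro η
      simp only [κ, ψ]
      push_cast
      ring
    simp_rw [this]
    rw [integral_const_mul, g_fourier h4, ← Complex.ofReal_mul, ← Complex.ofReal_mul]
    congr 1
    have e : 1 / (4 * (1 / (4 * a))) = a := by field_simp
    rw [e]
    field_simp
  have hPb : ∀ z, ‖P a u z‖ ≤ M := by
    intro z
    unfold P
    rw [norm_mul, Complex.norm_real, Real.norm_of_nonneg (by positivity)]
    have := int_bound u M hM (fun v => (g a (z - v) : ℂ)) 1 a ha z (fun v => by
      rw [Complex.norm_real, Real.norm_of_nonneg (g_pos _ _).le, one_mul])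
    calc _ ≤ a / Real.pi * (M * 1 * (Real.pi / a)) := by gcongr
      _ = M := by field_simp
  rw [hP] at hPb ⊢
  have := abstract_bound ψ Θ hψc hψ0 (4 * Real.pi * a)⁻¹ hψK hψ hψ1 hΘc hΘ
    (fun ζ => M / (4 * Real.pi * a) * g (1 / (8 * a)) ζ) M (16 * M * √a) (16 * √a) hM0 hPb
    ?_ ?_ ?_ ?_ ?_ N₁ N₂
  · refine this.trans (le_of_eq (by ring))
  · intro ζ z
    let κ' : ℂ → ℂ := fun η => (ψ (η + ζ) : ℂ) * κ η
    have hκ'c : Continuous κ' :=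
      (continuous_ofReal.comp (hψc.comp (continuous_id.add continuous_const))).mul hκc
    have hκ' : Integrable κ' := by
      refine (hκ.norm.const_mul (4 * Real.pi * a)⁻¹).mono' hκ'c.aestronglyMeasurable
        (Filter.Eventually.of_forall fun η => ?_)
      rw [norm_mul, Complex.norm_real, Real.norm_of_nonneg (hψ0 _)]
      exact mul_le_mul_of_nonneg_right (hψK _) (norm_nonneg _)
    have e1 : ∀ η, (ψ (η + ζ) : ℂ) * Θ η * ch η z = (κ' η * ft u η) * ch η z := by
      intro η
      simp only [Θ, κ']
      ring
    simp_rw [e1]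
    rw [ft_swap u κ' huc hu hκ'c hκ']
    have e2 : ∀ η, κ' η = (((a / Real.pi) * (4 * Real.pi * a)⁻¹ ^ 2 * g (1 / (8 * a)) ζ : ℝ) : ℂ)
        * (g (1 / (2 * a)) (η + ζ / 2) : ℂ) := by
      intro η
      have : g (1 / (4 * a)) (η + ζ) * g (1 / (4 * a)) η
          = g (1 / (8 * a)) ζ * g (1 / (2 * a)) (η + ζ / 2) := by
        unfold g
        rw [← Real.exp_add, ← Real.exp_add]
        congr 1
        simp only [Complex.sq_norm, Complex.normSq_apply]
        simp
        field_simp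
        ring
      have hc : κ' η = (((a / Real.pi) * (4 * Real.pi * a)⁻¹ ^ 2 *
          (g (1 / (4 * a)) (η + ζ) * g (1 / (4 * a)) η) : ℝ) : ℂ) := by
        simp only [κ', κ, ψ]
        push_cast
        ring
      rw [hc, this]
      push_cast
      ring
    have hb2 : 0 < 1 / (2 * a) := by positivity
    refine (int_bound u M hM _ ((a / Real.pi) * (4 * Real.pi * a)⁻¹ ^ 2 * g (1 / (8 * a)) ζ *
      (2 * Real.pi * a)) (a / 2) (by positivity) z ?_).trans (le_of_eq ?_)
    · intro v
      simp_rw [e2, mul_assoc (((a / Real.pi) * (4 * Real.pi * a)⁻¹ ^ 2 * g (1 / (8 * a)) ζ : ℝ) : ℂ)]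
      rw [integral_const_mul, norm_mul, g_fourier_shift hb2, Complex.norm_real, Real.norm_of_nonneg]
      · refine le_of_eq ?_
        have e : 1 / (4 * (1 / (2 * a))) = a / 2 := by field_simp; norm_num
        rw [e]
        field_simp
      · have := g_pos (1 / (8 * a)) ζ
        positivity
    · field_simp
      ring
  · simp_rw [mul_assoc]
    exact (g_moment_integrable ha).const_mul _
  · simp_rw [mul_assoc (M / (4 * Real.pi * a))]
    rw [integral_const_mul]
    calc _ ≤ M / (4 * Real.pi * a) * (64 * Real.pi * a * √a) := by
          gcongr
          exact g_moment_integral ha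
      _ = _ := by field_simp; ring
  all_goals
    have hle : ∀ ζ, ψ ζ * ‖ζ‖ ≤ (4 * Real.pi * a)⁻¹ * (g (1 / (8 * a)) ζ * ‖ζ‖) := by
      intro ζ
      simp only [ψ]
      rw [mul_assoc]
      gcongr
      unfold g
      gcongr
      norm_num
    have hint : Integrable (fun ζ => ψ ζ * ‖ζ‖) := by
      refine ((g_moment_integrable ha).const_mul (4 * Real.pi * a)⁻¹).mono'
        (hψc.mul continuous_norm).aestronglyMeasurable (Filter.Eventually.of_forall fun ζ => ?_)
      rw [Real.norm_of_nonneg (mul_nonneg (hψ0 _) (norm_nonneg _))]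
      exact hle ζ
  · exact hint
  · calc _ ≤ ∫ ζ, (4 * Real.pi * a)⁻¹ * (g (1 / (8 * a)) ζ * ‖ζ‖) :=
          integral_mono hint ((g_moment_integrable ha).const_mul _) hle
      _ ≤ (4 * Real.pi * a)⁻¹ * (64 * Real.pi * a * √a) := by
          rw [integral_const_mul]
          gcongr
          exact g_moment_integral ha
      _ = _ := by field_simp; norm_num

end OpHolder


namespace OpHolder

open MeasureTheory Complex
open scoped ComplexInnerProductSpace

lemma P_cont {a : ℝ} (ha : 0 < a) (F : ℂ → ℂ) (hFc : Continuous F) (hF : Integrable F) :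
    Continuous (P a F) := by
  unfold P
  refine continuous_const.mul ?_
  refine continuous_of_dominated (bound := fun v => ‖F v‖) ?_ ?_ hF.norm ?_
  · intro z
    exact (hFc.mul (continuous_ofReal.comp
      ((g_cont a).comp (continuous_const.sub continuous_id)))).aestronglyMeasurable
  · intro z
    refine Filter.Eventually.of_forall fun v => ?_
    rw [norm_mul, Complex.norm_real, Real.norm_of_nonneg (g_pos _ _).le]
    exact mul_le_of_le_one_right (norm_nonneg _) (g_le_one ha.le _)
  · refine Filter.Eventually.of_forall fun v => ?_
    exact continuous_const.mul (continuous_ofReal.comp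
      ((g_cont a).comp (continuous_id.sub continuous_const)))

lemma P_integrable {a : ℝ} (ha : 0 < a) (F : ℂ → ℂ) (hFc : Continuous F) (hF : Integrable F) :
    Integrable (P a F) := by
  have hi : Integrable (fun p : ℂ × ℂ => F p.1 * (g a (p.2 - p.1) : ℂ)) (volume.prod volume) := by
    rw [integrable_prod_iff]
    · constructor
      · refine Filter.Eventually.of_forall fun v => ?_
        exact (((g_integrable ha).comp_sub_right v).ofReal).const_mul (F v)
      · have : (fun v => ∫ z, ‖F v * (g a (z - v) : ℂ)‖) = fun v => ‖F v‖ * (Real.pi / a) := by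
          ext v
          simp only [norm_mul, Complex.norm_real, Real.norm_of_nonneg (g_pos _ _).le]
          rw [integral_const_mul, integral_sub_right_eq_self (g a) v, g_integral ha]
        rw [this]
        exact hF.norm.mul_const _
    · refine Continuous.aestronglyMeasurable ?_
      exact (hFc.comp continuous_fst).mul (continuous_ofReal.comp
        ((g_cont a).comp (continuous_snd.sub continuous_fst)))
  exact hi.integral_prod_right.const_mul _

lemma P_semigroup {a : ℝ} (ha : 0 < a) (F : ℂ → ℂ) (hFc : Continuous F) (hF : Integrable F) :
    P a (P a F) = P (a / 2) F := by
  have hpi := Real.pi_pos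
  ext z
  have hi : Integrable (fun p : ℂ × ℂ => (F p.2 * (g a (p.1 - p.2) : ℂ)) * (g a (z - p.1) : ℂ))
      (volume.prod volume) := by
    refine ((g_integrable_sub ha z).ofReal (𝕜 := ℂ).mul_prod hF).norm.mono' ?_
      (Filter.Eventually.of_forall fun p => ?_)
    · refine Continuous.aestronglyMeasurable ?_
      refine ((hFc.comp continuous_snd).mul (continuous_ofReal.comp
        ((g_cont a).comp (continuous_fst.sub continuous_snd)))).mul (continuous_ofReal.comp
        ((g_cont a).comp (continuous_const.sub continuous_fst)))
    · simp only [norm_mul, Complex.norm_real, Real.norm_of_nonneg (g_pos _ _).le, RCLike.norm_ofReal,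
        abs_of_pos (g_pos _ _)]
      rw [mul_comm (g a (z - p.1))]
      gcongr
      · exact (g_pos _ _).le
      · exact mul_le_of_le_one_right (norm_nonneg _) (g_le_one ha.le _)
  have hin : ∀ w, ∫ v, (F w * (g a (v - w) : ℂ)) * (g a (z - v) : ℂ)
      = F w * (((Real.pi / (2 * a)) * g (a / 2) (z - w) : ℝ) : ℂ) := by
    intro w
    have e : ∀ v, (F w * (g a (v - w) : ℂ)) * (g a (z - v) : ℂ)
        = (F w * (g (a / 2) (z - w) : ℂ)) * ((g (2 * a) (v - (z + w) / 2) : ℝ) : ℂ) := by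
      intro v
      rw [mul_assoc, mul_assoc, ← Complex.ofReal_mul, ← Complex.ofReal_mul]
      congr 2
      unfold g
      rw [← Real.exp_add, ← Real.exp_add]
      congr 1
      simp only [Complex.sq_norm, Complex.normSq_apply]
      simp
      ring
    simp_rw [e]
    rw [integral_const_mul, integral_complex_ofReal,
      integral_sub_right_eq_self (g (2 * a)) ((z + w) / 2), g_integral (by positivity)]
    push_cast
    ring
  calc P a (P a F) z = ((a / Real.pi : ℝ) : ℂ) * (((a / Real.pi : ℝ) : ℂ) *
        ∫ v, ∫ w, (F w * (g a (v - w) : ℂ)) * (g a (z - v) : ℂ)) := by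
        unfold P
        simp_rw [mul_assoc ((a / Real.pi : ℝ) : ℂ)]
        rw [integral_const_mul]
        simp_rw [integral_mul_const]
    _ = ((a / Real.pi : ℝ) : ℂ) * (((a / Real.pi : ℝ) : ℂ) *
        ∫ w, ∫ v, (F w * (g a (v - w) : ℂ)) * (g a (z - v) : ℂ)) := by
        rw [integral_integral_swap hi]
    _ = _ := by
        simp_rw [hin]
        unfold P
        rw [← integral_const_mul, ← integral_const_mul, ← integral_const_mul]
        congr 1
        ext w
        push_cast
        have : (a : ℂ) ≠ 0 := by exact_mod_cast ha.ne'
        field_simp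

lemma rpow_le_exp {α x : ℝ} (h0 : 0 < α) (h1 : α < 1) (hx : 0 ≤ x) :
    x ^ α ≤ Real.exp (x ^ 2 / 2) := by
  have hexp := Real.add_one_le_exp (x ^ 2 / 2)
  rcases le_total x 1 with h | h
  · have := Real.rpow_le_one hx h h0.le
    nlinarith [sq_nonneg x]
  · have : x ^ α ≤ x ^ (1 : ℝ) := Real.rpow_le_rpow_of_exponent_le h h1.le
    rw [Real.rpow_one] at this
    nlinarith [sq_nonneg (x - 1)]

lemma P_close {a : ℝ} (ha : 0 < a) {α L : ℝ} (h0 : 0 < α) (h1 : α < 1) (hL : 0 ≤ L)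
    (F : ℂ → ℂ) (hFc : Continuous F) (hF : Integrable F)
    (hH : ∀ z w : ℂ, ‖F z - F w‖ ≤ L * ‖z - w‖ ^ α) (z : ℂ) :
    ‖P a F z - F z‖ ≤ 2 * L * ((√a)⁻¹) ^ α := by
  have hpi := Real.pi_pos
  have hs : 0 < √a := Real.sqrt_pos.2 ha
  have hgi : Integrable (fun v => (g a (z - v) : ℂ)) := (g_integrable_sub ha z).ofReal
  have e : P a F z - F z = ((a / Real.pi : ℝ) : ℂ) * ∫ v, (F v - F z) * (g a (z - v) : ℂ) := by
    simp_rw [sub_mul]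
    rw [integral_sub _ (hgi.const_mul _), integral_const_mul]
    · unfold P
      have : ∫ v, (g a (z - v) : ℂ) = ((Real.pi / a : ℝ) : ℂ) := by
        rw [integral_complex_ofReal, g_integral_sub ha]
      rw [this, mul_sub]
      congr 1
      push_cast
      have : (a : ℂ) ≠ 0 := by exact_mod_cast ha.ne'
      have : (Real.pi : ℂ) ≠ 0 := by exact_mod_cast hpi.ne'
      field_simp
    · refine hF.norm.mono' ?_ (Filter.Eventually.of_forall fun v => ?_)
      · exact (hFc.mul (continuous_ofReal.comp
          ((g_cont a).comp (continuous_const.sub continuous_id)))).aestronglyMeasurable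
      · rw [norm_mul, Complex.norm_real, Real.norm_of_nonneg (g_pos _ _).le]
        exact mul_le_of_le_one_right (norm_nonneg _) (g_le_one ha.le _)
  rw [e, norm_mul, Complex.norm_real, Real.norm_of_nonneg (by positivity)]
  calc _ ≤ a / Real.pi * ∫ v, (L * ((√a)⁻¹) ^ α) * g (a / 2) (z - v) := by
        gcongr
        refine norm_integral_le_of_norm_le
          ((g_integrable_sub (b := a / 2) (by positivity) z).const_mul _)
          (Filter.Eventually.of_forall fun v => ?_)
        rw [norm_mul, Complex.norm_real, Real.norm_of_nonneg (g_pos _ _).le]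
        have h2 : ‖v - z‖ ^ α ≤ ((√a)⁻¹) ^ α * Real.exp (a / 2 * ‖z - v‖ ^ 2) := by
          have := rpow_le_exp h0 h1 (x := √a * ‖z - v‖) (by positivity)
          have h3 : ‖v - z‖ = (√a)⁻¹ * (√a * ‖z - v‖) := by
            rw [norm_sub_rev]; field_simp
          rw [h3, Real.mul_rpow (by positivity) (by positivity)]
          gcongr
          refine this.trans (le_of_eq ?_)
          rw [mul_pow, Real.sq_sqrt ha.le]
          congr 1
          ring
        have h4 : g (a / 2) (z - v) = Real.exp (a / 2 * ‖z - v‖ ^ 2) * g a (z - v) := by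
          unfold g
          rw [← Real.exp_add]
          congr 1
          ring
        calc _ ≤ (L * (((√a)⁻¹) ^ α * Real.exp (a / 2 * ‖z - v‖ ^ 2))) * g a (z - v) := by
              refine mul_le_mul_of_nonneg_right ?_ (g_pos _ _).le
              exact (hH v z).trans (mul_le_mul_of_nonneg_left h2 hL)
          _ = _ := by rw [h4]; ring
    _ = _ := by
        rw [integral_const_mul, g_integral_sub (by positivity)]
        field_simp

lemma P_sub {a : ℝ} (ha : 0 < a) (G₁ G₂ : ℂ → ℂ) (hc₁ : Continuous G₁) (hi₁ : Integrable G₁)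
    (hc₂ : Continuous G₂) (hi₂ : Integrable G₂) (z : ℂ) :
    P a (fun v => G₁ v - G₂ v) z = P a G₁ z - P a G₂ z := by
  have hb (G : ℂ → ℂ) (hGc : Continuous G) (hG : Integrable G) :
      Integrable (fun v => G v * (g a (z - v) : ℂ)) := by
    refine hG.norm.mono' ?_ (Filter.Eventually.of_forall fun v => ?_)
    · exact (hGc.mul (continuous_ofReal.comp
        ((g_cont a).comp (continuous_const.sub continuous_id)))).aestronglyMeasurable
    · rw [norm_mul, Complex.norm_real, Real.norm_of_nonneg (g_pos _ _).le]
      exact mul_le_of_le_one_right (norm_nonneg _) (g_le_one ha.le _)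
  unfold P
  simp_rw [sub_mul]
  rw [integral_sub (hb _ hc₁ hi₁) (hb _ hc₂ hi₂), mul_sub]

variable {A : Type*} [CStarAlgebra A]

lemma P_step {a : ℝ} (ha : 0 < a) {α L : ℝ} (h0 : 0 < α) (h1 : α < 1) (hL : 0 ≤ L)
    (F : ℂ → ℂ) (hFc : Continuous F) (hF : Integrable F)
    (hH : ∀ z w : ℂ, ‖F z - F w‖ ≤ L * ‖z - w‖ ^ α)
    (N₁ N₂ : A) [IsStarNormal N₁] [IsStarNormal N₂] :
    ‖cfc (P a F) N₁ - cfc (P a F) N₂‖ ≤ 64 * L * ((√a)⁻¹) ^ α * √a * ‖N₁ - N₂‖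
      + ‖cfc (P (a / 2) F) N₁ - cfc (P (a / 2) F) N₂‖ := by
  have hPc := P_cont ha F hFc hF
  have hPi := P_integrable ha F hFc hF
  have hPc2 := P_cont (half_pos ha) F hFc hF
  have hk := key_lemma ha (fun z => P a F z - F z) (hPc.sub hFc) (hPi.sub hF) _
    (P_close ha h0 h1 hL F hFc hF hH) N₁ N₂
  have e : P a (fun z => P a F z - F z) = fun z => P (a / 2) F z - P a F z := by
    rw [← P_semigroup ha F hFc hF]
    ext z
    exact P_sub ha _ _ hPc hPi hFc hF z
  rw [e] at hk
  rw [cfc_sub (P (a / 2) F) (P a F) N₁ hPc2.continuousOn hPc.continuousOn,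
    cfc_sub (P (a / 2) F) (P a F) N₂ hPc2.continuousOn hPc.continuousOn] at hk
  set x₁ := cfc (P a F) N₁
  set x₂ := cfc (P a F) N₂
  set y₁ := cfc (P (a / 2) F) N₁
  set y₂ := cfc (P (a / 2) F) N₂
  have : x₁ - x₂ = (y₁ - y₂) - (y₁ - x₁ - (y₂ - x₂)) := by abel
  rw [this]
  refine (norm_sub_le _ _).trans ?_
  linarith

lemma main_compact {α L : ℝ} (h0 : 0 < α) (h1 : α < 1) (hL : 0 ≤ L)
    (F : ℂ → ℂ) (hFc : Continuous F) (hF : Integrable F) (M : ℝ) (hM : ∀ z, ‖F z‖ ≤ M)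
    (hH : ∀ z w : ℂ, ‖F z - F w‖ ≤ L * ‖z - w‖ ^ α)
    (N₁ N₂ : A) [IsStarNormal N₁] [IsStarNormal N₂] (hN : 0 < ‖N₁ - N₂‖) :
    ‖cfc F N₁ - cfc F N₂‖ ≤ 260 * (1 - α)⁻¹ * L * ‖N₁ - N₂‖ ^ α := by
  set δ := ‖N₁ - N₂‖ with hδ
  have hM0 : 0 ≤ M := (norm_nonneg _).trans (hM 0)
  set r : ℝ := √(1 / 2) with hr
  have hr0 : 0 < r := Real.sqrt_pos.2 (by norm_num)
  have hr2 : r ^ 2 = 1 / 2 := Real.sq_sqrt (by norm_num)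
  have hr1 : r ≤ 3 / 4 := by nlinarith
  let s : ℕ → ℝ := fun k => δ⁻¹ * r ^ k
  have hs (k : ℕ) : 0 < s k := by positivity
  let a : ℕ → ℝ := fun k => s k ^ 2
  have ha (k : ℕ) : 0 < a k := by have := hs k; positivity
  have hsa (k : ℕ) : √(a k) = s k := Real.sqrt_sq (hs k).le
  have ha2 (k : ℕ) : a k / 2 = a (k + 1) := by
    simp only [a, s]
    rw [mul_pow, mul_pow, ← pow_mul, ← pow_mul, add_mul, pow_add, mul_comm k 2, one_mul, hr2]
    ring
  set q : ℝ := r ^ (1 - α) with hq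
  have hq0 : 0 < q := Real.rpow_pos_of_pos hr0 _
  have hqle : q ≤ 1 - (1 - α) / 4 := by
    have := rpow_one_add_le_one_add_mul_self (s := r - 1) (by linarith) (p := 1 - α)
      (by linarith) (by linarith)
    rw [add_sub_cancel] at this
    rw [hq]
    nlinarith
  let D : ℕ → ℝ := fun k => ‖cfc (P (a k) F) N₁ - cfc (P (a k) F) N₂‖
  have hstep (k : ℕ) : D k ≤ 64 * L * δ ^ α * q ^ k + D (k + 1) := by
    have := P_step (ha k) h0 h1 hL F hFc hF hH N₁ N₂
    rw [ha2, hsa] at this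
    refine this.trans (le_of_eq ?_)
    congr 1
    have e1 : (s k)⁻¹ = δ * (r ^ k)⁻¹ := by simp only [s]; rw [mul_inv, inv_inv]
    have hrk : 0 < r ^ k := by positivity
    have e2 : q ^ k = ((r ^ k)⁻¹) ^ α * r ^ k := by
      rw [hq, ← Real.rpow_natCast, ← Real.rpow_mul hr0.le, mul_comm, Real.rpow_mul hr0.le,
        Real.rpow_natCast, Real.rpow_sub hrk, Real.rpow_one, Real.inv_rpow hrk.le]
      field_simp
    rw [e1, Real.mul_rpow hN.le (by positivity), e2, ← hδ]
    simp only [s]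
    field_simp
  have hsum (K : ℕ) : D 0 ≤ ∑ k ∈ Finset.range K, 64 * L * δ ^ α * q ^ k + D K := by
    induction K with
    | zero => simp
    | succ K ih =>
      rw [Finset.sum_range_succ]
      linarith [hstep K]
  have hC : 0 ≤ 64 * L * δ ^ α := by positivity
  have hgeo (K : ℕ) : ∑ k ∈ Finset.range K, 64 * L * δ ^ α * q ^ k
      ≤ 64 * L * δ ^ α * (4 * (1 - α)⁻¹) := by
    rw [← Finset.mul_sum]
    gcongr
    have h1q : 0 < 1 - q := by linarith
    have h1a : 0 < 1 - α := by linarith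
    calc _ ≤ (1 - q)⁻¹ := by
          have := geom_sum_mul_neg q K
          rw [← div_eq_iff_mul_eq h1q.ne'] at this
          rw [← this, div_eq_mul_inv]
          have hqk : 0 ≤ q ^ K := by positivity
          exact mul_le_of_le_one_left (by positivity) (by linarith)
      _ ≤ ((1 - α) / 4)⁻¹ := by
          gcongr
          linarith
      _ = _ := by rw [inv_div]; ring
  have hD (K : ℕ) : D K ≤ 32 * M * r ^ K := by
    have := key_lemma (ha K) F hFc hF M hM N₁ N₂
    rw [hsa, ← hδ] at this
    refine this.trans (le_of_eq ?_)
    simp only [s]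
    field_simp
  have hD0 : D 0 ≤ 64 * L * δ ^ α * (4 * (1 - α)⁻¹) := by
    have ht : Filter.Tendsto (fun K : ℕ => 64 * L * δ ^ α * (4 * (1 - α)⁻¹) + 32 * M * r ^ K)
        Filter.atTop (nhds (64 * L * δ ^ α * (4 * (1 - α)⁻¹) + 32 * M * 0)) :=
      tendsto_const_nhds.add ((tendsto_pow_atTop_nhds_zero_of_lt_one hr0.le
        (by linarith)).const_mul _)
    rw [mul_zero, add_zero] at ht
    exact ge_of_tendsto' ht fun K => (hsum K).trans (add_le_add (hgeo K) (hD K))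
  have hclose (N : A) [IsStarNormal N] : ‖cfc F N - cfc (P (a 0) F) N‖ ≤ 2 * L * δ ^ α := by
    rw [← cfc_sub F (P (a 0) F) N hFc.continuousOn (P_cont (ha 0) F hFc hF).continuousOn]
    refine norm_cfc_le (by positivity) fun z _ => ?_
    rw [norm_sub_rev]
    have := P_close (ha 0) h0 h1 hL F hFc hF hH z
    rw [hsa] at this
    simpa [s] using this
  have hc1 := hclose N₁
  have hc2 := hclose N₂
  rw [norm_sub_rev] at hc2
  have : cfc F N₁ - cfc F N₂ = (cfc F N₁ - cfc (P (a 0) F) N₁) +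
      (cfc (P (a 0) F) N₁ - cfc (P (a 0) F) N₂) + (cfc (P (a 0) F) N₂ - cfc F N₂) := by abel
  rw [this]
  have h3 : 2 * L * δ ^ α ≤ 2 * L * δ ^ α * (1 - α)⁻¹ := by
    refine le_mul_of_one_le_right (by positivity) ?_
    exact (one_le_inv₀ (by linarith)).2 (by linarith)
  calc _ ≤ 2 * L * δ ^ α + D 0 + 2 * L * δ ^ α :=
        (norm_add₃_le).trans (add_le_add (add_le_add hc1 le_rfl) hc2)
    _ ≤ _ := by linarith

/-- cutoff -/
noncomputable def χ (R : ℝ) (z : ℂ) : ℝ := max 0 (min 1 (2 - ‖z‖ / R))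

lemma χ_lip {R : ℝ} (hR : 0 < R) {α : ℝ} (h0 : 0 < α) (h1 : α < 1) (z w : ℂ) :
    |χ R z - χ R w| ≤ (‖z - w‖ / R) ^ α := by
  have hx : 0 ≤ ‖z - w‖ / R := by positivity
  have hz : 0 ≤ χ R z ∧ χ R z ≤ 1 :=
    ⟨le_max_left _ _, max_le zero_le_one (min_le_left _ _)⟩
  have hw : 0 ≤ χ R w ∧ χ R w ≤ 1 :=
    ⟨le_max_left _ _, max_le zero_le_one (min_le_left _ _)⟩
  rcases le_total (‖z - w‖ / R) 1 with h | h
  · have h2 : |χ R z - χ R w| ≤ ‖z - w‖ / R := by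
      unfold χ
      have e1 := abs_max_sub_max_le_abs (min 1 (2 - ‖z‖ / R)) (min 1 (2 - ‖w‖ / R)) 0
      rw [max_comm, max_comm _ (0 : ℝ)] at e1
      have e2 := abs_min_sub_min_le_max 1 (2 - ‖z‖ / R) 1 (2 - ‖w‖ / R)
      have e3 : |2 - ‖z‖ / R - (2 - ‖w‖ / R)| ≤ ‖z - w‖ / R := by
        have : 2 - ‖z‖ / R - (2 - ‖w‖ / R) = -((‖z‖ - ‖w‖) / R) := by ring
        rw [this, abs_neg, abs_div, abs_of_pos hR]
        gcongr
        exact abs_norm_sub_norm_le z w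
      rw [sub_self, abs_zero, max_eq_right (abs_nonneg _)] at e2
      exact (e1.trans e2).trans e3
    refine h2.trans ?_
    calc _ = (‖z - w‖ / R) ^ (1 : ℝ) := (Real.rpow_one _).symm
      _ ≤ _ := Real.rpow_le_rpow_of_exponent_ge' hx h h0.le h1.le
  · have h2 : |χ R z - χ R w| ≤ 1 := abs_le.2 ⟨by linarith, by linarith⟩
    exact h2.trans (Real.one_le_rpow h h0.le)

lemma cut_holder {R : ℝ} (hR : 0 < R) {α L : ℝ} (h0 : 0 < α) (h1 : α < 1) (hL : 0 ≤ L)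
    (f : ℂ → ℂ) (hf : ∀ z w : ℂ, ‖f z - f w‖ ≤ L * ‖z - w‖ ^ α) (z w : ℂ) :
    ‖(f z - f 0) * (χ R z : ℂ) - (f w - f 0) * (χ R w : ℂ)‖ ≤ 3 * L * ‖z - w‖ ^ α := by
  have hout : ∀ z : ℂ, 2 * R < ‖z‖ → χ R z = 0 := by
    intro z hz
    unfold χ
    refine max_eq_left ((min_le_right _ _).trans ?_)
    rw [sub_nonpos, le_div_iff₀ hR]
    exact hz.le
  have hcase : ∀ z w : ℂ, ‖w‖ ≤ 2 * R →
      ‖(f z - f 0) * (χ R z : ℂ) - (f w - f 0) * (χ R w : ℂ)‖ ≤ 3 * L * ‖z - w‖ ^ α := by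
    intro z w hw
    have e : (f z - f 0) * (χ R z : ℂ) - (f w - f 0) * (χ R w : ℂ)
        = (f z - f w) * (χ R z : ℂ) + (f w - f 0) * ((χ R z - χ R w : ℝ) : ℂ) := by
      push_cast; ring
    rw [e]
    have hχ1 : |χ R z| ≤ 1 := by
      rw [abs_of_nonneg (le_max_left _ _)]
      exact max_le zero_le_one (min_le_left _ _)
    have h2 : ‖f w - f 0‖ ≤ L * (2 * R ^ α) := by
      refine (hf w 0).trans ?_
      gcongr
      rw [sub_zero]
      calc ‖w‖ ^ α ≤ (2 * R) ^ α := by gcongr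
        _ = 2 ^ α * R ^ α := Real.mul_rpow (by norm_num) hR.le
        _ ≤ 2 ^ (1 : ℝ) * R ^ α := by
            gcongr
            norm_num
        _ = _ := by rw [Real.rpow_one]
    calc _ ≤ ‖f z - f w‖ * |χ R z| + ‖f w - f 0‖ * |χ R z - χ R w| := by
          refine (norm_add_le _ _).trans ?_
          rw [norm_mul, norm_mul, Complex.norm_real, Complex.norm_real, Real.norm_eq_abs,
            Real.norm_eq_abs]
      _ ≤ (L * ‖z - w‖ ^ α) * 1 + (L * (2 * R ^ α)) * (‖z - w‖ / R) ^ α := by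
          gcongr
          · exact hf z w
          · exact χ_lip hR h0 h1 z w
      _ = _ := by
          rw [Real.div_rpow (norm_nonneg _) hR.le]
          have : R ^ α ≠ 0 := (Real.rpow_pos_of_pos hR _).ne'
          field_simp
          ring
  rcases le_or_gt ‖w‖ (2 * R) with hw | hw
  · exact hcase z w hw
  rcases le_or_gt ‖z‖ (2 * R) with hz | hz
  · rw [norm_sub_rev, norm_sub_rev z w]
    exact hcase w z hz
  · rw [hout z hz, hout w hw]
    simp
    positivity

theorem main {α L : ℝ} (h0 : 0 < α) (h1 : α < 1) (hL : 0 ≤ L)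
    (f : ℂ → ℂ) (hf : ∀ z w : ℂ, ‖f z - f w‖ ≤ L * ‖z - w‖ ^ α)
    (N₁ N₂ : A) [IsStarNormal N₁] [IsStarNormal N₂] :
    ‖cfc f N₁ - cfc f N₂‖ ≤ 780 * (1 - α)⁻¹ * L * ‖N₁ - N₂‖ ^ α := by
  have h1a : 0 < 1 - α := by linarith
  rcases subsingleton_or_nontrivial A with hA | hA
  · rw [Subsingleton.elim (cfc f N₁ - cfc f N₂) 0, norm_zero]
    positivity
  rcases (norm_nonneg (N₁ - N₂)).eq_or_lt with hN | hN
  · have : N₁ = N₂ := sub_eq_zero.1 (norm_eq_zero.1 hN.symm)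
    subst this
    simp only [sub_self, norm_zero]
    positivity
  have hcont : ∀ (G : ℂ → ℂ) (K : ℝ), (∀ z w : ℂ, ‖G z - G w‖ ≤ K * ‖z - w‖ ^ α) →
      Continuous G := by
    intro G K hG
    rw [continuous_iff_continuousAt]
    intro z
    unfold ContinuousAt
    rw [tendsto_iff_norm_sub_tendsto_zero]
    refine squeeze_zero (fun _ => norm_nonneg _) (fun w => hG w z) ?_
    have : Continuous (fun w : ℂ => K * ‖w - z‖ ^ α) :=
      continuous_const.mul ((continuous_id.sub continuous_const).norm.rpow_const
        fun _ => Or.inr h0.le)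
    have h := this.tendsto z
    simpa [Real.zero_rpow h0.ne'] using h
  set R : ℝ := ‖N₁‖ + ‖N₂‖ + 1 with hR
  have hR0 : 0 < R := by positivity
  let F : ℂ → ℂ := fun z => (f z - f 0) * (χ R z : ℂ)
  have hFH := cut_holder hR0 h0 h1 hL f hf
  have hFc : Continuous F := hcont F _ hFH
  have hfc : Continuous f := hcont f L hf
  have hFs : HasCompactSupport F := by
    refine HasCompactSupport.intro (isCompact_closedBall (0 : ℂ) (2 * R)) fun z hz => ?_
    rw [Metric.mem_closedBall, dist_zero_right, not_le] at hz
    have : χ R z = 0 := by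
      unfold χ
      refine max_eq_left ((min_le_right _ _).trans ?_)
      rw [sub_nonpos, le_div_iff₀ hR0]
      exact hz.le
    simp [F, this]
  obtain ⟨M, hM⟩ := hFs.exists_bound_of_continuous hFc
  have hkey := main_compact h0 h1 (L := 3 * L) (by positivity) F hFc
    (hFc.integrable_of_hasCompactSupport hFs) M hM hFH N₁ N₂ hN
  have hcfc (N : A) [IsStarNormal N] (hNR : ‖N‖ ≤ R) : cfc F N = cfc f N - algebraMap ℂ A (f 0) := by
    rw [← cfc_const (f 0) N, ← cfc_sub f (fun _ => f 0) N hfc.continuousOn continuousOn_const]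
    refine cfc_congr fun z hz => ?_
    have hz' : ‖z‖ ≤ R := (spectrum.norm_le_norm_of_mem hz).trans hNR
    have : χ R z = 1 := by
      unfold χ
      have : ‖z‖ / R ≤ 1 := (div_le_one hR0).2 hz'
      rw [min_eq_left (by linarith)]
      exact max_eq_right zero_le_one
    simp [F, this]
  rw [hcfc N₁ (by rw [hR]; linarith [norm_nonneg N₂]),
    hcfc N₂ (by rw [hR]; linarith [norm_nonneg N₁]), sub_sub_sub_cancel_right] at hkey
  refine hkey.trans (le_of_eq (by ring))

end OpHolder

/-- Operator Hölder estimate for normal operators: there is a constant `c > 0`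
such that for every `α ∈ (0,1)`, every `L ≥ 0`, every `f : ℂ → ℂ` with
`‖f z - f w‖ ≤ L * ‖z - w‖^α`, and all bounded normal operators `N₁`, `N₂` on a
complex Hilbert space, `‖f(N₁) - f(N₂)‖ ≤ c * (1-α)⁻¹ * L * ‖N₁ - N₂‖^α`. -/
theorem stmt_8 :
    ∃ c : ℝ, 0 < c ∧
      ∀ (α L : ℝ), α ∈ Set.Ioo (0 : ℝ) 1 → 0 ≤ L →
        ∀ f : ℂ → ℂ, (∀ z w : ℂ, ‖f z - f w‖ ≤ L * ‖z - w‖ ^ α) →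
          ∀ (H : Type) [NormedAddCommGroup H] [InnerProductSpace ℂ H] [CompleteSpace H]
            (N₁ N₂ : H →L[ℂ] H), IsStarNormal N₁ → IsStarNormal N₂ →
            ‖cfc f N₁ - cfc f N₂‖ ≤ c * (1 - α)⁻¹ * L * ‖N₁ - N₂‖ ^ α := by
  refine ⟨780, by norm_num, ?_⟩
  intro α L hα hL f hf H _ _ _ N₁ N₂ h₁ h₂
  exact OpHolder.main hα.1 hα.2 hL f hf N₁ N₂
end

section
/- Let F be a closed subset of ℂ and let f : ℂ → ℂ be continuous on F. The following statements are equivalent: (a) for every complex Hilbert space H and all bounded normal operators N₁, N₂ on H with spectra contained in F, ‖f(N₁) − f(N₂)‖ ≤ ‖N₁ − N₂‖; (b) for every complex Hilbert space H, every unitary operator U on H and all bounded normal operators N₁, N₂ on H with spectra in F, ‖f(N₁)U − Uf(N₂)‖ ≤ ‖N₁U − UN₂‖; (c) for every complex Hilbert space H, every self-adjoint unitary operator U on H and every bounded normal operator N on H with spectrum in F, ‖f(N)U − Uf(N)‖ ≤ ‖NU − UN‖; (d) for every complex Hilbert space H, every bounded self-adjoint operator A on H and every bounded normal operator N on H with spectrum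 in F, ‖f(N)A − Af(N)‖ ≤ ‖NA − AN‖. -/
section Helpers

variable {H : Type} [NormedAddCommGroup H] [InnerProductSpace ℂ H] [CompleteSpace H]

/-- Block diagonal operator on the Hilbert sum `H ⊕ H`. -/
noncomputable def blockDiag (a b : H →L[ℂ] H) : WithLp 2 (H × H) →L[ℂ] WithLp 2 (H × H) :=
  ((WithLp.prodContinuousLinearEquiv 2 ℂ H H).symm : (H × H) →L[ℂ] WithLp 2 (H × H)) ∘L
    (a.prodMap b) ∘L
    ((WithLp.prodContinuousLinearEquiv 2 ℂ H H) : WithLp 2 (H × H) →L[ℂ] (H × H))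

/-- The swap on the Hilbert sum `H ⊕ H`. -/
noncomputable def blockSwap : WithLp 2 (H × H) →L[ℂ] WithLp 2 (H × H) :=
  ((WithLp.prodContinuousLinearEquiv 2 ℂ H H).symm : (H × H) →L[ℂ] WithLp 2 (H × H)) ∘L
    ((ContinuousLinearMap.snd ℂ H H).prod (ContinuousLinearMap.fst ℂ H H)) ∘L
    ((WithLp.prodContinuousLinearEquiv 2 ℂ H H) : WithLp 2 (H × H) →L[ℂ] (H × H))

lemma blockDiag_apply (a b : H →L[ℂ] H) (x : WithLp 2 (H × H)) :
    blockDiag a b x = WithLp.toLp 2 (a x.fst, b x.snd) := rfl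

lemma blockSwap_apply (x : WithLp 2 (H × H)) :
    blockSwap x = WithLp.toLp 2 (x.snd, x.fst) := rfl

lemma blockDiag_star (a b : H →L[ℂ] H) : blockDiag (star a) (star b) = star (blockDiag a b) := by
  rw [ContinuousLinearMap.star_eq_adjoint (blockDiag a b), ContinuousLinearMap.eq_adjoint_iff]
  intro x y
  simp [blockDiag_apply, WithLp.prod_inner_apply, ContinuousLinearMap.star_eq_adjoint,
    ContinuousLinearMap.adjoint_inner_left]

lemma blockSwap_star : star (blockSwap (H := H)) = blockSwap := by
  symm
  rw [ContinuousLinearMap.star_eq_adjoint, ContinuousLinearMap.eq_adjoint_iff]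
  intro x y
  simp [blockSwap_apply, WithLp.prod_inner_apply, add_comm]

lemma blockSwap_mul_self : blockSwap (H := H) * blockSwap = 1 := by
  ext x; simp only [ContinuousLinearMap.mul_apply, blockSwap_apply]; rfl

lemma blockSwap_mem_unitary :
    blockSwap (H := H) ∈ unitary (WithLp 2 (H × H) →L[ℂ] WithLp 2 (H × H)) := by
  rw [Unitary.mem_iff, blockSwap_star]
  exact ⟨blockSwap_mul_self, blockSwap_mul_self⟩

/-- The block diagonal embedding as a star homomorphism. -/
noncomputable def blockHom : ((H →L[ℂ] H) × (H →L[ℂ] H)) →⋆ₐ[ℂ]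
    (WithLp 2 (H × H) →L[ℂ] WithLp 2 (H × H)) where
  toFun p := blockDiag p.1 p.2
  map_one' := by ext x; rfl
  map_mul' p q := by ext x <;> simp [blockDiag_apply]
  map_zero' := by ext x <;> simp [blockDiag_apply]
  map_add' p q := by ext x; rfl
  commutes' r := by ext x; rfl
  map_star' p := blockDiag_star p.1 p.2

lemma blockHom_apply (p : (H →L[ℂ] H) × (H →L[ℂ] H)) : blockHom p = blockDiag p.1 p.2 := rfl

lemma blockHom_injective : Function.Injective (blockHom (H := H)) := by
  intro p q h
  simp only [blockHom_apply] at h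
  ext x
  · simpa [blockDiag_apply] using congrArg WithLp.fst (DFunLike.congr_fun h (WithLp.toLp 2 (x, 0)))
  · simpa [blockDiag_apply] using congrArg WithLp.snd (DFunLike.congr_fun h (WithLp.toLp 2 (0, x)))

lemma blockHom_comm (a b : H →L[ℂ] H) :
    blockHom (a, b) * blockSwap - blockSwap * blockHom (a, b) =
      blockHom (a - b, b - a) * blockSwap := by
  ext x; simp [blockHom_apply, blockDiag_apply, blockSwap_apply]; rfl

lemma norm_blockHom (p : (H →L[ℂ] H) × (H →L[ℂ] H)) : ‖blockHom p‖ = ‖p‖ :=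
  NonUnitalStarAlgHom.norm_map (blockHom (H := H)) blockHom_injective p

lemma norm_blockHom_comm (a b : H →L[ℂ] H) :
    ‖blockHom (a, b) * blockSwap - blockSwap * blockHom (a, b)‖ = ‖a - b‖ := by
  rw [blockHom_comm, CStarRing.norm_mul_mem_unitary (blockHom (a - b, b - a)) (blockSwap_mem_unitary (H := H)),
    norm_blockHom, Prod.norm_mk, norm_sub_rev b a, max_self]

lemma isStarNormal_pair {a b : H →L[ℂ] H} (ha : IsStarNormal a) (hb : IsStarNormal b) :
    IsStarNormal (a, b) :=
  ⟨Prod.ext ha.star_comm_self hb.star_comm_self⟩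

lemma blockHom_cfc {f : ℂ → ℂ} {a b : H →L[ℂ] H} (ha : IsStarNormal a) (hb : IsStarNormal b)
    (hf : ContinuousOn f (spectrum ℂ a ∪ spectrum ℂ b)) :
    cfc f (blockHom (a, b)) = blockHom (cfc f a, cfc f b) := by
  have hab := isStarNormal_pair ha hb
  rw [← cfc_map_prod (S := ℂ) f a b hf hab ha hb]
  exact (StarAlgHom.map_cfc blockHom f (a, b) (by rwa [Prod.spectrum_eq])
    (AddMonoidHomClass.isometry_of_norm (blockHom (H := H)) norm_blockHom).continuous hab (hab.map blockHom)).symm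

lemma conj_cfc {f : ℂ → ℂ} {U N : H →L[ℂ] H} (hU : U ∈ unitary (H →L[ℂ] H))
    (hN : IsStarNormal N) (hf : ContinuousOn f (spectrum ℂ N)) :
    IsStarNormal (U * N * star U) ∧ spectrum ℂ (U * N * star U) = spectrum ℂ N ∧
    cfc f (U * N * star U) = U * cfc f N * star U := by
  let φ := Unitary.conjStarAlgAut ℂ (H →L[ℂ] H) ⟨U, hU⟩
  have h : ∀ x, φ x = U * x * star U := fun x => Unitary.conjStarAlgAut_apply _ _
  have hn : IsStarNormal (φ N) := hN.map φ
  have h2 : spectrum ℂ (φ N) = spectrum ℂ N := AlgEquiv.spectrum_eq φ N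
  have h3 : φ (cfc f N) = cfc f (φ N) := StarAlgHomClass.map_cfc (S := ℂ) φ f N hf
    (StarAlgEquiv.isometry φ).continuous hN hn
  simp only [h] at hn h2 h3
  exact ⟨hn, h2, h3.symm⟩

lemma norm_conj_sub {U A B : H →L[ℂ] H} (hU : U ∈ unitary (H →L[ℂ] H)) :
    ‖A - U * B * star U‖ = ‖A * U - U * B‖ := by
  rw [← CStarRing.norm_mul_mem_unitary _ hU, sub_mul, mul_assoc (U * B),
    Unitary.star_mul_self_of_mem hU, mul_one]

lemma slope_tendsto (A M : H →L[ℂ] H) :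
    Filter.Tendsto (fun t : ℝ => ‖t⁻¹ • (M * NormedSpace.exp (t • (Complex.I • A)) -
      NormedSpace.exp (t • (Complex.I • A)) * M)‖) (nhdsWithin 0 {0}ᶜ) (nhds ‖M * A - A * M‖) := by
  have h := hasDerivAt_exp_smul_const (𝕂 := ℝ) (Complex.I • A) (0 : ℝ)
  have h2 := (h.const_mul M).sub (h.mul_const M)
  have h3 := (hasDerivAt_iff_tendsto_slope.1 h2).norm
  have e : ‖M * A - A * M‖ = ‖M * (NormedSpace.exp ((0:ℝ) • Complex.I • A) * Complex.I • A) -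
      NormedSpace.exp ((0:ℝ) • Complex.I • A) * Complex.I • A * M‖ := by
    simp [← smul_sub, norm_smul]
  rw [e]
  refine h3.congr fun t => ?_
  simp [slope_def_module]

lemma comm_of_unitary {f : ℂ → ℂ} {N A : H →L[ℂ] H} (hA : IsSelfAdjoint A)
    (h : ∀ U ∈ unitary (H →L[ℂ] H), ‖cfc f N * U - U * cfc f N‖ ≤ ‖N * U - U * N‖) :
    ‖cfc f N * A - A * cfc f N‖ ≤ ‖N * A - A * N‖ := by
  refine le_of_tendsto_of_tendsto' (slope_tendsto A (cfc f N)) (slope_tendsto A N) fun t => ?_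
  rw [norm_smul, norm_smul]
  refine mul_le_mul_of_nonneg_left (h _ ?_) (norm_nonneg _)
  have := (selfAdjoint.expUnitary (t • (⟨A, hA⟩ : selfAdjoint (H →L[ℂ] H)))).2
  rw [selfAdjoint.expUnitary_coe] at this
  rw [smul_comm]
  exact this

end Helpers

/-- Let `F ⊆ ℂ` be closed and `f : ℂ → ℂ` continuous on `F`. The following are
equivalent:
(a) `‖f(N₁) - f(N₂)‖ ≤ ‖N₁ - N₂‖` for all bounded normal `N₁`, `N₂` with
spectra in `F`;
(b) `‖f(N₁)U - Uf(N₂)‖ ≤ ‖N₁U - UN₂‖` for every unitary `U` and all bounded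
normal `N₁`, `N₂` with spectra in `F`;
(c) `‖f(N)U - Uf(N)‖ ≤ ‖NU - UN‖` for every self-adjoint unitary `U` and every
bounded normal `N` with spectrum in `F`;
(d) `‖f(N)A - Af(N)‖ ≤ ‖NA - AN‖` for every bounded self-adjoint `A` and every
bounded normal `N` with spectrum in `F`. -/
theorem stmt_10 (F : Set ℂ) (hF : IsClosed F) (f : ℂ → ℂ) (hf : ContinuousOn f F) :
    List.TFAE
      [ (∀ (H : Type) [NormedAddCommGroup H] [InnerProductSpace ℂ H] [CompleteSpace H]
          (N₁ N₂ : H →L[ℂ] H), IsStarNormal N₁ → IsStarNormal N₂ →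
          spectrum ℂ N₁ ⊆ F → spectrum ℂ N₂ ⊆ F →
          ‖cfc f N₁ - cfc f N₂‖ ≤ ‖N₁ - N₂‖),
        (∀ (H : Type) [NormedAddCommGroup H] [InnerProductSpace ℂ H] [CompleteSpace H]
          (U N₁ N₂ : H →L[ℂ] H), U ∈ unitary (H →L[ℂ] H) →
          IsStarNormal N₁ → IsStarNormal N₂ →
          spectrum ℂ N₁ ⊆ F → spectrum ℂ N₂ ⊆ F →
          ‖cfc f N₁ * U - U * cfc f N₂‖ ≤ ‖N₁ * U - U * N₂‖),
        (∀ (H : Type) [NormedAddCommGroup H] [InnerProductSpace ℂ H] [CompleteSpace H]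
          (U N : H →L[ℂ] H), U ∈ unitary (H →L[ℂ] H) → IsSelfAdjoint U →
          IsStarNormal N → spectrum ℂ N ⊆ F →
          ‖cfc f N * U - U * cfc f N‖ ≤ ‖N * U - U * N‖),
        (∀ (H : Type) [NormedAddCommGroup H] [InnerProductSpace ℂ H] [CompleteSpace H]
          (A N : H →L[ℂ] H), IsSelfAdjoint A →
          IsStarNormal N → spectrum ℂ N ⊆ F →
          ‖cfc f N * A - A * cfc f N‖ ≤ ‖N * A - A * N‖) ] := by
  tfae_have 1 → 2 := by
    intro h H _ _ _ U N₁ N₂ hU h1 h2 s1 s2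
    obtain ⟨hn, hs, hc⟩ := conj_cfc hU h2 (hf.mono s2)
    have := h H N₁ (U * N₂ * star U) h1 hn s1 (hs ▸ s2)
    rwa [hc, norm_conj_sub hU, norm_conj_sub hU] at this
  tfae_have 2 → 4 := by
    intro h H _ _ _ A N hA hN hs
    exact comm_of_unitary hA fun U hU => h H U N N hU hN hN hs hs
  tfae_have 4 → 3 := by
    intro h H _ _ _ U N _ hU hN hs
    exact h H U N hU hN hs
  tfae_have 3 → 1 := by
    intro h H _ _ _ N₁ N₂ h1 h2 s1 s2
    have hs : spectrum ℂ (blockHom (N₁, N₂)) ⊆ F := by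
      refine (AlgHom.spectrum_apply_subset blockHom (N₁, N₂)).trans ?_
      rw [Prod.spectrum_eq]
      exact Set.union_subset s1 s2
    have := h (WithLp 2 (H × H)) blockSwap (blockHom (N₁, N₂)) blockSwap_mem_unitary
      blockSwap_star ((isStarNormal_pair h1 h2).map blockHom) hs
    rwa [blockHom_cfc h1 h2 (hf.mono (Set.union_subset s1 s2)), norm_blockHom_comm,
      norm_blockHom_comm] at this
  tfae_finish
end

section
/- f-regularity passes to pairs with smaller spectra: Let N₁ and N₂ be bounded normal operators on complex Hilbert spaces H₁ and H₂ respectively, and let f : ℂ → ℂ be continuous on σ(N₁) ∪ σ(N₂). Suppose that ‖f(N₁)R − Rf(N₂)‖ ≤ ‖N₁R − RN₂‖ for every bounded linear operator R : H₂ → H₁. Then for all complex Hilbert spaces K₁, K₂, all bounded normal operators M₁ on K₁ and M₂ on K₂ with σ(M₁) ⊆ σ(N₁) and σ(M₂) ⊆ σ(N₂), and every bounded linear operator R : K₂ → K₁, one has ‖f(M₁)R − Rf(M₂)‖ ≤ ‖M₁R − RM₂‖. -/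
open scoped InnerProductSpace

section aux
variable {K : Type} [NormedAddCommGroup K] [InnerProductSpace ℂ K] [CompleteSpace K]
variable {H : Type} [NormedAddCommGroup H] [InnerProductSpace ℂ H] [CompleteSpace H]

theorem aux_L (M : K →L[ℂ] K) (hM : IsStarNormal M) {ι : Type} (s : Finset ι)
    (p : ι → ℂ → ℂ) (q : ℂ → ℂ) (hp : ∀ i ∈ s, ContinuousOn (p i) (spectrum ℂ M))
    (hq : ContinuousOn q (spectrum ℂ M))
    (h : ∀ z ∈ spectrum ℂ M, ∑ i ∈ s, ‖p i z‖ ^ 2 ≤ ‖q z‖ ^ 2) (v : K) :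
    ∑ i ∈ s, ‖cfc (p i) M v‖ ^ 2 ≤ ‖cfc q M v‖ ^ 2 := by
  have key : ∀ (g : ℂ → ℂ), ContinuousOn g (spectrum ℂ M) →
      (‖cfc g M v‖ ^ 2 : ℝ) = (⟪v, cfc (fun z => star (g z) * g z) M v⟫_ℂ).re := by
    intro g hg
    rw [cfc_mul (fun z => star (g z)) g M (by fun_prop) hg, cfc_star]
    simp only [ContinuousLinearMap.mul_apply, ContinuousLinearMap.star_eq_adjoint,
      ContinuousLinearMap.adjoint_inner_right]
    rw [inner_self_eq_norm_sq_to_K]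
    norm_cast
  set r : ℂ → ℂ := fun z => ((Real.sqrt (‖q z‖ ^ 2 - ∑ i ∈ s, ‖p i z‖ ^ 2) : ℝ) : ℂ) with hr
  have hrc : ContinuousOn r (spectrum ℂ M) := by
    have : ContinuousOn (fun z => ∑ i ∈ s, ‖p i z‖ ^ 2) (spectrum ℂ M) :=
      continuousOn_finsetSum _ (fun i hi => ((hp i hi).norm.pow 2))
    exact Complex.continuous_ofReal.comp_continuousOn
      (Real.continuous_sqrt.comp_continuousOn ((hq.norm.pow 2).sub this))
  have e : ∑ i ∈ s, cfc (fun z => star (p i z) * p i z) M + cfc (fun z => star (r z) * r z) M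
      = cfc (fun z => star (q z) * q z) M := by
    rw [← cfc_sum (fun i z => star (p i z) * p i z) M s
      (fun i hi => by have := hp i hi; fun_prop), ← cfc_add M _ _ ?_ (by fun_prop)]
    · apply cfc_congr
      intro z hz
      have h1 : ∀ w : ℂ, star w * w = ((‖w‖ ^ 2 : ℝ) : ℂ) := by
        intro w
        have := Complex.conj_mul' w
        simpa using this
      have h2 : ‖r z‖ ^ 2 = ‖q z‖ ^ 2 - ∑ i ∈ s, ‖p i z‖ ^ 2 := by
        rw [hr]
        simp only [Complex.norm_real, Real.norm_eq_abs, sq_abs]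
        rw [Real.sq_sqrt (by linarith [h z hz])]
      simp only [Finset.sum_apply, h1, h2]
      push_cast
      ring
    · have : ContinuousOn (fun z => ∑ i ∈ s, star (p i z) * p i z) (spectrum ℂ M) :=
        continuousOn_finsetSum _ (fun i hi => by have := hp i hi; fun_prop)
      convert this using 1
      ext z; simp
  have e2 := congrArg (fun T : K →L[ℂ] K => (⟪v, T v⟫_ℂ).re) e
  simp only [ContinuousLinearMap.add_apply, ContinuousLinearMap.sum_apply, inner_add_right, inner_sum,
    Complex.add_re, Complex.re_sum] at e2
  rw [key q hq, ← e2, ← key r hrc, Finset.sum_congr rfl (fun i hi => key (p i) (hp i hi))]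
  have := sq_nonneg ‖cfc r M v‖
  linarith

theorem aux_L2 (M : K →L[ℂ] K) (hM : IsStarNormal M) {ι : Type} (s : Finset ι)
    (p : ι → ℂ → ℂ) (C : ℝ) (hC : 0 ≤ C) (hp : ∀ i ∈ s, ContinuousOn (p i) (spectrum ℂ M))
    (h : ∀ z ∈ spectrum ℂ M, ∑ i ∈ s, ‖p i z‖ ^ 2 ≤ C ^ 2) (a : ι → K) (B : ℝ) (hB : 0 ≤ B)
    (ha : ∑ i ∈ s, ‖a i‖ ^ 2 ≤ B ^ 2) :
    ‖∑ i ∈ s, cfc (p i) M (a i)‖ ≤ C * B := by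
  set w := ∑ i ∈ s, cfc (p i) M (a i) with hw
  have h1 : ∑ i ∈ s, ‖cfc (fun z => star (p i z)) M w‖ ^ 2 ≤ (C * ‖w‖) ^ 2 := by
    have := aux_L M hM s (fun i z => star (p i z)) (fun _ => (C : ℂ))
      (fun i hi => by have := hp i hi; fun_prop) (by fun_prop) (by simpa using h) w
    rw [cfc_const (C : ℂ) M] at this
    simpa [Algebra.algebraMap_eq_smul_one, norm_smul, abs_of_nonneg hC] using this
  have h2 : ‖w‖ ^ 2 ≤ ∑ i ∈ s, ‖cfc (fun z => star (p i z)) M w‖ * ‖a i‖ := by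
    have e : ((‖w‖ ^ 2 : ℝ) : ℂ) = ∑ i ∈ s, ⟪cfc (fun z => star (p i z)) M w, a i⟫_ℂ := by
      have : ⟪w, w⟫_ℂ = ∑ i ∈ s, ⟪cfc (fun z => star (p i z)) M w, a i⟫_ℂ := by
        conv_lhs => rw [hw, ← hw, hw, inner_sum]
        rw [← hw]
        refine Finset.sum_congr rfl (fun i _ => ?_)
        rw [cfc_star, ContinuousLinearMap.star_eq_adjoint, ContinuousLinearMap.adjoint_inner_left]
      rw [← this, inner_self_eq_norm_sq_to_K]
      norm_cast
    have e2 : ‖w‖ ^ 2 = ‖((‖w‖ ^ 2 : ℝ) : ℂ)‖ := by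
      rw [Complex.norm_real, Real.norm_of_nonneg (by positivity)]
    rw [e2, e]
    exact (norm_sum_le _ _).trans (Finset.sum_le_sum fun i _ => norm_inner_le_norm _ _)
  have h3 := Finset.sum_mul_sq_le_sq_mul_sq s (fun i => ‖cfc (fun z => star (p i z)) M w‖) (fun i => ‖a i‖)
  have h4 : (‖w‖ ^ 2) ^ 2 ≤ ((C * ‖w‖) * B) ^ 2 := by
    calc (‖w‖ ^ 2) ^ 2 ≤ (∑ i ∈ s, ‖cfc (fun z => star (p i z)) M w‖ * ‖a i‖) ^ 2 := by gcongr
      _ ≤ _ := h3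
      _ ≤ (C * ‖w‖) ^ 2 * B ^ 2 := by gcongr
      _ = _ := by ring
  have h5 : ‖w‖ ^ 2 ≤ (C * ‖w‖) * B := by
    exact le_of_sq_le_sq h4 (by positivity)
  by_cases hw0 : ‖w‖ = 0
  · rw [hw0]; positivity
  · have : 0 < ‖w‖ := lt_of_le_of_ne (norm_nonneg _) (Ne.symm hw0)
    nlinarith

theorem aux_E (N : H →L[ℂ] H) (hN : IsStarNormal N) (s : Finset ℂ)
    (hs : ∀ l ∈ s, l ∈ spectrum ℂ N) (r : ℝ) (hr : 0 < r) :
    ∃ e : ℂ → H, (∀ l ∈ s, ‖e l‖ = 1) ∧ (∀ l ∈ s, ∀ m ∈ s, l ≠ m → ⟪e l, e m⟫_ℂ = 0) ∧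
      ∀ g : ℂ → ℂ, ContinuousOn g (spectrum ℂ N) → ∀ δ : ℝ, 0 ≤ δ →
        (∀ z ∈ spectrum ℂ N, ∀ w ∈ spectrum ℂ N, dist z w < r → ‖g z - g w‖ ≤ δ) →
        ∀ l ∈ s, ‖cfc g N (e l) - g l • e l‖ ≤ δ := by
  obtain ⟨t, ht, htr, hsep⟩ : ∃ t : ℝ, 0 < t ∧ t ≤ r ∧ ∀ l ∈ s, ∀ m ∈ s, l ≠ m → 2 * t ≤ dist l m := by
    have : ∃ t : ℝ, 0 < t ∧ ∀ l ∈ s, ∀ m ∈ s, l ≠ m → t ≤ dist l m := by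
      by_cases hne : (s.offDiag).Nonempty
      · obtain ⟨x, hx, hmin⟩ := s.offDiag.exists_min_image (fun x => dist x.1 x.2) hne
        rw [Finset.mem_offDiag] at hx
        refine ⟨dist x.1 x.2, dist_pos.2 hx.2.2, fun l hl m hm hlm => ?_⟩
        exact hmin (l, m) (Finset.mem_offDiag.2 ⟨hl, hm, hlm⟩)
      · refine ⟨1, one_pos, fun l hl m hm hlm => ?_⟩
        exact absurd ⟨(l, m), Finset.mem_offDiag.2 ⟨hl, hm, hlm⟩⟩ hne
    obtain ⟨t, ht, h⟩ := this
    refine ⟨min r (t / 2), by positivity, min_le_left _ _, fun l hl m hm hlm => ?_⟩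
    have := h l hl m hm hlm
    have := min_le_right r (t / 2)
    linarith
  set ψ : ℂ → ℂ → ℂ := fun l z => ((max 0 (t - dist z l) : ℝ) : ℂ) with hψ
  have hψc : ∀ l, Continuous (ψ l) := fun l => by
    simp only [hψ]; fun_prop
  have hv : ∀ l ∈ s, ∃ v, cfc (ψ l) N v ≠ 0 := by
    intro l hl
    by_contra! hcon
    have h0 : cfc (ψ l) N = cfc (fun _ => (0 : ℂ)) N := by
      rw [cfc_const_zero]; ext v; simp [hcon v]
    have := (cfc_eq_cfc_iff_eqOn (a := N) (hf := (hψc l).continuousOn)).1 h0 (hs l hl)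
    simp [hψ, ht.le] at this
    linarith
  choose! v hv using hv
  refine ⟨fun l => ((‖cfc (ψ l) N (v l)‖⁻¹ : ℝ) : ℂ) • cfc (ψ l) N (v l), ?_, ?_, ?_⟩
  · intro l hl
    have := norm_ne_zero_iff.2 (hv l hl)
    rw [norm_smul, Complex.norm_real, norm_inv, norm_norm, inv_mul_cancel₀ this]
  · intro l hl m hm hlm
    rw [inner_smul_left, inner_smul_right]
    have h1 : star (cfc (ψ l) N) * cfc (ψ m) N = 0 := by
      rw [← cfc_star, ← cfc_mul _ _ _ (by have := hψc l; fun_prop) (hψc m).continuousOn,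
        ← cfc_const_zero ℂ N]
      apply cfc_congr
      intro z _
      simp only [hψ]
      have := hsep l hl m hm hlm
      have h3 := dist_triangle_left l m z
      rcases le_total t (dist z l) with h | h
      · rw [max_eq_left (a := (0:ℝ)) (b := t - dist z l) (by linarith)]; simp
      · rw [max_eq_left (a := (0:ℝ)) (b := t - dist z m) (by linarith)]; simp
    have h2 : ⟪cfc (ψ l) N (v l), cfc (ψ m) N (v m)⟫_ℂ = 0 := by
      rw [← ContinuousLinearMap.adjoint_inner_right, ← ContinuousLinearMap.star_eq_adjoint,
        ← ContinuousLinearMap.mul_apply, h1]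
      simp
    rw [h2]; simp
  · intro g hg δ hδ hgδ l hl
    have hgl : cfc (fun z => (g z - g l) * ψ l z) N = (cfc g N - g l • 1) * cfc (ψ l) N := by
      rw [cfc_mul (fun z => g z - g l) (ψ l) N (by fun_prop) (hψc l).continuousOn,
        cfc_sub g (fun _ => g l) N hg (by fun_prop), cfc_const (g l) N, Algebra.algebraMap_eq_smul_one]
    have h1 := aux_L N hN ({()} : Finset Unit) (fun _ z => (g z - g l) * ψ l z)
      (fun z => (δ : ℂ) * ψ l z) (fun _ _ => by have := hψc l; fun_prop)
      (by have := hψc l; fun_prop) (by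
        intro z hz
        simp only [Finset.sum_singleton, norm_mul, Complex.norm_real, Real.norm_of_nonneg hδ]
        by_cases hz' : dist z l < r
        · have := hgδ z hz l (hs l hl) hz'
          gcongr
        · have : ψ l z = 0 := by
            simp only [hψ]
            rw [max_eq_left (by linarith)]; simp
          simp [this]) (v l)
    simp only [Finset.sum_singleton] at h1
    rw [hgl, cfc_const_mul (δ : ℂ) (ψ l) N (hψc l).continuousOn] at h1
    have h2 := le_of_sq_le_sq h1 (norm_nonneg _)
    simp only [ContinuousLinearMap.smul_apply, norm_smul, Complex.norm_real, Real.norm_of_nonneg hδ] at h2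
    have h3 : 0 < ‖cfc (ψ l) N (v l)‖ := norm_pos_iff.2 (hv l hl)
    set u := cfc (ψ l) N (v l) with hu
    have h4 : cfc g N (((‖u‖⁻¹ : ℝ) : ℂ) • u) - g l • (((‖u‖⁻¹ : ℝ) : ℂ) • u)
        = ((‖u‖⁻¹ : ℝ) : ℂ) • (((cfc g N - g l • 1) * cfc (ψ l) N) (v l)) := by
      simp only [ContinuousLinearMap.mul_apply, ContinuousLinearMap.sub_apply,
        ContinuousLinearMap.smul_apply, ContinuousLinearMap.one_apply, map_smul, smul_sub, ← hu]
      rw [smul_comm (g l)]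
    rw [h4, norm_smul, Complex.norm_real, norm_inv, norm_norm, inv_mul_le_iff₀ h3]
    linarith

theorem aux_part (X : Set ℂ) (hX : IsCompact X) (r : ℝ) (hr : 0 < r) :
    ∃ (s : Finset ℂ) (h : ℂ → ℂ → ℝ), (∀ l ∈ s, l ∈ X) ∧ (∀ l ∈ s, ContinuousOn (h l) X) ∧
      (∀ z ∈ X, ∑ l ∈ s, h l z ^ 2 = 1) ∧ ∀ l z, h l z ≠ 0 → dist z l < r := by
  obtain ⟨t, htX, htf, hcov⟩ := Metric.totallyBounded_iff.1 hX.totallyBounded r hr |>.elim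
    (fun t ht => (Metric.finite_approx_of_totallyBounded hX.totallyBounded r hr))
  lift t to Finset ℂ using htf
  set φ : ℂ → ℂ → ℝ := fun l z => max 0 (r - dist z l) with hφ
  have hφ0 : ∀ l z, 0 ≤ φ l z := fun l z => le_max_left _ _
  have hφc : ∀ l, Continuous (φ l) := fun l => by simp only [hφ]; fun_prop
  have hpos : ∀ z ∈ X, 0 < ∑ l ∈ t, φ l z := by
    intro z hz
    obtain ⟨l, hl, hzl⟩ := Set.mem_iUnion₂.1 (hcov hz)
    refine Finset.sum_pos' (fun l _ => hφ0 l z) ⟨l, hl, ?_⟩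
    simp only [hφ]
    rw [Metric.mem_ball] at hzl
    exact lt_max_of_lt_right (by linarith)
  refine ⟨t, fun l z => Real.sqrt (φ l z / ∑ m ∈ t, φ m z), fun l hl => htX hl, ?_, ?_, ?_⟩
  · intro l _
    refine Real.continuous_sqrt.comp_continuousOn ?_
    refine (hφc l).continuousOn.div (continuous_finsetSum _ (fun i _ => hφc i)).continuousOn ?_
    intro z hz
    exact (hpos z hz).ne'
  · intro z hz
    have : ∀ l ∈ t, Real.sqrt (φ l z / ∑ m ∈ t, φ m z) ^ 2 = φ l z / ∑ m ∈ t, φ m z := fun l _ =>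
      Real.sq_sqrt (div_nonneg (hφ0 l z) (hpos z hz).le)
    rw [Finset.sum_congr rfl this, ← Finset.sum_div, div_self (hpos z hz).ne']
  · intro l z hne
    by_contra! hcon
    apply hne
    have : φ l z = 0 := max_eq_left (by linarith)
    simp [this]

theorem aux_modulus (X : Set ℂ) (hX : IsCompact X) (G : Fin 2 → ℂ → ℂ)
    (hG : ∀ i, ContinuousOn (G i) X) (ε : ℝ) (hε : 0 < ε) :
    ∃ r > 0, ∀ i, ∀ z ∈ X, ∀ w ∈ X, dist z w < r → ‖G i z - G i w‖ ≤ ε := by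
  have : ∀ i, ∃ r > 0, ∀ z ∈ X, ∀ w ∈ X, dist z w < r → ‖G i z - G i w‖ ≤ ε := by
    intro i
    obtain ⟨r, hr, h⟩ := Metric.uniformContinuousOn_iff.1
      (hX.uniformContinuousOn_of_continuous (hG i)) ε hε
    refine ⟨r, hr, fun z hz w hw hzw => ?_⟩
    rw [← dist_eq_norm]
    exact (h z hz w hw hzw).le
  choose r hr h using this
  refine ⟨min (r 0) (r 1), lt_min (hr 0) (hr 1), fun i z hz w hw hzw => h i z hz w hw ?_⟩
  rw [lt_min_iff] at hzw
  fin_cases i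
  · exact hzw.1
  · exact hzw.2

theorem aux_A (M : K →L[ℂ] K) (hM : IsStarNormal M) (N : H →L[ℂ] H) (hN : IsStarNormal N)
    (hMN : spectrum ℂ M ⊆ spectrum ℂ N) (G : Fin 2 → ℂ → ℂ)
    (hG : ∀ i, ContinuousOn (G i) (spectrum ℂ N)) (x : K) (ε : ℝ) (hε : 0 < ε) :
    ∃ (A : H →L[ℂ] K) (ξ : H), ‖A‖ ≤ 1 ∧ ‖ξ‖ ≤ ‖x‖ ∧ A ξ = x ∧
      ∀ i, ‖(cfc (G i) M).comp A - A.comp (cfc (G i) N)‖ ≤ ε := by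
  have hGM : ∀ i, ContinuousOn (G i) (spectrum ℂ M) := fun i => (hG i).mono hMN
  obtain ⟨r, hr, hmod⟩ := aux_modulus _ (spectrum.isCompact M) G hGM (ε / 2) (by positivity)
  obtain ⟨s, h, hsM, hhc, hh1, hsupp⟩ := aux_part _ (spectrum.isCompact M) r hr
  obtain ⟨r', hr', hmod'⟩ := aux_modulus _ (spectrum.isCompact N) (fun i z => star (G i z))
    (fun i => by have := hG i; fun_prop) (ε / 2 / (s.card + 1)) (by positivity)
  obtain ⟨e, he1, heo, heg⟩ := aux_E N hN s (fun l hl => hMN (hsM l hl)) r' hr'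
  set p : ℂ → ℂ → ℂ := fun l z => (h l z : ℂ) with hp
  have hpc : ∀ l ∈ s, ContinuousOn (p l) (spectrum ℂ M) := fun l hl =>
    Complex.continuous_ofReal.comp_continuousOn (hhc l hl)
  have hpn : ∀ l z, ‖p l z‖ ^ 2 = h l z ^ 2 := fun l z => by simp [hp]
  have hp1 : ∀ z ∈ spectrum ℂ M, ∑ l ∈ s, ‖p l z‖ ^ 2 ≤ 1 ^ 2 := by
    intro z hz
    simp only [hpn, hh1 z hz]; norm_num
  set X : ℂ → K := fun l => cfc (p l) M x with hX
  set xh : ℂ → K := fun l => ((‖X l‖⁻¹ : ℝ) : ℂ) • X l with hxh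
  have hxh1 : ∀ l, ‖xh l‖ ≤ 1 := by
    intro l
    simp only [hxh]
    rw [norm_smul, Complex.norm_real, norm_inv, norm_norm]
    exact inv_mul_le_one
  have hxhX : ∀ l, ((‖X l‖ : ℝ) : ℂ) • xh l = X l := by
    intro l
    by_cases h0 : X l = 0
    · simp [hxh, h0]
    · have : ‖X l‖ ≠ 0 := norm_ne_zero_iff.2 h0
      simp only [hxh, smul_smul]
      rw [← Complex.ofReal_mul, mul_inv_cancel₀ this]; simp
  have horth : Orthonormal ℂ (fun l : s => e l) := by
    refine ⟨fun l => he1 l l.2, fun l m hlm => heo l l.2 m m.2 (fun h => hlm (Subtype.ext h))⟩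
  have hbes : ∀ v : H, ∑ l ∈ s, ‖⟪e l, v⟫_ℂ‖ ^ 2 ≤ ‖v‖ ^ 2 := by
    intro v
    have := horth.sum_inner_products_le (x := v) (s := Finset.univ)
    rwa [Finset.sum_coe_sort s (fun l => ‖⟪e l, v⟫_ℂ‖ ^ 2)] at this
  have hsmul : ∀ (c : ℂ) l, ‖c • xh l‖ ^ 2 ≤ ‖c‖ ^ 2 := by
    intro c l
    rw [norm_smul]
    have := hxh1 l
    gcongr
    exact mul_le_of_le_one_right (norm_nonneg _) this
  set A : H →L[ℂ] K := ∑ l ∈ s, (innerSL ℂ (e l)).smulRight (cfc (p l) M (xh l)) with hA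
  have hAv : ∀ v, A v = ∑ l ∈ s, cfc (p l) M (⟪e l, v⟫_ℂ • xh l) := by
    intro v
    simp [hA, ContinuousLinearMap.sum_apply]
  have hxs : ∑ l ∈ s, ‖X l‖ ^ 2 ≤ ‖x‖ ^ 2 := by
    have := aux_L M hM s p (fun _ => (1 : ℂ)) hpc (by fun_prop) (by simpa using hp1) x
    rw [cfc_const_one ℂ M] at this
    simpa using this
  have hsum : ∑ l ∈ s, cfc (p l) M (X l) = x := by
    have h1 : ∑ l ∈ s, cfc (p l) M * cfc (p l) M = 1 := by
      rw [Finset.sum_congr rfl (fun l hl => (cfc_mul (p l) (p l) M (hpc l hl) (hpc l hl)).symm),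
        ← cfc_sum (fun l z => p l z * p l z) M s (fun l hl => (hpc l hl).mul (hpc l hl)),
        ← cfc_const_one ℂ M]
      apply cfc_congr
      intro z hz
      have := hh1 z hz
      simp only [Finset.sum_apply, hp]
      rw [← Complex.ofReal_one, ← this]
      push_cast
      exact Finset.sum_congr rfl (fun _ _ => by ring)
    have := congrArg (fun T : K →L[ℂ] K => T x) h1
    simpa [ContinuousLinearMap.sum_apply] using this
  refine ⟨A, ∑ l ∈ s, ((‖X l‖ : ℝ) : ℂ) • e l, ?_, ?_, ?_, ?_⟩
  · refine A.opNorm_le_bound zero_le_one (fun v => ?_)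
    rw [hAv]
    refine aux_L2 M hM s p 1 zero_le_one hpc hp1 _ _ (norm_nonneg _) ?_
    exact (Finset.sum_le_sum fun l _ => hsmul _ l).trans (hbes v)
  · refine le_of_sq_le_sq (le_trans (le_of_eq ?_) hxs) (norm_nonneg _)
    have h1 := horth.inner_sum (fun l : s => ((‖X l‖ : ℝ) : ℂ)) (fun l : s => ((‖X l‖ : ℝ) : ℂ))
      Finset.univ
    rw [Finset.sum_coe_sort s (fun l => ((‖X l‖ : ℝ) : ℂ) • e l),
      Finset.sum_coe_sort s (fun l => (starRingEnd ℂ) ((‖X l‖ : ℝ) : ℂ) * ((‖X l‖ : ℝ) : ℂ)),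
      inner_self_eq_norm_sq_to_K] at h1
    simp only [Complex.conj_ofReal] at h1
    simp only [sq]
    simp only [sq] at h1
    apply Complex.ofReal_injective
    rw [Complex.ofReal_mul, Complex.ofReal_sum]
    simp only [Complex.ofReal_mul]
    exact h1
  · rw [hAv, ← hsum]
    refine Finset.sum_congr rfl (fun l hl => ?_)
    congr 1
    rw [← hxhX l]
    congr 1
    rw [inner_sum, Finset.sum_eq_single l]
    · rw [inner_smul_right, inner_self_eq_norm_sq_to_K, he1 l hl]; simp
    · intro m hm hml
      rw [inner_smul_right, heo l hl m hm (Ne.symm hml), mul_zero]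
    · intro h; exact absurd hl h
  · intro i
    refine ContinuousLinearMap.opNorm_le_bound _ hε.le (fun v => ?_)
    have hdec : ((cfc (G i) M).comp A - A.comp (cfc (G i) N)) v =
        ∑ l ∈ s, cfc (fun z => (G i z - G i l) * p l z) M (⟪e l, v⟫_ℂ • xh l)
        - ∑ l ∈ s, cfc (p l) M (⟪cfc (fun z => star (G i z)) N (e l) - star (G i l) • e l, v⟫_ℂ • xh l) := by
      simp only [ContinuousLinearMap.sub_apply, ContinuousLinearMap.comp_apply, hAv, map_sum]
      rw [← Finset.sum_sub_distrib, ← Finset.sum_sub_distrib]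
      refine Finset.sum_congr rfl (fun l hl => ?_)
      rw [cfc_mul (fun z => G i z - G i l) (p l) M (by have := hGM i; fun_prop) (hpc l hl),
        cfc_sub (G i) (fun _ => G i l) M (hGM i) (by fun_prop), cfc_const (G i l) M,
        Algebra.algebraMap_eq_smul_one, cfc_star, ContinuousLinearMap.star_eq_adjoint,
        inner_sub_left, ContinuousLinearMap.adjoint_inner_left, inner_smul_left]
      simp only [ContinuousLinearMap.mul_apply, ContinuousLinearMap.sub_apply,
        ContinuousLinearMap.smul_apply, ContinuousLinearMap.one_apply, map_smul, sub_smul, map_sub,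
        mul_smul, RCLike.star_def, RCLike.conj_conj]
      rw [smul_sub, smul_comm (G i l)]
      abel
    rw [hdec]
    have b1 : ‖∑ l ∈ s, cfc (fun z => (G i z - G i l) * p l z) M (⟪e l, v⟫_ℂ • xh l)‖
        ≤ ε / 2 * ‖v‖ := by
      refine aux_L2 M hM s _ (ε / 2) (by positivity)
        (fun l hl => ((hGM i).sub continuousOn_const).mul (hpc l hl)) ?_ _ _ (norm_nonneg _)
        ((Finset.sum_le_sum fun l _ => hsmul _ l).trans (hbes v))
      intro z hz
      calc ∑ l ∈ s, ‖(G i z - G i l) * p l z‖ ^ 2 ≤ ∑ l ∈ s, (ε / 2) ^ 2 * h l z ^ 2 := by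
            refine Finset.sum_le_sum (fun l hl => ?_)
            rw [norm_mul, mul_pow, hpn]
            by_cases h0 : h l z = 0
            · simp [h0]
            · have := hmod i z hz l (hsM l hl) (hsupp l z h0)
              gcongr
        _ = (ε / 2) ^ 2 := by rw [← Finset.mul_sum, hh1 z hz, mul_one]
    have b2 : ‖∑ l ∈ s, cfc (p l) M
        (⟪cfc (fun z => star (G i z)) N (e l) - star (G i l) • e l, v⟫_ℂ • xh l)‖
        ≤ 1 * (ε / 2 * ‖v‖) := by
      refine aux_L2 M hM s p 1 zero_le_one hpc hp1 _ _ (by positivity) ?_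
      have hc : (s.card : ℝ) ≤ ((s.card : ℝ) + 1) ^ 2 := by nlinarith [(Nat.cast_nonneg s.card : (0:ℝ) ≤ s.card)]
      calc _ ≤ ∑ l ∈ s, (ε / 2 / (s.card + 1) * ‖v‖) ^ 2 := by
            refine Finset.sum_le_sum (fun l hl => (hsmul _ l).trans ?_)
            have h1 := heg (fun z => star (G i z)) (by have := hG i; fun_prop)
              (ε / 2 / (s.card + 1)) (by positivity) (hmod' i) l hl
            have h2 := norm_inner_le_norm (𝕜 := ℂ)
              (cfc (fun z => star (G i z)) N (e l) - star (G i l) • e l) v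
            have := h2.trans (mul_le_mul_of_nonneg_right h1 (norm_nonneg v))
            gcongr
        _ = s.card / ((s.card : ℝ) + 1) ^ 2 * (ε / 2 * ‖v‖) ^ 2 := by
            rw [Finset.sum_const, nsmul_eq_mul]; field_simp
        _ ≤ 1 * (ε / 2 * ‖v‖) ^ 2 := by
            gcongr
            exact div_le_one_of_le₀ hc (by positivity)
        _ = _ := one_mul _
    refine (norm_sub_le _ _).trans ?_
    linarith

theorem aux_main {H₁ H₂ K₁ K₂ : Type}
    [NormedAddCommGroup H₁] [InnerProductSpace ℂ H₁] [CompleteSpace H₁]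
    [NormedAddCommGroup H₂] [InnerProductSpace ℂ H₂] [CompleteSpace H₂]
    [NormedAddCommGroup K₁] [InnerProductSpace ℂ K₁] [CompleteSpace K₁]
    [NormedAddCommGroup K₂] [InnerProductSpace ℂ K₂] [CompleteSpace K₂]
    (A₁ : H₁ →L[ℂ] K₁) (A₂ : H₂ →L[ℂ] K₂) (P₁ : K₁ →L[ℂ] K₁) (P₂ : K₂ →L[ℂ] K₂)
    (Q₁ : H₁ →L[ℂ] H₁) (Q₂ : H₂ →L[ℂ] H₂) (R : K₂ →L[ℂ] K₁) (ε : ℝ)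
    (h₁ : ‖A₁‖ ≤ 1) (h₂ : ‖A₂‖ ≤ 1)
    (e₁ : ‖(star P₁).comp A₁ - A₁.comp (star Q₁)‖ ≤ ε) (e₂ : ‖P₂.comp A₂ - A₂.comp Q₂‖ ≤ ε) :
    ‖A₁.adjoint.comp ((P₁.comp R - R.comp P₂).comp A₂) -
      (Q₁.comp (A₁.adjoint.comp (R.comp A₂)) - (A₁.adjoint.comp (R.comp A₂)).comp Q₂)‖
      ≤ 2 * ε * ‖R‖ := by
  have hε : 0 ≤ ε := (norm_nonneg _).trans e₁
  have e₁' : ‖A₁.adjoint.comp P₁ - Q₁.comp A₁.adjoint‖ ≤ ε := by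
    rw [← ContinuousLinearMap.adjoint.norm_map] at e₁
    simpa [ContinuousLinearMap.adjoint_comp, ContinuousLinearMap.star_eq_adjoint] using e₁
  have h₁' : ‖A₁.adjoint‖ ≤ 1 := by simpa using h₁
  have : A₁.adjoint.comp ((P₁.comp R - R.comp P₂).comp A₂) -
      (Q₁.comp (A₁.adjoint.comp (R.comp A₂)) - (A₁.adjoint.comp (R.comp A₂)).comp Q₂)
      = (A₁.adjoint.comp P₁ - Q₁.comp A₁.adjoint).comp (R.comp A₂)
        - (A₁.adjoint.comp R).comp (P₂.comp A₂ - A₂.comp Q₂) := by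
    ext v
    simp only [ContinuousLinearMap.sub_apply, ContinuousLinearMap.comp_apply, map_sub]
    abel
  rw [this]
  have a1 : ‖R.comp A₂‖ ≤ ‖R‖ := (ContinuousLinearMap.opNorm_comp_le _ _).trans
    (mul_le_of_le_one_right (norm_nonneg _) h₂)
  have a2 : ‖A₁.adjoint.comp R‖ ≤ ‖R‖ := (ContinuousLinearMap.opNorm_comp_le _ _).trans
    (mul_le_of_le_one_left (norm_nonneg _) h₁')
  have b1 := (ContinuousLinearMap.opNorm_comp_le (A₁.adjoint.comp P₁ - Q₁.comp A₁.adjoint)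
    (R.comp A₂)).trans (mul_le_mul e₁' a1 (norm_nonneg _) hε)
  have b2 := (ContinuousLinearMap.opNorm_comp_le (A₁.adjoint.comp R)
    (P₂.comp A₂ - A₂.comp Q₂)).trans (mul_le_mul a2 e₂ (norm_nonneg _) (norm_nonneg _))
  refine (norm_sub_le _ _).trans ?_
  linarith

end aux

/-- `f`-regularity passes to pairs with smaller spectra: if `N₁`, `N₂` are
bounded normal operators on complex Hilbert spaces `H₁`, `H₂`, `f` is
continuous on `σ(N₁) ∪ σ(N₂)`, and `‖f(N₁)R - Rf(N₂)‖ ≤ ‖N₁R - RN₂‖` for every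
bounded `R : H₂ → H₁`, then the same inequality holds for every pair of bounded
normal operators `M₁`, `M₂` (on arbitrary complex Hilbert spaces) with
`σ(M₁) ⊆ σ(N₁)` and `σ(M₂) ⊆ σ(N₂)`. -/
theorem stmt_12 {H₁ H₂ : Type}
    [NormedAddCommGroup H₁] [InnerProductSpace ℂ H₁] [CompleteSpace H₁]
    [NormedAddCommGroup H₂] [InnerProductSpace ℂ H₂] [CompleteSpace H₂]
    (N₁ : H₁ →L[ℂ] H₁) (N₂ : H₂ →L[ℂ] H₂)
    (hN₁ : IsStarNormal N₁) (hN₂ : IsStarNormal N₂)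
    (f : ℂ → ℂ) (hf : ContinuousOn f (spectrum ℂ N₁ ∪ spectrum ℂ N₂))
    (hreg : ∀ R : H₂ →L[ℂ] H₁,
      ‖(cfc f N₁).comp R - R.comp (cfc f N₂)‖ ≤ ‖N₁.comp R - R.comp N₂‖) :
    ∀ (K₁ K₂ : Type)
      [NormedAddCommGroup K₁] [InnerProductSpace ℂ K₁] [CompleteSpace K₁]
      [NormedAddCommGroup K₂] [InnerProductSpace ℂ K₂] [CompleteSpace K₂]
      (M₁ : K₁ →L[ℂ] K₁) (M₂ : K₂ →L[ℂ] K₂),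
      IsStarNormal M₁ → IsStarNormal M₂ →
      spectrum ℂ M₁ ⊆ spectrum ℂ N₁ → spectrum ℂ M₂ ⊆ spectrum ℂ N₂ →
      ∀ R : K₂ →L[ℂ] K₁,
        ‖(cfc f M₁).comp R - R.comp (cfc f M₂)‖ ≤ ‖M₁.comp R - R.comp M₂‖ := by
  intro K₁ K₂ _ _ _ _ _ _ M₁ M₂ hM₁ hM₂ hs₁ hs₂ R
  set T := (cfc f M₁).comp R - R.comp (cfc f M₂) with hT
  set D := M₁.comp R - R.comp M₂ with hD
  have hf₁ : ContinuousOn f (spectrum ℂ N₁) := hf.mono Set.subset_union_left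
  have hf₂ : ContinuousOn f (spectrum ℂ N₂) := hf.mono Set.subset_union_right
  have key : ∀ (x : K₂) (y : K₁) (ε : ℝ), 0 < ε →
      ‖⟪y, T x⟫_ℂ‖ ≤ (‖D‖ + 4 * ε * ‖R‖) * (‖y‖ * ‖x‖) := by
    intro x y ε hε
    obtain ⟨A₁, η, hA₁, hη, hy, hG₁⟩ := aux_A M₁ hM₁ N₁ hN₁ hs₁
      ![fun z => star z, fun z => star (f z)]
      (by rw [Fin.forall_fin_two]; constructor <;> simp <;> fun_prop) y ε hε
    obtain ⟨A₂, ξ, hA₂, hξ, hx, hG₂⟩ := aux_A M₂ hM₂ N₂ hN₂ hs₂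
      ![fun z => z, f]
      (by rw [Fin.forall_fin_two]; constructor <;> simp <;> fun_prop) x ε hε
    rw [Fin.forall_fin_two] at hG₁ hG₂
    simp only [Matrix.cons_val_zero, Matrix.cons_val_one, cfc_star f, cfc_id' ℂ M₂, cfc_id' ℂ N₂,
      cfc_star (fun z : ℂ => z), cfc_id' ℂ M₁, cfc_id' ℂ N₁] at hG₁ hG₂
    have m1 := aux_main A₁ A₂ M₁ M₂ N₁ N₂ R ε hA₁ hA₂ hG₁.1 hG₂.1
    have m2 := aux_main A₁ A₂ (cfc f M₁) (cfc f M₂) (cfc f N₁) (cfc f N₂) R ε hA₁ hA₂ hG₁.2 hG₂.2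
    have hr := hreg (A₁.adjoint.comp (R.comp A₂))
    rw [← hT] at m2
    rw [← hD] at m1
    have hA₁' : ‖A₁.adjoint‖ ≤ 1 := by simpa using hA₁
    have n1 : ‖A₁.adjoint.comp (D.comp A₂)‖ ≤ ‖D‖ :=
      (ContinuousLinearMap.opNorm_comp_le _ _).trans ((mul_le_of_le_one_left (norm_nonneg _) hA₁').trans
        ((ContinuousLinearMap.opNorm_comp_le _ _).trans (mul_le_of_le_one_right (norm_nonneg _) hA₂)))
    have n2 : ‖A₁.adjoint.comp (T.comp A₂)‖ ≤ ‖D‖ + 4 * ε * ‖R‖ := by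
      have t1 := norm_sub_norm_le (A₁.adjoint.comp (T.comp A₂)) (
        (cfc f N₁).comp (A₁.adjoint.comp (R.comp A₂)) - (A₁.adjoint.comp (R.comp A₂)).comp (cfc f N₂))
      rw [norm_sub_rev] at m1
      have t2 := norm_sub_norm_le (N₁.comp (A₁.adjoint.comp (R.comp A₂))
        - (A₁.adjoint.comp (R.comp A₂)).comp N₂) (A₁.adjoint.comp (D.comp A₂))
      linarith
    have e : ⟪y, T x⟫_ℂ = ⟪η, A₁.adjoint.comp (T.comp A₂) ξ⟫_ℂ := by
      simp only [ContinuousLinearMap.comp_apply, ContinuousLinearMap.adjoint_inner_right, hx, hy]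
    rw [e]
    calc _ ≤ ‖η‖ * ‖A₁.adjoint.comp (T.comp A₂) ξ‖ := norm_inner_le_norm _ _
      _ ≤ ‖η‖ * ((‖D‖ + 4 * ε * ‖R‖) * ‖ξ‖) := by
          gcongr
          exact ContinuousLinearMap.le_of_opNorm_le _ n2 _
      _ ≤ ‖y‖ * ((‖D‖ + 4 * ε * ‖R‖) * ‖x‖) := by gcongr
      _ = _ := by ring
  refine ContinuousLinearMap.opNorm_le_bound _ (norm_nonneg _) (fun x => ?_)
  have h1 : ‖T x‖ * ‖T x‖ ≤ ‖D‖ * (‖T x‖ * ‖x‖) := by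
    refine le_of_forall_pos_le_add (fun δ hδ => ?_)
    set c := 4 * ‖R‖ * (‖T x‖ * ‖x‖) with hc
    have hc0 : 0 ≤ c := by positivity
    have := key x (T x) (δ / (c + 1)) (by positivity)
    rw [inner_self_eq_norm_sq_to_K] at this
    have h2 : ‖((‖T x‖ : ℂ)) ^ 2‖ = ‖T x‖ * ‖T x‖ := by simp [sq]
    have h3 : δ / (c + 1) * c ≤ δ := by
      rw [div_mul_eq_mul_div, div_le_iff₀ (by positivity)]; nlinarith
    have h4 : (‖D‖ + 4 * (δ / (c + 1)) * ‖R‖) * (‖T x‖ * ‖x‖)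
        = ‖D‖ * (‖T x‖ * ‖x‖) + δ / (c + 1) * c := by rw [hc]; ring
    rw [h4] at this
    have h5 := h2.symm.le.trans this
    linarith
  by_cases h0 : ‖T x‖ = 0
  · rw [h0]; positivity
  · have : 0 < ‖T x‖ := lt_of_le_of_ne (norm_nonneg _) (Ne.symm h0)
    nlinarith
end

section
/- Approximation of a normal operator by a commuting normal operator with finite spectrum: Let N be a bounded normal operator on a complex Hilbert space H, let ε > 0 and let Λ ⊆ ℂ be an ε-net of the spectrum of N, i.e. for every ζ ∈ σ(N) there exists λ ∈ Λ with |λ − ζ| < ε. Then there exists a bounded normal operator N₀ on H such that N N₀ = N₀ N, ‖N − N₀‖ < ε, and the spectrum of N₀ is a finite subset of Λ. -/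
/-- `X` commutes with everything commuting with `N` and `N*`. -/
def BicAux {A : Type*} [Mul A] [Star A] (N X : A) : Prop :=
  ∀ C, Commute C N → Commute C (star N) → Commute C X

theorem BicAux.commute {A : Type*} [Mul A] [Star A] {N X Y : A}
    (hN : Commute N (star N)) (hX : BicAux N X) (hY : BicAux N Y) : Commute X Y := by
  have h1 := hX N (Commute.refl N) hN
  have h2 := hX (star N) hN.symm (Commute.refl _)
  exact hY X h1.symm h2.symm

theorem proj_aux {H : Type*} [NormedAddCommGroup H] [InnerProductSpace ℂ H] [CompleteSpace H]
    (T : H →L[ℂ] H) : ∃ P : H →L[ℂ] H, IsSelfAdjoint P ∧ P * P = P ∧ T * P = 0 ∧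
      (∀ X, T * X = 0 → P * X = X) ∧
      (∀ C, Commute C T → Commute (star C) T → Commute C P) := by
  have hc : IsClosed ((T.ker : Submodule ℂ H) : Set H) := T.isClosed_ker
  have : CompleteSpace (T.ker : Submodule ℂ H) := hc.completeSpace_coe
  have h1 : IsSelfAdjoint (T.ker : Submodule ℂ H).starProjection :=
    isSelfAdjoint_starProjection _
  have h2 : T * (T.ker : Submodule ℂ H).starProjection = 0 := by
    ext x
    exact (T.ker : Submodule ℂ H).starProjection_apply_mem x
  have h3 : ∀ X, T * X = 0 → (T.ker : Submodule ℂ H).starProjection * X = X := by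
    intro X hX
    ext x
    have : X x ∈ (T.ker : Submodule ℂ H) := by
      have := congrArg (fun Y : H →L[ℂ] H => Y x) hX
      simpa using this
    simpa using Submodule.starProjection_eq_self_iff.2 this
  generalize (T.ker : Submodule ℂ H).starProjection = P at *
  refine ⟨P, h1, h3 P h2, h2, h3, ?_⟩
  intro C hC hC'
  have e1 : P * (C * P) = C * P := h3 _ (by rw [← mul_assoc, ← hC.eq, mul_assoc, h2, mul_zero])
  have e2 : P * (star C * P) = star C * P :=
    h3 _ (by rw [← mul_assoc, ← hC'.eq, mul_assoc, h2, mul_zero])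
  have e3 := congrArg star e2
  simp only [star_mul, star_star, h1.star_eq] at e3
  change C * P = P * C
  rw [← e1, ← e3, mul_assoc]

/-- the cut-off function -/
noncomputable def gAux (δ : ℝ) (l ζ : ℂ) : ℂ := ((max ‖ζ - l‖ δ - δ : ℝ) : ℂ)

theorem gAux_cont (δ : ℝ) (l : ℂ) : Continuous (gAux δ l) := by
  unfold gAux; fun_prop

theorem step_aux {H : Type*} [NormedAddCommGroup H] [InnerProductSpace ℂ H] [CompleteSpace H]
    (N : H →L[ℂ] H) (hN : IsStarNormal N) (δ : ℝ) (hδ : 0 < δ) (l : ℂ) :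
    ∃ P : H →L[ℂ] H, IsSelfAdjoint P ∧ P * P = P ∧
      (∀ X, cfc (gAux δ l) N * X = 0 → P * X = X) ∧ BicAux N P ∧
      ∀ x, ‖N (P x) - l • P x‖ ≤ δ * ‖P x‖ := by
  obtain ⟨P, h1, h2, h3, h4, h5⟩ := proj_aux (cfc (gAux δ l) N)
  refine ⟨P, h1, h2, h4, ?_, ?_⟩
  · intro C hC hC'
    apply h5
    · exact (Commute.cfc hC.symm hC'.symm _).symm
    · have a := hC.star_star
      have b := hC'.star_star
      rw [star_star] at b
      exact (Commute.cfc b.symm a.symm _).symm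
  · intro x
    have hpos : ∀ ζ : ℂ, 0 < max ‖ζ - l‖ δ := fun ζ => lt_max_of_lt_right hδ
    have hne : ∀ ζ : ℂ, ((max ‖ζ - l‖ δ : ℝ) : ℂ) ≠ 0 := fun ζ => by
      exact_mod_cast (hpos ζ).ne'
    let w : ℂ → ℂ := fun ζ => (ζ - l) / ((max ‖ζ - l‖ δ : ℝ) : ℂ)
    have hw : Continuous w := by
      apply Continuous.div (by fun_prop) (by fun_prop) hne
    have hg := gAux_cont δ l
    have e1 : cfc (fun ζ : ℂ => ζ - l) N = N - algebraMap ℂ _ l := by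
      rw [cfc_sub (fun ζ : ℂ => ζ) (fun _ => l) N, cfc_id' ℂ N, cfc_const l N]
    have e2 : cfc (fun ζ : ℂ => ζ - l) N
        = cfc w N * cfc (gAux δ l) N + cfc (fun ζ => w ζ * (δ : ℂ)) N := by
      rw [← cfc_mul w (gAux δ l) N hw.continuousOn hg.continuousOn,
        ← cfc_add (a := N) (fun ζ => w ζ * gAux δ l ζ) (fun ζ => w ζ * (δ : ℂ))
          (by fun_prop) (by fun_prop)]
      congr 1
      funext ζ
      simp only [w, gAux]
      rw [← mul_add]
      push_cast
      rw [sub_add_cancel]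
      have := hne ζ
      field_simp
    have e3 : (N - algebraMap ℂ _ l) * P = cfc (fun ζ => w ζ * (δ : ℂ)) N * P := by
      rw [← e1, e2, add_mul, mul_assoc, h3, mul_zero, zero_add]
    have e4 : N (P x) - l • P x = cfc (fun ζ => w ζ * (δ : ℂ)) N (P x) := by
      have := congrArg (fun Y : H →L[ℂ] H => Y x) e3
      simpa [Algebra.algebraMap_eq_smul_one] using this
    rw [e4]
    apply ContinuousLinearMap.le_of_opNorm_le
    apply norm_cfc_le hδ.le
    intro ζ _
    simp only [w, norm_mul, norm_div, Complex.norm_real, Real.norm_eq_abs]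
    rw [abs_of_pos hδ, abs_of_pos (hpos ζ)]
    have : ‖ζ - l‖ / max ‖ζ - l‖ δ ≤ 1 := (div_le_one (hpos ζ)).2 (le_max_left _ _)
    nlinarith

theorem ind_aux {H : Type*} [NormedAddCommGroup H] [InnerProductSpace ℂ H] [CompleteSpace H]
    (N : H →L[ℂ] H) (hN : IsStarNormal N) (δ : ℝ) (hδ : 0 < δ) (s : Finset ℂ) :
    ∃ A E : H →L[ℂ] H, BicAux N A ∧ BicAux N E ∧ IsSelfAdjoint E ∧ E * E = E ∧ A * E = A ∧
      (∀ x, ‖N (E x) - A (E x)‖ ≤ δ * ‖E x‖) ∧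
      (∀ μ, μ ∉ s → ∃ B, BicAux N B ∧ B * E = B ∧ (A - algebraMap ℂ _ μ) * B = E) ∧
      (∀ S, Commute S N → Commute S (star N) →
        S * cfc (fun ζ => ∏ l ∈ s, gAux δ l ζ) N = 0 → S * (1 - E) = 0) := by
  have hNc : Commute N (star N) := hN.star_comm_self.symm
  induction s using Finset.induction_on with
  | empty =>
    refine ⟨0, 0, ?_, ?_, ?_, ?_, ?_, ?_, ?_, ?_⟩
    · intro C _ _; exact Commute.zero_right _
    · intro C _ _; exact Commute.zero_right _
    · exact IsSelfAdjoint.zero _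
    · simp
    · simp
    · simp
    · intro μ _
      exact ⟨0, fun C _ _ => Commute.zero_right _, by simp, by simp⟩
    · intro S _ _ h
      simpa [cfc_const_one ℂ N] using h
  | insert l s hl ih =>
    obtain ⟨A, E, hA, hE, hEs, hEE, hAE, hn, hB, hS⟩ := ih
    obtain ⟨P, hPs, hPP, hPX, hP, hPn⟩ := step_aux N hN δ hδ l
    have cAE := hA.commute hNc hE
    have cAP := hA.commute hNc hP
    have cEP := hE.commute hNc hP
    have cNE : Commute N E := hE N (Commute.refl _) hNc
    have cNP : Commute N P := hP N (Commute.refl _) hNc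
    -- the new piece
    obtain ⟨Q, hQdef⟩ : ∃ Q, Q = P * (1 - E) := ⟨_, rfl⟩
    have hQ : BicAux N Q := by
      intro C h h'
      rw [hQdef]
      exact (hP C h h').mul_right ((Commute.one_right _).sub_right (hE C h h'))
    have cAQ := hA.commute hNc hQ
    have cEQ := hE.commute hNc hQ
    have cNQ : Commute N Q := hQ N (Commute.refl _) hNc
    have hQE : Q * E = 0 := by rw [hQdef, mul_assoc, sub_mul, hEE, one_mul, sub_self, mul_zero]
    have hEQ : E * Q = 0 := by rw [cEQ.eq, hQE]
    have hPQ : P * Q = Q := by rw [hQdef, ← mul_assoc, hPP]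
    have hQQ : Q * Q = Q := by
      nth_rewrite 1 [hQdef]
      rw [mul_assoc, sub_mul, hEQ, one_mul, sub_zero, hPQ]
    have hAQ : A * Q = 0 := by rw [← hAE, mul_assoc, hEQ, mul_zero]
    have hQs : IsSelfAdjoint Q := by
      rw [hQdef]
      refine (IsSelfAdjoint.commute_iff hPs ((IsSelfAdjoint.one _).sub hEs)).1 ?_
      exact (Commute.one_right _).sub_right cEP.symm
    refine ⟨A + l • Q, E + Q, ?_, ?_, hEs.add hQs, ?_, ?_, ?_, ?_, ?_⟩
    · intro C h h'
      exact (hA C h h').add_right ((hQ C h h').smul_right l)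
    · intro C h h'
      exact (hE C h h').add_right (hQ C h h')
    · simp [add_mul, mul_add, hEE, hQE, hEQ, hQQ]
    · simp [add_mul, mul_add, hAE, hAQ, hQE, hQQ]
    · intro x
      have ap : ∀ {X Y : H →L[ℂ] H}, X = Y → ∀ x, X x = Y x := fun h x => by rw [h]
      have a1 : A (Q x) = 0 := by simpa using ap hAQ x
      have a2 : Q (E x) = 0 := by simpa using ap hQE x
      have a3 : Q (Q x) = Q x := by simpa using ap hQQ x
      have a4 : P (Q x) = Q x := by simpa using ap hPQ x
      have hu := hn x
      have hv := hPn (Q x)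
      rw [a4] at hv
      have hsum : N ((E + Q) x) - (A + l • Q) ((E + Q) x)
          = (N (E x) - A (E x)) + (N (Q x) - l • Q x) := by
        simp [a1, a2, a3]
        abel
      have hEu : E (N (E x) - A (E x)) = N (E x) - A (E x) := by
        have : E * ((N - A) * E) = (N - A) * E := by
          rw [← mul_assoc, (cNE.symm.sub_right cAE.symm).eq, mul_assoc, hEE]
        simpa using ap this x
      have hEv : E (N (Q x) - l • Q x) = 0 := by
        have : E * ((N - l • 1) * Q) = 0 := by
          rw [← mul_assoc, (cNE.symm.sub_right ((Commute.one_right E).smul_right l)).eq,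
            mul_assoc, hEQ, mul_zero]
        simpa using ap this x
      have hsym : ∀ u v, inner ℂ (E u) v = inner ℂ u (E v) := hEs.isSymmetric
      have i1 : inner ℂ (N (E x) - A (E x)) (N (Q x) - l • Q x) = 0 := by
        rw [← hEu, hsym, hEv, inner_zero_right]
      have i2 : inner ℂ (E x) (Q x) = 0 := by
        have : E (Q x) = 0 := by simpa using ap hEQ x
        rw [hsym, this, inner_zero_right]
      have p1 := norm_add_sq_eq_norm_sq_add_norm_sq_of_inner_eq_zero _ _ i1
      have p2 := norm_add_sq_eq_norm_sq_add_norm_sq_of_inner_eq_zero _ _ i2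
      rw [hsum]
      change _ ≤ δ * ‖E x + Q x‖
      refine abs_le_of_sq_le_sq' ?_ (by positivity) |>.2
      have q1 := mul_self_le_mul_self (norm_nonneg _) hu
      have q2 := mul_self_le_mul_self (norm_nonneg _) hv
      rw [mul_pow, sq, p1, sq ‖E x + Q x‖, p2]
      linarith
    · intro μ hμ
      rw [Finset.mem_insert, not_or] at hμ
      obtain ⟨B, hBB, hBE, hAB⟩ := hB μ hμ.2
      have hne : l - μ ≠ 0 := sub_ne_zero.2 (Ne.symm hμ.1)
      have hQB : Q * B = 0 := by
        rw [← hBE, (hBB.commute hNc hE).eq, ← mul_assoc, hQE, zero_mul]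
      refine ⟨B + (l - μ)⁻¹ • Q, ?_, ?_, ?_⟩
      · intro C h h'
        exact (hBB C h h').add_right ((hQ C h h').smul_right _)
      · have hBQ : B * Q = 0 := by rw [(hBB.commute hNc hQ).eq, hQB]
        simp [add_mul, mul_add, hBE, hBQ, hQE, hQQ]
      · have e : (A + l • Q - algebraMap ℂ _ μ) * (B + (l - μ)⁻¹ • Q)
            = (A - algebraMap ℂ _ μ) * B + l • (Q * B) + (l - μ)⁻¹ • (A * Q)
              + (l - μ)⁻¹ • (l • (Q * Q) - μ • Q) := by
          simp only [Algebra.algebraMap_eq_smul_one, add_mul, mul_add, sub_mul, smul_mul_assoc,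
            mul_smul_comm, one_mul, smul_sub, smul_add]
          abel
        rw [e, hAB, hQB, hAQ, hQQ, ← sub_smul, smul_smul, inv_mul_cancel₀ hne]
        simp
    · intro S h h' hz
      have hg := gAux_cont δ l
      have hgs : Continuous (fun ζ => ∏ l ∈ s, gAux δ l ζ) :=
        continuous_finsetProd _ fun i _ => gAux_cont δ i
      have e : (fun ζ => ∏ l ∈ insert l s, gAux δ l ζ)
          = fun ζ => gAux δ l ζ * ∏ l ∈ s, gAux δ l ζ := by
        funext ζ; rw [Finset.prod_insert hl]
      have hT : BicAux N (cfc (gAux δ l) N) :=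
        fun C h h' => (Commute.cfc h.symm h'.symm _).symm
      rw [e, cfc_mul _ _ N hg.continuousOn hgs.continuousOn, ← mul_assoc] at hz
      have cT : Commute (cfc (gAux δ l) N) N := (hT N (Commute.refl _) hNc).symm
      have cT' : Commute (cfc (gAux δ l) N) (star N) :=
        (hT (star N) hNc.symm (Commute.refl _)).symm
      have k := hS _ (h.mul_left cT) (h'.mul_left cT') hz
      rw [(hT S h h').eq, mul_assoc] at k
      have k2 := hPX _ k
      rw [← mul_assoc, ← (hP S h h').eq, mul_assoc, ← hQdef] at k2
      rw [← sub_sub, mul_sub, k2, sub_self]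

/-- Approximation of a normal operator by a commuting normal operator with
finite spectrum: if `N` is a bounded normal operator on a complex Hilbert space
and `Λ ⊆ ℂ` is an `ε`-net of `σ(N)`, then there is a bounded normal operator
`N₀` commuting with `N` such that `‖N - N₀‖ < ε` and `σ(N₀)` is a finite subset
of `Λ`. -/
theorem stmt_13 {H : Type*} [NormedAddCommGroup H] [InnerProductSpace ℂ H] [CompleteSpace H]
    (N : H →L[ℂ] H) (hN : IsStarNormal N) (ε : ℝ) (hε : 0 < ε) (Λ : Set ℂ)
    (hnet : ∀ ζ ∈ spectrum ℂ N, ∃ l ∈ Λ, ‖l - ζ‖ < ε) :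
    ∃ N₀ : H →L[ℂ] H, IsStarNormal N₀ ∧ N * N₀ = N₀ * N ∧ ‖N - N₀‖ < ε ∧
      (spectrum ℂ N₀).Finite ∧ spectrum ℂ N₀ ⊆ Λ := by
  have hNc : Commute N (star N) := hN.star_comm_self.symm
  -- a finite subnet with a smaller radius
  obtain ⟨δ, hδ, hδε, s, hsΛ, hs⟩ : ∃ δ : ℝ, 0 < δ ∧ δ < ε ∧ ∃ s : Finset ℂ, (s : Set ℂ) ⊆ Λ ∧
      ∀ ζ ∈ spectrum ℂ N, ∃ l ∈ s, ‖ζ - l‖ ≤ δ := by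
    have key : ∃ δ : ℝ, 0 < δ ∧ δ < ε ∧ ∃ s : Finset ℂ, (s : Set ℂ) ⊆ Λ ∧
      ∀ ζ ∈ spectrum ℂ N, ∃ l ∈ s, ‖ζ - l‖ ≤ δ := by
      refine (spectrum.isCompact (𝕜 := ℂ) N).induction_on (p := fun K =>
        ∃ δ : ℝ, 0 < δ ∧ δ < ε ∧ ∃ s : Finset ℂ, (s : Set ℂ) ⊆ Λ ∧
          ∀ ζ ∈ K, ∃ l ∈ s, ‖ζ - l‖ ≤ δ) ?_ ?_ ?_ ?_
      · exact ⟨ε / 2, by linarith, by linarith, ∅, by simp, by simp⟩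
      · rintro K L hKL ⟨δ, h1, h2, s, h3, h4⟩
        exact ⟨δ, h1, h2, s, h3, fun ζ hζ => h4 ζ (hKL hζ)⟩
      · classical
        rintro K L ⟨δ, h1, h2, s, h3, h4⟩ ⟨δ', h1', h2', s', h3', h4'⟩
        refine ⟨max δ δ', lt_max_of_lt_left h1, max_lt h2 h2', s ∪ s', by simp [h3, h3'], ?_⟩
        rintro ζ (hζ | hζ)
        · obtain ⟨l, hl, h⟩ := h4 ζ hζ
          exact ⟨l, Finset.mem_union_left _ hl, h.trans (le_max_left _ _)⟩
        · obtain ⟨l, hl, h⟩ := h4' ζ hζ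
          exact ⟨l, Finset.mem_union_right _ hl, h.trans (le_max_right _ _)⟩
      · intro ζ hζ
        obtain ⟨l, hl, h⟩ := hnet ζ hζ
        obtain ⟨δ, hd1, hd2⟩ := exists_between h
        refine ⟨Metric.ball l δ, mem_nhdsWithin_of_mem_nhds
          (Metric.isOpen_ball.mem_nhds ?_), δ, (norm_nonneg _).trans_lt hd1, hd2, {l},
          by simpa using hl, ?_⟩
        · rw [Metric.mem_ball, dist_comm, dist_eq_norm]; exact hd1
        · intro z hz
          rw [Metric.mem_ball, dist_eq_norm] at hz
          exact ⟨l, by simp, hz.le⟩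
    exact key
  obtain ⟨A, E, hA, hE, hEs, hEE, hAE, hn, hB, hS⟩ := ind_aux N hN δ hδ s
  have hE1 : E = 1 := by
    have h0 : cfc (fun ζ => ∏ l ∈ s, gAux δ l ζ) N = 0 := by
      rw [← cfc_zero ℂ N]
      apply cfc_congr
      intro ζ hζ
      obtain ⟨l, hl, h⟩ := hs ζ hζ
      apply Finset.prod_eq_zero hl
      simp [gAux, max_eq_right h]
    have := hS 1 (Commute.one_left _) (Commute.one_left _) (by rw [h0, mul_zero])
    rw [one_mul] at this
    exact (sub_eq_zero.1 this).symm
  subst hE1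
  have cNA : Commute N A := hA N (Commute.refl _) hNc
  have cNA' : Commute (star N) A := hA (star N) hNc.symm (Commute.refl _)
  have hsp : spectrum ℂ A ⊆ s := by
    intro μ hμ
    by_contra hμs
    obtain ⟨B, hBB, -, hAB⟩ := hB μ (by simpa using hμs)
    apply hμ
    have cAB : Commute (A - algebraMap ℂ _ μ) B :=
      (hA.commute hNc hBB).sub_left (Algebra.commute_algebraMap_left μ B)
    rw [spectrum.mem_resolventSet_iff, ← IsUnit.neg_iff, neg_sub]
    exact ⟨⟨_, B, hAB, by rw [← cAB.eq, hAB]⟩, rfl⟩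
  refine ⟨A, ⟨?_⟩, cNA.eq, ?_, s.finite_toSet.subset hsp, hsp.trans hsΛ⟩
  · apply hA
    · have := cNA'.star_star
      rw [star_star] at this
      exact this.symm
    · exact cNA.star_star.symm
  · refine lt_of_le_of_lt (ContinuousLinearMap.opNorm_le_bound _ hδ.le ?_) hδε
    intro x
    simpa using hn x
end
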